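/- For every integer k ≥ 2, the convergence exponent of Tarry's problem in dimension two satisfies p_{2,k} = k(k+1)(k+2)/6 + 2; precisely, inf{ p ∈ (0,∞) : ∫_{ℝ^N} |E_k1(x)|^p dx < ∞ } = k(k+1)(k+2)/6 + 2. -/

import Mathlib

open MeasureTheory Real Set
open scoped ENNReal

noncomputable section

/-- Index set for multi-indices `β = (β₁, β₂) ∈ ℕ²` with `1 ≤ β₁ + β₂ ≤ k`;
its cardinality is `N = (k+1)(k+2)/2 − 1`. -/
def Idx (k : ℕ) : Type :=
  {β : Fin (k + 1) × Fin (k + 1) // 1 ≤ (β.1 : ℕ) + (β.2 : ℕ) ∧ (β.1 : ℕ) + (β.2 : ℕ) ≤ k}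

instance (k : ℕ) : Fintype (Idx k) := by unfold Idx; infer_instance

/-- The phase polynomial `P(ξ; x) = ∑_{1 ≤ |β| ≤ k} x_β ξ₁^{β₁} ξ₂^{β₂}`. -/
def Pphase (k : ℕ) (x : Idx k → ℝ) (ξ : Fin 2 → ℝ) : ℝ :=
  ∑ β : Idx k, x β * ξ 0 ^ (β.1.1 : ℕ) * ξ 1 ^ (β.1.2 : ℕ)

/-- `E_k1(x) = ∫_{[0,1]²} e(P(ξ; x)) dξ` with `e(t) = exp(2πit)`. -/
def Eone (k : ℕ) (x : Idx k → ℝ) : ℂ :=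
  ∫ ξ in Icc (0 : Fin 2 → ℝ) 1, Complex.exp (2 * Real.pi * Complex.I * (Pphase k x ξ))

open scoped FourierTransform Topology

/-!
For the upper bound, slice in `ξ₂` and cut the inner integral into dyadic levels. An oscillatory
integral in one variable is controlled by the mean of the weight `1 / (1 + t²)` along the derivative
of its phase. Integrating over the coefficients of the powers of `ξ₁` gains from the measure of the
set of slices at each level: this is a restriction estimate for the moment curve, which follows from
Plancherel's theorem because the Jacobian of the power sums is a Vandermonde determinant. What is
left is a moment of such a mean for a phase of lower degree, and it is bounded by induction on the
degree, with the Vandermonde determinant again in the place of the Jacobian.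

For the lower bound, around each of about `D²` lines `ξ₂ = θ ξ₁ + b` there is a box of coefficients
for which the phase, sheared along the line, is small within distance `1 / D` of it. These boxes are
disjoint. Averaging over translations of one linear coefficient produces a Fejér kernel that
localises the integral to the strip, so that on average over the box it is at least of order
`1 / D`; summing over the lines makes the moments of low order diverge as `D → ∞`.
-/

/-- The weight `1 / (1 + t²)`, a smooth substitute for the indicator function of `[-1, 1]`. -/
def cauchyWeight (t : ℝ) : ℝ := (1 + t ^ 2)⁻¹

lemma cauchyWeight_pos (t : ℝ) : 0 < cauchyWeight t := by unfold cauchyWeight; positivity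

lemma cauchyWeight_le_one (t : ℝ) : cauchyWeight t ≤ 1 :=
  inv_le_one_of_one_le₀ (le_add_of_nonneg_right (sq_nonneg t))

@[fun_prop]
lemma continuous_cauchyWeight : Continuous cauchyWeight :=
  Continuous.inv₀ (by fun_prop) fun t => by positivity

@[fun_prop]
lemma measurable_ofReal_cauchyWeight {α : Type*} [MeasurableSpace α] {g : α → ℝ}
    (hg : Measurable g) : Measurable fun a => ENNReal.ofReal (cauchyWeight (g a)) :=
  (continuous_cauchyWeight.measurable.comp hg).ennreal_ofReal

lemma lintegral_cauchyWeight : ∫⁻ t, ENNReal.ofReal (cauchyWeight t) = ENNReal.ofReal π := by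
  rw [← integral_univ_inv_one_add_sq, ofReal_integral_eq_lintegral_ofReal
    integrable_inv_one_add_sq (ae_of_all _ fun t => (cauchyWeight_pos t).le)]
  rfl

lemma injOn_Ioo_of_hasDerivAt_ne_zero {f f' : ℝ → ℝ} {a b : ℝ}
    (hf : ∀ x ∈ Ioo a b, HasDerivAt f (f' x) x) (hf' : ∀ x ∈ Ioo a b, f' x ≠ 0) :
    InjOn f (Ioo a b) := by
  have ne_of_lt : ∀ x ∈ Ioo a b, ∀ y ∈ Ioo a b, x < y → f x ≠ f y := by
    intro x hx y hy hxy hfxy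
    have hIcc : ∀ t ∈ Icc x y, HasDerivAt f (f' t) t := fun t ht =>
      hf t ⟨hx.1.trans_le ht.1, ht.2.trans_lt hy.2⟩
    obtain ⟨t, ht, ht0⟩ := exists_hasDerivAt_eq_zero hxy
      (fun t ht => (hIcc t ht).continuousAt.continuousWithinAt) hfxy
      fun t ht => hIcc t (Ioo_subset_Icc_self ht)
    exact hf' t ⟨hx.1.trans ht.1, ht.2.trans hy.2⟩ ht0
  intro x hx y hy hxy
  by_contra hne
  rcases lt_or_gt_of_ne hne with h | h
  · exact ne_of_lt x hx y hy h hxy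
  · exact ne_of_lt y hy x hx h hxy.symm

lemma setLIntegral_Ioo_le_add {a b c : ℝ} (F : ℝ → ℝ≥0∞) :
    ∫⁻ x in Ioo a b, F x ≤ (∫⁻ x in Ioo a c, F x) + ∫⁻ x in Ioo c b, F x := by
  have hae : (Ioo a c ∪ Ioo c b : Set ℝ) =ᵐ[volume] (Ioo a c ∪ Ico c b : Set ℝ) :=
    ae_eq_set_union (ae_eq_refl _) Ioo_ae_eq_Ico
  have hsub : Ioo a b ⊆ Ioo a c ∪ Ico c b := fun x hx =>
    (lt_or_ge x c).imp (fun h => ⟨hx.1, h⟩) fun h => ⟨h, hx.2⟩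
  calc ∫⁻ x in Ioo a b, F x ≤ ∫⁻ x in Ioo a c ∪ Ico c b, F x := lintegral_mono_set hsub
    _ = ∫⁻ x in Ioo a c ∪ Ioo c b, F x := (setLIntegral_congr hae).symm
    _ ≤ _ := lintegral_union_le _ _ _

lemma card_filter_lt_add_card_filter_gt_lt {α : Type*} [LinearOrder α] {S : Finset α} {c : α}
    (hc : c ∈ S) : (S.filter (· < c)).card + (S.filter (c < ·)).card < S.card := by
  have hdisj : Disjoint (S.filter (· < c)) (S.filter (c < ·)) :=
    Finset.disjoint_filter.2 fun _ _ h => h.not_gt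
  rw [← Finset.card_union_of_disjoint hdisj]
  refine Finset.card_lt_card ((Finset.ssubset_iff_of_subset ?_).2 ⟨c, hc, by simp⟩)
  exact Finset.union_subset (Finset.filter_subset _ _) (Finset.filter_subset _ _)

/-- A function with `#S` critical points takes every value at most `#S + 1` times. -/
lemma setLIntegral_abs_deriv_mul_comp_le {f f' : ℝ → ℝ} (hf : ∀ x, HasDerivAt f (f' x) x)
    (g : ℝ → ℝ≥0∞) (S : Finset ℝ) {a b : ℝ} (hS : ∀ x ∈ Ioo a b, f' x = 0 → x ∈ S) :
    ∫⁻ x in Ioo a b, ENNReal.ofReal |f' x| * g (f x) ≤ (S.card + 1) * ∫⁻ t, g t := by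
  induction S using Finset.strongInduction generalizing a b with
  | H S ih =>
    by_cases! hzero : ∀ x ∈ Ioo a b, f' x ≠ 0
    · rw [← lintegral_image_eq_lintegral_abs_deriv_mul measurableSet_Ioo
        (fun x _ => (hf x).hasDerivWithinAt)
        (injOn_Ioo_of_hasDerivAt_ne_zero (fun x _ => hf x) hzero)]
      exact (setLIntegral_le_lintegral _ _).trans (le_mul_of_one_le_left' le_add_self)
    · obtain ⟨c, hc, hc0⟩ := hzero
      have hcS : c ∈ S := hS c hc hc0
      have hleft : S.filter (· < c) ⊂ S := Finset.filter_ssubset.2 ⟨c, hcS, lt_irrefl c⟩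
      have hright : S.filter (c < ·) ⊂ S := Finset.filter_ssubset.2 ⟨c, hcS, lt_irrefl c⟩
      calc ∫⁻ x in Ioo a b, ENNReal.ofReal |f' x| * g (f x)
          ≤ _ := setLIntegral_Ioo_le_add (c := c) _
        _ ≤ ((S.filter (· < c)).card + 1) * (∫⁻ t, g t) +
            ((S.filter (c < ·)).card + 1) * ∫⁻ t, g t := by
          refine add_le_add (ih _ hleft fun x hx h0 => ?_) (ih _ hright fun x hx h0 => ?_)
          · exact Finset.mem_filter.2 ⟨hS x ⟨hx.1, hx.2.trans hc.2⟩ h0, hx.2⟩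
          · exact Finset.mem_filter.2 ⟨hS x ⟨hc.1.trans hx.1, hx.2⟩ h0, hx.1⟩
        _ ≤ (S.card + 1) * ∫⁻ t, g t := by
          rw [← add_mul]
          refine mul_le_mul' ?_ le_rfl
          have := card_filter_lt_add_card_filter_gt_lt hcS
          exact_mod_cast (by omega : (S.filter (· < c)).card + 1 + ((S.filter (c < ·)).card + 1) ≤
            S.card + 1)

lemma setLIntegral_abs_derivative_mul_cauchyWeight_le (q : Polynomial ℝ) (a b : ℝ) :
    ∫⁻ y in Icc a b, ENNReal.ofReal |q.derivative.eval y| *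
      ENNReal.ofReal (cauchyWeight (q.eval y)) ≤ (q.natDegree + 1) * ENNReal.ofReal π := by
  by_cases hq : q.derivative = 0
  · simp [hq]
  have hcard : q.derivative.roots.toFinset.card ≤ q.natDegree :=
    (Multiset.toFinset_card_le _).trans ((Polynomial.card_roots' _).trans
      ((Polynomial.natDegree_derivative_le _).trans (Nat.sub_le _ _)))
  rw [setLIntegral_congr Ioo_ae_eq_Icc.symm, ← lintegral_cauchyWeight]
  refine (setLIntegral_abs_deriv_mul_comp_le (f := (q.eval ·)) q.hasDerivAt
    (fun t => ENNReal.ofReal (cauchyWeight t)) q.derivative.roots.toFinset fun x _ hx => ?_).trans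
    (by gcongr)
  simpa [hq] using hx

lemma hasDerivAt_mul_cauchyWeight (t : ℝ) :
    HasDerivAt (fun t => t * cauchyWeight t) ((1 - t ^ 2) * cauchyWeight t ^ 2) t := by
  have hne : 1 + t ^ 2 ≠ 0 := by positivity
  have hden : HasDerivAt (fun t : ℝ => 1 + t ^ 2) (2 * t) t := by
    simpa using (hasDerivAt_pow 2 t).const_add 1
  refine ((hasDerivAt_id t).mul (hden.inv hne)).congr_deriv ?_
  simp only [cauchyWeight, Pi.inv_apply, id_eq]
  field_simp
  ring

lemma abs_one_sub_sq_mul_cauchyWeight_sq_le (t : ℝ) :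
    |(1 - t ^ 2) * cauchyWeight t ^ 2| ≤ cauchyWeight t := by
  have habs : |1 - t ^ 2| ≤ 1 + t ^ 2 := by
    rw [abs_le]; constructor <;> nlinarith [sq_nonneg t]
  calc |(1 - t ^ 2) * cauchyWeight t ^ 2| = |1 - t ^ 2| * cauchyWeight t ^ 2 := by
        rw [abs_mul, abs_of_nonneg (sq_nonneg (cauchyWeight t))]
    _ ≤ (1 + t ^ 2) * cauchyWeight t ^ 2 := by gcongr
    _ = cauchyWeight t := by
        have : (1 + t ^ 2 : ℝ) ≠ 0 := by positivity
        unfold cauchyWeight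
        field_simp

lemma abs_mul_cauchyWeight_le (t : ℝ) : |t * cauchyWeight t| ≤ 1 / 2 := by
  rw [abs_mul, abs_of_pos (cauchyWeight_pos t), cauchyWeight, ← div_eq_mul_inv,
    div_le_iff₀ (by positivity), ← sq_abs]
  nlinarith [sq_nonneg (|t| - 1)]

lemma sq_mul_cauchyWeight (t : ℝ) : t * (t * cauchyWeight t) = 1 - cauchyWeight t := by
  have : (1 + t ^ 2 : ℝ) ≠ 0 := by positivity
  unfold cauchyWeight
  field_simp
  ring

section VanDerCorput

variable {φ φ' φ'' : ℝ → ℝ}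

lemma norm_integral_fourierChar_mul_deriv_mul_le {w w' : ℝ → ℝ} {a b : ℝ} (hab : a ≤ b)
    (hφ : ∀ y, HasDerivAt φ (φ' y) y) (hφ' : Continuous φ')
    (hw : ∀ y, HasDerivAt w (w' y) y) (hw' : Continuous w') :
    ‖∫ y in a..b, (𝐞 (φ y) : ℂ) * (φ' y * w y : ℝ)‖ ≤ |w b| + |w a| + ∫ y in a..b, |w' y| := by
  have cφ : Continuous φ := continuous_iff_continuousAt.2 fun y => (hφ y).continuousAt
  have cw : Continuous w := continuous_iff_continuousAt.2 fun y => (hw y).continuousAt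
  have norm_fourierChar_mul : ∀ t s : ℝ, ‖(𝐞 t : ℂ) * (s : ℂ)‖ = |s| := fun t s => by
    rw [norm_mul, Circle.norm_coe, one_mul, Complex.norm_real, Real.norm_eq_abs]
  have hderiv : ∀ y, HasDerivAt (fun y => (𝐞 (φ y) : ℂ) * (w y : ℂ))
      (2 * π * Complex.I * (𝐞 (φ y) * (φ' y * w y : ℝ)) + 𝐞 (φ y) * (w' y : ℂ)) y := fun y => by
    have hchar : HasDerivAt (fun y => (𝐞 (φ y) : ℂ)) (φ' y • (2 * π * Complex.I * 𝐞 (φ y))) y :=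
      HasDerivAt.scomp (g₁ := fun t => (𝐞 t : ℂ)) y (Real.hasDerivAt_fourierChar (φ y)) (hφ y)
    refine (hchar.mul (hw y).ofReal_comp).congr_deriv ?_
    push_cast [Complex.real_smul]
    ring
  have hparts : 2 * π * Complex.I * ∫ y in a..b, (𝐞 (φ y) : ℂ) * (φ' y * w y : ℝ) =
      𝐞 (φ b) * (w b : ℂ) - 𝐞 (φ a) * (w a : ℂ) - ∫ y in a..b, (𝐞 (φ y) : ℂ) * (w' y : ℂ) := by
    rw [← intervalIntegral.integral_const_mul, eq_sub_iff_add_eq, ← intervalIntegral.integral_add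
      (Continuous.intervalIntegrable (by fun_prop) _ _)
      (Continuous.intervalIntegrable (by fun_prop) _ _)]
    exact intervalIntegral.integral_eq_sub_of_hasDerivAt (fun y _ => hderiv y)
      (Continuous.intervalIntegrable (by fun_prop) _ _)
  have hconst : 1 ≤ ‖(2 * π * Complex.I : ℂ)‖ := by
    simp only [norm_mul, Complex.norm_ofNat, Complex.norm_real, Complex.norm_I,
      Real.norm_of_nonneg Real.pi_pos.le, mul_one]
    linarith [Real.pi_gt_three]
  calc ‖∫ y in a..b, (𝐞 (φ y) : ℂ) * (φ' y * w y : ℝ)‖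
      ≤ ‖2 * π * Complex.I * ∫ y in a..b, (𝐞 (φ y) : ℂ) * (φ' y * w y : ℝ)‖ := by
        rw [norm_mul]
        exact le_mul_of_one_le_left (norm_nonneg _) hconst
    _ ≤ |w b| + |w a| + ∫ y in a..b, ‖(𝐞 (φ y) : ℂ) * (w' y : ℂ)‖ := by
        rw [hparts, ← norm_fourierChar_mul (φ b), ← norm_fourierChar_mul (φ a)]
        exact (norm_sub_le _ _).trans (add_le_add (norm_sub_le _ _)
          (intervalIntegral.norm_integral_le_integral_norm hab))
    _ = _ := by simp only [norm_fourierChar_mul]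

/-- The classical proof integrates by parts against `1 / φ'`; here the bounded multiplier
`w = h u (1 + u²)⁻¹` with `u = h φ'` is used, for which `φ' w = 1 - (1 + u²)⁻¹`. -/
lemma norm_integral_fourierChar_mul_one_sub_cauchyWeight_le (hφ : ∀ y, HasDerivAt φ (φ' y) y)
    (hφ' : ∀ y, HasDerivAt φ' (φ'' y) y) (hφ'' : Continuous φ'') {a b h : ℝ} (hab : a ≤ b)
    (hh : 0 < h) :
    ‖∫ y in a..b, (𝐞 (φ y) : ℂ) * (1 - cauchyWeight (h * φ' y) : ℝ)‖ ≤
      h * (1 + ∫ y in a..b, |h * φ'' y| * cauchyWeight (h * φ' y)) := by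
  have cφ' : Continuous φ' := continuous_iff_continuousAt.2 fun y => (hφ' y).continuousAt
  set w : ℝ → ℝ := fun y => h * (h * φ' y * cauchyWeight (h * φ' y)) with hw_def
  set w' : ℝ → ℝ := fun y =>
    h * ((1 - (h * φ' y) ^ 2) * cauchyWeight (h * φ' y) ^ 2 * (h * φ'' y))
  have cw' : Continuous w' := by fun_prop
  have hw : ∀ y, HasDerivAt w (w' y) y := fun y =>
    ((hasDerivAt_mul_cauchyWeight _).comp_of_eq (h := fun y => h * φ' y) y
      ((hφ' y).const_mul h) rfl).const_mul h
  have hw_le : ∀ y, |w y| ≤ h / 2 := fun y => by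
    rw [abs_mul, abs_of_pos hh, div_eq_mul_one_div]
    gcongr
    exact abs_mul_cauchyWeight_le _
  have hw'_le : ∀ y, |w' y| ≤ h * (|h * φ'' y| * cauchyWeight (h * φ' y)) := fun y => by
    rw [abs_mul, abs_of_pos hh, abs_mul, mul_comm |h * φ'' y|]
    gcongr
    exact abs_one_sub_sq_mul_cauchyWeight_sq_le _
  have hφw : ∀ y, 1 - cauchyWeight (h * φ' y) = φ' y * w y := fun y => by
    rw [← sq_mul_cauchyWeight, hw_def]
    ring
  calc ‖∫ y in a..b, (𝐞 (φ y) : ℂ) * (1 - cauchyWeight (h * φ' y) : ℝ)‖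
      = ‖∫ y in a..b, (𝐞 (φ y) : ℂ) * (φ' y * w y : ℝ)‖ := by simp only [hφw]
    _ ≤ |w b| + |w a| + ∫ y in a..b, |w' y| :=
        norm_integral_fourierChar_mul_deriv_mul_le hab hφ cφ' hw cw'
    _ ≤ h / 2 + h / 2 + ∫ y in a..b, h * (|h * φ'' y| * cauchyWeight (h * φ' y)) := by
        refine add_le_add (add_le_add (hw_le b) (hw_le a)) ?_
        exact intervalIntegral.integral_mono_on hab (cw'.abs.intervalIntegrable _ _)
          (Continuous.intervalIntegrable (by fun_prop) _ _) fun y _ => hw'_le y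
    _ = _ := by rw [intervalIntegral.integral_const_mul]; ring

lemma norm_integral_fourierChar_le (hφ : ∀ y, HasDerivAt φ (φ' y) y)
    (hφ' : ∀ y, HasDerivAt φ' (φ'' y) y) (hφ'' : Continuous φ'') {a b h : ℝ} (hab : a ≤ b)
    (hh : 0 < h) :
    ‖∫ y in a..b, (𝐞 (φ y) : ℂ)‖ ≤ (∫ y in a..b, cauchyWeight (h * φ' y)) +
      h * (1 + ∫ y in a..b, |h * φ'' y| * cauchyWeight (h * φ' y)) := by
  have cφ : Continuous φ := continuous_iff_continuousAt.2 fun y => (hφ y).continuousAt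
  have cφ' : Continuous φ' := continuous_iff_continuousAt.2 fun y => (hφ' y).continuousAt
  have hsplit : ∫ y in a..b, (𝐞 (φ y) : ℂ) =
      (∫ y in a..b, (𝐞 (φ y) : ℂ) * (cauchyWeight (h * φ' y) : ℝ)) +
        ∫ y in a..b, (𝐞 (φ y) : ℂ) * (1 - cauchyWeight (h * φ' y) : ℝ) := by
    rw [← intervalIntegral.integral_add (Continuous.intervalIntegrable (by fun_prop) _ _)
      (Continuous.intervalIntegrable (by fun_prop) _ _)]
    simp only [← mul_add, ← Complex.ofReal_add, add_sub_cancel, Complex.ofReal_one, mul_one]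
  rw [hsplit]
  refine (norm_add_le _ _).trans (add_le_add ?_
    (norm_integral_fourierChar_mul_one_sub_cauchyWeight_le hφ hφ' hφ'' hab hh))
  refine intervalIntegral.norm_integral_le_of_norm_le hab (ae_of_all _ fun y _ => ?_)
    (Continuous.intervalIntegrable (by fun_prop) _ _)
  rw [norm_mul, Circle.norm_coe, one_mul, Complex.norm_real,
    Real.norm_of_nonneg (cauchyWeight_pos _).le]

end VanDerCorput

lemma ofReal_intervalIntegral_eq_setLIntegral {f : ℝ → ℝ} (hf : Continuous f) (h0 : ∀ y, 0 ≤ f y)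
    {a b : ℝ} (hab : a ≤ b) :
    ENNReal.ofReal (∫ y in a..b, f y) = ∫⁻ y in Icc a b, ENNReal.ofReal (f y) := by
  rw [intervalIntegral.integral_of_le hab, ← integral_Icc_eq_integral_Ioc,
    ofReal_integral_eq_lintegral_ofReal hf.continuousOn.integrableOn_Icc (ae_of_all _ h0)]

lemma enorm_integral_fourierChar_polynomial_le (p : Polynomial ℝ) {a b h : ℝ} (hab : a ≤ b)
    (hh : 0 < h) :
    ‖∫ y in a..b, (𝐞 (p.eval y) : ℂ)‖ₑ ≤
      (∫⁻ y in Icc a b, ENNReal.ofReal (cauchyWeight (h * p.derivative.eval y))) +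
        ENNReal.ofReal ((1 + (p.natDegree + 1) * π) * h) := by
  set q : Polynomial ℝ := Polynomial.C h * p.derivative with hq
  have hdeg : q.natDegree ≤ p.natDegree := (Polynomial.natDegree_C_mul_le _ _).trans
    ((Polynomial.natDegree_derivative_le _).trans (Nat.sub_le _ _))
  have hvariation : ∫ y in a..b, |q.derivative.eval y| * cauchyWeight (q.eval y) ≤
      (p.natDegree + 1) * π := by
    rw [← ENNReal.ofReal_le_ofReal_iff (by positivity), ofReal_intervalIntegral_eq_setLIntegral
      (by fun_prop) (fun y => mul_nonneg (abs_nonneg _) (cauchyWeight_pos _).le) hab]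
    simp only [ENNReal.ofReal_mul (abs_nonneg _)]
    refine (setLIntegral_abs_derivative_mul_cauchyWeight_le q a b).trans ?_
    rw [ENNReal.ofReal_mul (by positivity), ENNReal.ofReal_add (by positivity) zero_le_one,
      ENNReal.ofReal_natCast, ENNReal.ofReal_one]
    gcongr
  have hvdc := norm_integral_fourierChar_le (φ := (p.eval ·)) p.hasDerivAt p.derivative.hasDerivAt
    p.derivative.derivative.continuous hab hh
  have hweight : 0 ≤ ∫ y in a..b, cauchyWeight (h * p.derivative.eval y) :=
    intervalIntegral.integral_nonneg hab fun y _ => (cauchyWeight_pos _).le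
  rw [← ofReal_intervalIntegral_eq_setLIntegral (by fun_prop) (fun y => (cauchyWeight_pos _).le)
    hab, ← ENNReal.ofReal_add hweight (by positivity), ← ofReal_norm]
  refine ENNReal.ofReal_le_ofReal (hvdc.trans ?_)
  simp only [hq, Polynomial.derivative_C_mul, Polynomial.eval_C_mul] at hvariation
  rw [mul_comm h (1 + _)]
  gcongr

lemma lintegral_pi_fin_succ {α : Type*} [MeasurableSpace α] (μ : Measure α) [SigmaFinite μ]
    {n : ℕ} {F : (Fin (n + 1) → α) → ℝ≥0∞} (hF : Measurable F) :
    ∫⁻ z, F z ∂Measure.pi (fun _ => μ) =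
      ∫⁻ x, ∫⁻ c, F (Fin.cons c x) ∂μ ∂Measure.pi (fun _ => μ) := by
  have h := (measurePreserving_piFinSuccAbove (fun _ : Fin (n + 1) => μ) 0).symm
  rw [← h.lintegral_comp hF]
  refine (lintegral_prod_symm' _ (hF.comp h.measurable)).trans ?_
  simp only [Function.comp_apply, MeasurableEquiv.piFinSuccAbove_symm_apply,
    Fin.insertNthEquiv_zero]
  rfl

lemma setLIntegral_univ_pi_fin_succ (X : Set ℝ) {n : ℕ} {F : (Fin (n + 1) → ℝ) → ℝ≥0∞}
    (hF : Measurable F) :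
    ∫⁻ z in univ.pi fun _ => X, F z =
      ∫⁻ x in univ.pi fun _ => X, ∫⁻ c in X, F (Fin.cons c x) := by
  simp only [volume_pi, Measure.restrict_pi_pi]
  exact lintegral_pi_fin_succ _ hF

lemma lintegral_prod_eval_eq_prod_lintegral {n : ℕ} {φ : Fin n → ℝ → ℝ≥0∞}
    (hφ : ∀ i, Measurable (φ i)) :
    ∫⁻ z : Fin n → ℝ, ∏ i, φ i (z i) = ∏ i, ∫⁻ t, φ i t := by
  induction n with
  | zero => simp [volume_pi]
  | succ n ih =>
    rw [volume_pi, lintegral_pi_fin_succ _ (by fun_prop), Fin.prod_univ_succ, ← ih fun i => hφ _,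
      ← lintegral_const_mul _ (by fun_prop)]
    simp only [Fin.prod_univ_succ, Fin.cons_zero, Fin.cons_succ]
    exact lintegral_congr fun x => lintegral_mul_const _ (hφ 0)

lemma setLIntegral_enorm_rpow_neg_Ioo {b L : ℝ} (hb : b < 1) (hL : 0 ≤ L) :
    ∫⁻ t in Ioo 0 L, ‖t‖ₑ ^ (-b) = ENNReal.ofReal (L ^ (1 - b) / (1 - b)) := by
  have hint : IntegrableOn (fun t : ℝ => t ^ (-b)) (Ioo 0 L) := by
    have := intervalIntegral.intervalIntegrable_rpow' (a := 0) (b := L) (r := -b) (by linarith)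
    rw [intervalIntegrable_iff_integrableOn_Ioc_of_le hL] at this
    exact this.mono_set Ioo_subset_Ioc_self
  calc ∫⁻ t in Ioo 0 L, ‖t‖ₑ ^ (-b) = ∫⁻ t in Ioo 0 L, ENNReal.ofReal (t ^ (-b)) :=
        setLIntegral_congr_fun measurableSet_Ioo fun t ht => by
          rw [Real.enorm_of_nonneg ht.1.le, ENNReal.ofReal_rpow_of_pos ht.1]
    _ = ENNReal.ofReal (∫ t in Ioo 0 L, t ^ (-b)) :=
        (ofReal_integral_eq_lintegral_ofReal hint <| (ae_restrict_iff' measurableSet_Ioo).2 <|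
          ae_of_all _ fun t ht => Real.rpow_nonneg ht.1.le _).symm
    _ = ENNReal.ofReal (L ^ (1 - b) / (1 - b)) := by
        rw [← integral_Ioc_eq_integral_Ioo, ← intervalIntegral.integral_of_le hL,
          integral_rpow (Or.inl (by linarith)), Real.zero_rpow (by linarith), neg_add_eq_sub,
          sub_zero]

lemma setLIntegral_eball_enorm_sub_rpow_neg_le {b : ℝ} (hb : b < 1) (c : ℝ) {r : ℝ≥0∞}
    (hr : r ≠ ⊤) :
    ∫⁻ t in Metric.eball c r, ‖t - c‖ₑ ^ (-b) ≤ ENNReal.ofReal (2 / (1 - b)) * r ^ (1 - b) := by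
  have hb' : 0 < 1 - b := sub_pos.2 hb
  have htranslate : ∫⁻ t in Metric.eball c r, ‖t - c‖ₑ ^ (-b) =
      ∫⁻ t in Ioo (-r.toReal) r.toReal, ‖t‖ₑ ^ (-b) := by
    have hpre : Metric.eball c r = (· - c) ⁻¹' Ioo (-r.toReal) r.toReal := by
      ext t
      rw [Metric.mem_eball, edist_eq_enorm_sub, mem_preimage, mem_Ioo, ← abs_lt,
        ← Real.norm_eq_abs, ← toReal_enorm, ENNReal.toReal_lt_toReal enorm_ne_top hr]
    rw [hpre]
    exact (measurePreserving_sub_right volume c).setLIntegral_comp_preimage_emb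
      (MeasurableEquiv.subRight c).measurableEmbedding (fun t => ‖t‖ₑ ^ (-b)) _
  have hneg : ∫⁻ t in Ioo (-r.toReal) 0, ‖t‖ₑ ^ (-b) = ∫⁻ t in Ioo 0 r.toReal, ‖t‖ₑ ^ (-b) := by
    rw [← (Measure.measurePreserving_neg volume).setLIntegral_comp_preimage_emb
      (MeasurableEquiv.neg ℝ).measurableEmbedding]
    simp
  calc ∫⁻ t in Metric.eball c r, ‖t - c‖ₑ ^ (-b)
      ≤ (∫⁻ t in Ioo (-r.toReal) 0, ‖t‖ₑ ^ (-b)) + ∫⁻ t in Ioo 0 r.toReal, ‖t‖ₑ ^ (-b) :=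
        htranslate.trans_le (setLIntegral_Ioo_le_add _)
    _ = ENNReal.ofReal (2 / (1 - b)) * r ^ (1 - b) := by
        rw [hneg, setLIntegral_enorm_rpow_neg_Ioo hb ENNReal.toReal_nonneg, ← two_mul,
          ← ENNReal.ofReal_ofNat 2, ← ENNReal.ofReal_mul zero_le_two, mul_div_left_comm, mul_comm,
          ENNReal.ofReal_mul (by positivity),
          ← ENNReal.ofReal_rpow_of_nonneg ENNReal.toReal_nonneg hb'.le, ENNReal.ofReal_toReal hr]

lemma setLIntegral_enorm_sub_rpow_neg_le {b : ℝ} (hb0 : 0 ≤ b) (hb : b < 1) (X : Set ℝ) (c : ℝ) :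
    ∫⁻ t in X, ‖t - c‖ₑ ^ (-b) ≤ ENNReal.ofReal (1 + 2 / (1 - b)) * volume X ^ (1 - b) := by
  have hb' : 0 < 1 - b := sub_pos.2 hb
  have hK : ENNReal.ofReal (1 + 2 / (1 - b)) = 1 + ENNReal.ofReal (2 / (1 - b)) := by
    rw [ENNReal.ofReal_add zero_le_one (by positivity), ENNReal.ofReal_one]
  rcases eq_or_ne (volume X) 0 with h0 | h0
  · simp [setLIntegral_measure_zero _ _ h0]
  rcases eq_or_ne (volume X) ⊤ with htop | htop
  · simp [htop, hb', hK]
  have hfar : ∫⁻ t in X ∩ (Metric.eball c (volume X))ᶜ, ‖t - c‖ₑ ^ (-b) ≤ volume X ^ (1 - b) :=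
    calc ∫⁻ t in X ∩ (Metric.eball c (volume X))ᶜ, ‖t - c‖ₑ ^ (-b)
        ≤ ∫⁻ _ in X ∩ (Metric.eball c (volume X))ᶜ, volume X ^ (-b) := by
          rw [inter_comm, ← Measure.restrict_restrict Metric.isOpen_eball.measurableSet.compl]
          refine setLIntegral_mono measurable_const fun _ ht => ?_
          rw [mem_compl_iff, Metric.mem_eball, edist_eq_enorm_sub, not_lt] at ht
          rw [ENNReal.rpow_neg, ENNReal.rpow_neg]
          exact ENNReal.inv_le_inv.2 (ENNReal.rpow_le_rpow ht hb0)
      _ ≤ volume X ^ (-b) * volume X ^ (1 : ℝ) := by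
          rw [setLIntegral_const, ENNReal.rpow_one]
          gcongr
          exact inter_subset_left
      _ = volume X ^ (1 - b) := by
          rw [← ENNReal.rpow_add _ _ h0 htop, neg_add_eq_sub]
  calc ∫⁻ t in X, ‖t - c‖ₑ ^ (-b)
      ≤ (∫⁻ t in X ∩ (Metric.eball c (volume X))ᶜ, ‖t - c‖ₑ ^ (-b)) +
          ∫⁻ t in Metric.eball c (volume X), ‖t - c‖ₑ ^ (-b) := by
        refine (lintegral_mono_set fun t ht => ?_).trans (lintegral_union_le _ _ _)
        by_cases h : t ∈ Metric.eball c (volume X)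
        exacts [Or.inr h, Or.inl ⟨ht, h⟩]
    _ ≤ volume X ^ (1 - b) + ENNReal.ofReal (2 / (1 - b)) * volume X ^ (1 - b) :=
        add_le_add hfar (setLIntegral_eball_enorm_sub_rpow_neg_le hb c htop)
    _ = _ := by rw [hK, add_mul, one_mul]

section Vandermonde

variable {n : ℕ}

@[fun_prop]
lemma continuous_det_vandermonde :
    Continuous fun x : Fin n → ℝ => (Matrix.vandermonde x).det := by
  simp only [Matrix.det_vandermonde]
  fun_prop

lemma enorm_det_vandermonde_cons (c : ℝ) (x : Fin n → ℝ) :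
    ‖(Matrix.vandermonde (Fin.cons c x : Fin (n + 1) → ℝ)).det‖ₑ =
      (∏ i, ‖x i - c‖ₑ) * ‖(Matrix.vandermonde x).det‖ₑ := by
  simp only [Matrix.det_vandermonde, Fin.prod_univ_succ (n := n), Fin.prod_Ioi_zero,
    Fin.prod_Ioi_succ, Fin.cons_succ, Fin.cons_zero, enorm_eq_nnnorm, nnnorm_mul, nnnorm_prod,
    ENNReal.ofNNReal_finsetProd, ENNReal.coe_mul]

lemma measurable_enorm_det_vandermonde :
    Measurable fun x : Fin n → ℝ => ‖(Matrix.vandermonde x).det‖ₑ :=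
  continuous_det_vandermonde.measurable.enorm

lemma prod_le_sum_pow (hn : n ≠ 0) (u : Fin n → ℝ≥0∞) : ∏ i, u i ≤ ∑ i, u i ^ n := by
  have : NeZero n := ⟨hn⟩
  obtain ⟨i, -, hi⟩ := Finset.exists_max_image Finset.univ u Finset.univ_nonempty
  calc ∏ j, u j ≤ u i ^ (Finset.univ : Finset (Fin n)).card := Finset.prod_le_pow_card _ _ _ hi
    _ = u i ^ n := by rw [Finset.card_univ, Fintype.card_fin]
    _ ≤ ∑ j, u j ^ n :=
      Finset.single_le_sum (f := fun j => u j ^ n) (fun _ _ => zero_le) (Finset.mem_univ i)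

lemma setLIntegral_prod_enorm_sub_rpow_neg_le {a : ℝ} (ha : 0 ≤ a) (han : a * n < 1) (X : Set ℝ)
    (x : Fin n → ℝ) :
    ∫⁻ c in X, ∏ i, ‖x i - c‖ₑ ^ (-a) ≤
      (1 + n * ENNReal.ofReal (1 + 2 / (1 - a * n))) * volume X ^ (1 - a * n) := by
  rcases eq_or_ne n 0 with rfl | hn
  · simp
  calc ∫⁻ c in X, ∏ i, ‖x i - c‖ₑ ^ (-a)
      ≤ ∫⁻ c in X, ∑ i, ‖c - x i‖ₑ ^ (-(a * n)) := by
        refine lintegral_mono fun c => (prod_le_sum_pow hn _).trans_eq ?_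
        simp only [enorm_sub_rev _ c, ← ENNReal.rpow_natCast, ← ENNReal.rpow_mul, neg_mul]
    _ = ∑ i, ∫⁻ c in X, ‖c - x i‖ₑ ^ (-(a * n)) := lintegral_finsetSum _ (by fun_prop)
    _ ≤ ∑ _ : Fin n, ENNReal.ofReal (1 + 2 / (1 - a * n)) * volume X ^ (1 - a * n) := by
        gcongr
        exact setLIntegral_enorm_sub_rpow_neg_le (by positivity) han X _
    _ = n * ENNReal.ofReal (1 + 2 / (1 - a * n)) * volume X ^ (1 - a * n) := by
        rw [Finset.sum_const, Finset.card_univ, Fintype.card_fin, nsmul_eq_mul, mul_assoc]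
    _ ≤ _ := by gcongr; exact le_add_self

lemma setLIntegral_det_vandermonde_rpow_fin_succ (X : Set ℝ) (s : ℝ) :
    ∫⁻ z in univ.pi fun _ : Fin (n + 1) => X, ‖(Matrix.vandermonde z).det‖ₑ ^ s =
      ∫⁻ x in univ.pi fun _ : Fin n => X, (∫⁻ c in X, ∏ i, ‖x i - c‖ₑ ^ s) *
        ‖(Matrix.vandermonde x).det‖ₑ ^ s := by
  rw [setLIntegral_univ_pi_fin_succ X (measurable_enorm_det_vandermonde.pow_const _)]
  refine lintegral_congr fun x => ?_
  rw [← lintegral_mul_const _ (by fun_prop)]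
  refine lintegral_congr fun c => ?_
  have hprod : ∏ i, ‖x i - c‖ₑ ≠ ⊤ := ENNReal.prod_ne_top fun _ _ => enorm_ne_top
  rw [enorm_det_vandermonde_cons, ENNReal.mul_rpow_of_ne_top hprod enorm_ne_top,
    ENNReal.prod_rpow_of_ne_top fun _ _ => enorm_ne_top]

lemma exists_setLIntegral_det_vandermonde_rpow_neg_le {a : ℝ} (ha : 0 ≤ a) (n : ℕ)
    (han : a * (n - 1) < 1) :
    ∃ C : ℝ≥0∞, C ≠ ⊤ ∧ ∀ X : Set ℝ,
      ∫⁻ z in univ.pi fun _ : Fin n => X, ‖(Matrix.vandermonde z).det‖ₑ ^ (-a) ≤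
        C * volume X ^ (n - a * (n * (n - 1) / 2)) := by
  induction n with
  | zero => exact ⟨1, ENNReal.one_ne_top, fun X => by simp [volume_pi]⟩
  | succ n ih =>
    have han : a * n < 1 := by simpa using han
    obtain ⟨C, hC, ih⟩ := ih (by linarith)
    refine ⟨(1 + n * ENNReal.ofReal (1 + 2 / (1 - a * n))) * C,
      ENNReal.mul_ne_top (by finiteness) hC, fun X => ?_⟩
    set K := 1 + n * ENNReal.ofReal (1 + 2 / (1 - a * n))
    calc ∫⁻ z in univ.pi fun _ : Fin (n + 1) => X, ‖(Matrix.vandermonde z).det‖ₑ ^ (-a)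
        = ∫⁻ x in univ.pi fun _ : Fin n => X, (∫⁻ c in X, ∏ i, ‖x i - c‖ₑ ^ (-a)) *
            ‖(Matrix.vandermonde x).det‖ₑ ^ (-a) :=
          setLIntegral_det_vandermonde_rpow_fin_succ X _
      _ ≤ K * volume X ^ (1 - a * n) *
            ∫⁻ x in univ.pi fun _ : Fin n => X, ‖(Matrix.vandermonde x).det‖ₑ ^ (-a) := by
          rw [← lintegral_const_mul _ (measurable_enorm_det_vandermonde.pow_const _)]
          gcongr with x
          exact setLIntegral_prod_enorm_sub_rpow_neg_le ha han X x
      _ ≤ K * volume X ^ (1 - a * n) * (C * volume X ^ (n - a * (n * (n - 1) / 2))) := by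
          gcongr
          exact ih X
      _ = _ := by
          have hexp : 0 ≤ n - a * (n * (n - 1) / 2) := by
            rcases n.eq_zero_or_pos with rfl | hn
            · simp
            · have : (1 : ℝ) ≤ n := Nat.one_le_cast.2 hn
              nlinarith
          rw [mul_mul_mul_comm, ← ENNReal.rpow_add_of_nonneg _ _ (sub_pos.2 han).le hexp]
          congr 2
          push_cast
          ring

/-- Away from the `n` balls of radius `|X| / (4 (n + 1))` about the `x i`, the product is at least
the `n`-th power of that radius. -/
lemma volume_half_mul_pow_le_setLIntegral_prod_enorm_sub {X : Set ℝ} (hX : volume X ≠ ⊤)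
    (x : Fin n → ℝ) :
    volume X / 2 * (volume X / (4 * (n + 1))) ^ n ≤ ∫⁻ c in X, ∏ i, ‖x i - c‖ₑ := by
  set r := volume X / (4 * (n + 1) : ℝ≥0∞)
  have hr : 4 * (n + 1) * r = volume X := ENNReal.mul_div_cancel (by positivity) (by finiteness)
  set U := ⋃ i, Metric.eball (x i) r
  have hU : volume U ≤ volume X / 2 := by
    calc volume U ≤ ∑ i : Fin n, volume (Metric.eball (x i) r) := measure_iUnion_fintype_le _ _
      _ = n * (2 * r) := by simp [Real.volume_eball]
      _ ≤ (n + 1) * (2 * r) := by gcongr; exact le_self_add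
      _ = volume X / 2 := by
        rw [ENNReal.eq_div_iff two_ne_zero ENNReal.ofNat_ne_top, ← hr]
        ring
  have hdiff : volume X / 2 ≤ volume (X \ U) := by
    calc volume X / 2 = volume X - volume X / 2 := (ENNReal.sub_half hX).symm
      _ ≤ volume X - volume U := tsub_le_tsub_left hU _
      _ ≤ volume (X \ U) := le_measure_sdiff
  calc volume X / 2 * r ^ n ≤ volume (X \ U) * r ^ n := by gcongr
    _ = ∫⁻ _ in X \ U, r ^ n := by rw [setLIntegral_const, mul_comm]
    _ ≤ ∫⁻ c in X \ U, ∏ i, ‖x i - c‖ₑ := by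
        refine setLIntegral_mono (by fun_prop) fun c hc => ?_
        have hfar : ∀ i, r ≤ ‖x i - c‖ₑ := fun i => by
          rw [enorm_sub_rev, ← edist_eq_enorm_sub, ← not_lt, ← Metric.mem_eball]
          exact fun h => hc.2 (mem_iUnion.2 ⟨i, h⟩)
        simpa using Finset.pow_card_le_prod Finset.univ (fun i => ‖x i - c‖ₑ) r fun i _ => hfar i
    _ ≤ ∫⁻ c in X, ∏ i, ‖x i - c‖ₑ := lintegral_mono_set sdiff_subset

lemma exists_volume_pow_choose_le_setLIntegral_det_vandermonde (n : ℕ) :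
    ∃ C : ℝ≥0∞, C ≠ ⊤ ∧ ∀ X : Set ℝ, volume X ≠ ⊤ → volume X ^ (n + 1).choose 2 ≤
      C * ∫⁻ z in univ.pi fun _ : Fin n => X, ‖(Matrix.vandermonde z).det‖ₑ := by
  induction n with
  | zero => exact ⟨1, ENNReal.one_ne_top, fun X _ => by simp [volume_pi]⟩
  | succ n ih =>
    obtain ⟨C, hC, ih⟩ := ih
    refine ⟨2 * (4 * (n + 1)) ^ n * C, ENNReal.mul_ne_top (by finiteness) hC, fun X hX => ?_⟩
    have hscale : volume X ^ (n + 1) =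
        2 * (4 * (n + 1)) ^ n * (volume X / 2 * (volume X / (4 * (n + 1))) ^ n) := by
      rw [mul_mul_mul_comm, ENNReal.mul_div_cancel two_ne_zero ENNReal.ofNat_ne_top, ← mul_pow,
        ENNReal.mul_div_cancel (by positivity) (by finiteness), pow_succ']
    calc volume X ^ (n + 1 + 1).choose 2
        = volume X ^ (n + 1) * volume X ^ (n + 1).choose 2 := by
          rw [Nat.choose_succ_succ' (n + 1) 1, Nat.choose_one_right, pow_add]
      _ ≤ 2 * (4 * (n + 1)) ^ n * (volume X / 2 * (volume X / (4 * (n + 1))) ^ n) *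
            (C * ∫⁻ x in univ.pi fun _ : Fin n => X, ‖(Matrix.vandermonde x).det‖ₑ) := by
          rw [← hscale]
          gcongr
          exact ih X hX
      _ = 2 * (4 * (n + 1)) ^ n * C * ∫⁻ x in univ.pi fun _ : Fin n => X,
            volume X / 2 * (volume X / (4 * (n + 1))) ^ n * ‖(Matrix.vandermonde x).det‖ₑ := by
          rw [lintegral_const_mul _ measurable_enorm_det_vandermonde, mul_mul_mul_comm,
            mul_assoc (2 * _)]
      _ ≤ 2 * (4 * (n + 1)) ^ n * C * ∫⁻ x in univ.pi fun _ : Fin n => X,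
            (∫⁻ c in X, ∏ i, ‖x i - c‖ₑ) * ‖(Matrix.vandermonde x).det‖ₑ := by
          gcongr with x
          exact volume_half_mul_pow_le_setLIntegral_prod_enorm_sub hX x
      _ = _ := by simpa only [ENNReal.rpow_one] using
          congrArg (_ * ·) (setLIntegral_det_vandermonde_rpow_fin_succ X 1).symm

end Vandermonde

lemma lintegral_comp_mulVec {ι : Type*} [Fintype ι] [DecidableEq ι] {M : Matrix ι ι ℝ}
    (hM : M.det ≠ 0) {G : (ι → ℝ) → ℝ≥0∞} (hG : Measurable G) :
    ∫⁻ f, G (M.mulVec f) = ‖M.det‖ₑ⁻¹ * ∫⁻ f, G f := by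
  have hmeas : Measurable (Matrix.toLin' M) :=
    (LinearMap.continuous_of_finiteDimensional _).measurable
  calc ∫⁻ f, G (M.mulVec f) = ∫⁻ f, G f ∂(Measure.map (Matrix.toLin' M) volume) :=
        (lintegral_map hG hmeas).symm
    _ = ‖M.det‖ₑ⁻¹ * ∫⁻ f, G f := by
        rw [Real.map_matrix_volume_pi_eq_smul_volume_pi hM, lintegral_smul_measure, smul_eq_mul,
          abs_inv, ENNReal.ofReal_inv_of_pos (abs_pos.2 hM), ← Real.norm_eq_abs, ofReal_norm]

lemma lintegral_comp_diagonal {ι : Type*} [Fintype ι] {d : ι → ℝ} (hd : ∀ i, d i ≠ 0)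
    {G : (ι → ℝ) → ℝ≥0∞} (hG : Measurable G) :
    ∫⁻ r : ι → ℝ, G (fun i => d i * r i) = ‖∏ i, d i‖ₑ⁻¹ * ∫⁻ r, G r := by
  classical
  rw [← Matrix.det_diagonal, ← lintegral_comp_mulVec (by
    rw [Matrix.det_diagonal]; exact Finset.prod_ne_zero_iff.2 fun i _ => hd i) hG]
  simp only [← Matrix.mulVec_diagonal]

lemma lintegral_pi_split {ι α β : Type*} [Fintype ι] [Fintype α] [Fintype β] (e : ι ≃ α ⊕ β)
    {F : (ι → ℝ) → ℝ≥0∞} (hF : Measurable F) :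
    ∫⁻ z, F z = ∫⁻ r : β → ℝ, ∫⁻ f : α → ℝ, F fun i => Sum.elim f r (e i) := by
  have h1 := (volume_measurePreserving_piCongrLeft (fun _ : α ⊕ β => ℝ) e).symm
  have h2 := (volume_measurePreserving_sumPiEquivProdPi (fun _ : α ⊕ β => ℝ)).symm
  have h3 := h1.comp h2
  rw [← h3.lintegral_comp hF, Measure.volume_eq_prod, lintegral_prod_symm]
  · rfl
  · exact (hF.comp h3.measurable).aemeasurable

/-- Multi-indices `(i, j)` with `i + j ≤ m`. -/
def triangle (m : ℕ) : Finset (ℕ × ℕ) :=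
  (Finset.range (m + 1) ×ˢ Finset.range (m + 1)).filter fun p => p.1 + p.2 ≤ m

lemma mem_triangle {m : ℕ} {p : ℕ × ℕ} : p ∈ triangle m ↔ p.1 + p.2 ≤ m := by
  simp only [triangle, Finset.mem_filter, Finset.mem_product, Finset.mem_range]
  omega

/-- Splitting the multi-indices `(i, j)` according to whether `j = 0`. -/
def triangleEquiv (m : ℕ) : triangle (m + 1) ≃ Fin (m + 2) ⊕ triangle m where
  toFun
    | ⟨(i, 0), h⟩ => Sum.inl ⟨i, Nat.lt_succ_of_le (mem_triangle.1 h)⟩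
    | ⟨(i, j + 1), h⟩ =>
      Sum.inr ⟨(i, j), mem_triangle.2 (Nat.le_of_succ_le_succ (mem_triangle.1 h))⟩
  invFun
    | Sum.inl i => ⟨(i, 0), mem_triangle.2 (Nat.le_of_lt_succ i.2)⟩
    | Sum.inr ⟨(i, j), h⟩ => ⟨(i, j + 1), mem_triangle.2 (Nat.succ_le_succ (mem_triangle.1 h))⟩
  left_inv := by rintro ⟨⟨i, _ | j⟩, h⟩ <;> rfl
  right_inv := by rintro (i | ⟨⟨i, j⟩, h⟩) <;> rfl

lemma card_triangle (m : ℕ) : Fintype.card (triangle m) = (m + 2).choose 2 := by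
  induction m with
  | zero => rfl
  | succ m ih =>
    rw [Fintype.card_congr (triangleEquiv m), Fintype.card_sum, Fintype.card_fin, ih,
      Nat.choose_succ_succ' (m + 2) 1, Nat.choose_one_right]

/-- The polynomial `y ↦ ∑ r_{ij} x^i y^j / j!`. -/
def triPoly (m : ℕ) (r : triangle m → ℝ) (x : ℝ) : Polynomial ℝ :=
  ∑ p, Polynomial.C (r p * x ^ p.1.1 / (p.1.2).factorial) * Polynomial.X ^ p.1.2

/-- The primitive `y ↦ ∑ r_{ij} x^i y^(j+1) / (j+1)!` of `triPoly m r x`. -/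
def triPrim (m : ℕ) (r : triangle m → ℝ) (x : ℝ) : Polynomial ℝ :=
  ∑ p, Polynomial.C (r p * x ^ p.1.1 / (p.1.2 + 1).factorial) * Polynomial.X ^ (p.1.2 + 1)

lemma eval_triPoly (m : ℕ) (r : triangle m → ℝ) (x y : ℝ) : (triPoly m r x).eval y =
    ∑ p, r p * x ^ p.1.1 / (p.1.2).factorial * y ^ p.1.2 := by
  simp [triPoly, Polynomial.eval_finsetSum]

lemma eval_triPrim (m : ℕ) (r : triangle m → ℝ) (x y : ℝ) : (triPrim m r x).eval y =
    ∑ p, r p * x ^ p.1.1 / (p.1.2 + 1).factorial * y ^ (p.1.2 + 1) := by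
  simp [triPrim, Polynomial.eval_finsetSum]

lemma derivative_triPrim (m : ℕ) (r : triangle m → ℝ) (x : ℝ) :
    (triPrim m r x).derivative = triPoly m r x := by
  simp only [triPrim, triPoly, Polynomial.derivative_sum]
  refine Finset.sum_congr rfl fun p _ => ?_
  rw [Polynomial.derivative_C_mul_X_pow, Nat.add_sub_cancel]
  congr 2
  rw [Nat.factorial_succ]
  push_cast
  have : ((p.1.2 : ℝ) + 1) ≠ 0 := by positivity
  have : ((p.1.2).factorial : ℝ) ≠ 0 := by positivity
  field_simp

lemma natDegree_triPrim_le (m : ℕ) (r : triangle m → ℝ) (x : ℝ) :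
    (triPrim m r x).natDegree ≤ m + 1 := by
  refine Polynomial.natDegree_sum_le_of_forall_le _ _ fun p _ => ?_
  refine (Polynomial.natDegree_C_mul_X_pow_le _ _).trans ?_
  have := mem_triangle.1 p.2
  omega

lemma triPoly_succ (m : ℕ) (f : Fin (m + 2) → ℝ) (r : triangle m → ℝ) (x : ℝ) :
    triPoly (m + 1) (fun p => Sum.elim f r (triangleEquiv m p)) x =
      Polynomial.C (∑ i, f i * x ^ (i : ℕ)) + triPrim m r x := by
  rw [triPoly, ← Equiv.sum_comp (triangleEquiv m).symm, Fintype.sum_sum_type, map_sum, triPrim]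
  congr 1
  refine Finset.sum_congr rfl fun i _ => ?_
  simp only [Equiv.apply_symm_apply, Sum.elim_inl]
  simp [triangleEquiv]

lemma eval_triPoly_smul (m : ℕ) (h : ℝ) (r : triangle m → ℝ) (x y : ℝ) :
    (triPoly m (h • r) x).eval y = h * (triPoly m r x).eval y := by
  rw [eval_triPoly, eval_triPoly, Finset.mul_sum]
  exact Finset.sum_congr rfl fun p _ => by rw [Pi.smul_apply, smul_eq_mul]; ring

@[fun_prop]
lemma continuous_triPoly_eval {α : Type*} [TopologicalSpace α] (m : ℕ) {r : α → triangle m → ℝ}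
    {x y : α → ℝ} (hr : Continuous r) (hx : Continuous x) (hy : Continuous y) :
    Continuous fun a => (triPoly m (r a) (x a)).eval (y a) := by
  simp only [eval_triPoly]
  fun_prop

@[fun_prop]
lemma continuous_triPrim_eval {α : Type*} [TopologicalSpace α] (m : ℕ) {r : α → triangle m → ℝ}
    {x y : α → ℝ} (hr : Continuous r) (hx : Continuous x) (hy : Continuous y) :
    Continuous fun a => (triPrim m (r a) (x a)).eval (y a) := by
  simp only [eval_triPrim]
  fun_prop

/-- The mean of the weight `cauchyWeight` over the unit square along a polynomial. -/
def weightMean (m : ℕ) (r : triangle m → ℝ) : ℝ≥0∞ :=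
  ∫⁻ x in Icc (0 : ℝ) 1, ∫⁻ y in Icc (0 : ℝ) 1,
    ENNReal.ofReal (cauchyWeight ((triPoly m r x).eval y))

lemma measurable_weightMean (m : ℕ) : Measurable (weightMean m) := by
  have h1 : Measurable fun q : ((triangle m → ℝ) × ℝ) × ℝ =>
      ENNReal.ofReal (cauchyWeight ((triPoly m q.1.1 q.1.2).eval q.2)) := by
    have h : Continuous fun q : ((triangle m → ℝ) × ℝ) × ℝ => (triPoly m q.1.1 q.1.2).eval q.2 :=
      continuous_triPoly_eval m (continuous_fst.comp continuous_fst)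
        (continuous_snd.comp continuous_fst) continuous_snd
    exact measurable_ofReal_cauchyWeight h.measurable
  exact (h1.lintegral_prod_right').lintegral_prod_right'

lemma setLIntegral_Icc_le_one {g : ℝ → ℝ≥0∞} (hg : ∀ x, g x ≤ 1) :
    ∫⁻ x in Icc (0 : ℝ) 1, g x ≤ 1 := by
  refine (lintegral_mono hg).trans ?_
  simp

lemma weightMean_le_one (m : ℕ) (r : triangle m → ℝ) : weightMean m r ≤ 1 :=
  setLIntegral_Icc_le_one fun _ => setLIntegral_Icc_le_one fun _ => by
    simpa using cauchyWeight_le_one _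

lemma vandermonde_mulVec {n : ℕ} (z f : Fin n → ℝ) (i : Fin n) :
    (Matrix.vandermonde z).mulVec f i = ∑ j, f j * z i ^ (j : ℕ) := by
  simp only [Matrix.mulVec, dotProduct, Matrix.vandermonde_apply]
  exact Finset.sum_congr rfl fun j _ => mul_comm _ _

lemma lintegral_prod_comp_vandermonde_mul_le {n : ℕ} {ψ : Fin n → ℝ → ℝ≥0∞}
    (hψ : ∀ i, Measurable (ψ i)) (z : Fin n → ℝ) :
    (∫⁻ f : Fin n → ℝ, ∏ i, ψ i (∑ j, f j * z i ^ (j : ℕ))) * ‖(Matrix.vandermonde z).det‖ₑ ≤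
      ∏ i, ∫⁻ t, ψ i t := by
  by_cases hz : (Matrix.vandermonde z).det = 0
  · simp [hz]
  have hchange := lintegral_comp_mulVec hz
    (Finset.measurable_prod Finset.univ fun i _ => (hψ i).comp (measurable_pi_apply i))
  simp only [vandermonde_mulVec, Function.comp_apply] at hchange
  rw [hchange, lintegral_prod_eval_eq_prod_lintegral hψ, mul_right_comm,
    ENNReal.inv_mul_cancel (by simpa using hz) enorm_ne_top, one_mul]

lemma lintegral_lintegral_prod_mul_det_vandermonde_le {n : ℕ} {ψ : ℝ → ℝ → ℝ≥0∞}
    (hψ : Measurable (Function.uncurry ψ)) :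
    ∫⁻ f : Fin n → ℝ, ∫⁻ z : Fin n → ℝ,
      (∏ i, ψ (z i) (∑ j, f j * z i ^ (j : ℕ))) * ‖(Matrix.vandermonde z).det‖ₑ ≤
      (∫⁻ x, ∫⁻ t, ψ x t) ^ n := by
  have hmeas : ∀ i, Measurable fun q : (Fin n → ℝ) × (Fin n → ℝ) =>
      ψ (q.2 i) (∑ j, q.1 j * q.2 i ^ (j : ℕ)) := fun i =>
    hψ.comp (f := fun q : (Fin n → ℝ) × (Fin n → ℝ) => (q.2 i, ∑ j, q.1 j * q.2 i ^ (j : ℕ)))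
      (by fun_prop)
  have hprod := Finset.measurable_prod Finset.univ fun i _ => hmeas i
  have hdet := measurable_enorm_det_vandermonde (n := n)
  rw [lintegral_lintegral_swap (hprod.mul (hdet.comp measurable_snd)).aemeasurable]
  calc ∫⁻ z : Fin n → ℝ, ∫⁻ f : Fin n → ℝ,
        (∏ i, ψ (z i) (∑ j, f j * z i ^ (j : ℕ))) * ‖(Matrix.vandermonde z).det‖ₑ
      ≤ ∫⁻ z : Fin n → ℝ, ∏ i, ∫⁻ t, ψ (z i) t := by
        refine lintegral_mono fun z => ?_
        have hprodz : Measurable fun f : Fin n → ℝ => ∏ i, ψ (z i) (∑ j, f j * z i ^ (j : ℕ)) :=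
          hprod.comp measurable_prodMk_right
        rw [lintegral_mul_const _ hprodz]
        exact lintegral_prod_comp_vandermonde_mul_le (fun i => hψ.comp measurable_prodMk_left) z
    _ = (∫⁻ x, ∫⁻ t, ψ x t) ^ n := by
        rw [lintegral_prod_eval_eq_prod_lintegral (φ := fun _ x => ∫⁻ t, ψ x t)
          fun _ => hψ.lintegral_prod_right', Finset.prod_const, Finset.card_univ, Fintype.card_fin]

lemma setLIntegral_univ_pi_eq_lintegral_prod_indicator_mul {n : ℕ} {X : Set ℝ}
    (hX : MeasurableSet X) (F : (Fin n → ℝ) → ℝ≥0∞) :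
    ∫⁻ z in univ.pi fun _ => X, F z = ∫⁻ z, (∏ i, X.indicator 1 (z i)) * F z := by
  rw [← lintegral_indicator (MeasurableSet.univ_pi fun _ => hX)]
  refine lintegral_congr fun z => ?_
  by_cases hz : ∀ i, z i ∈ X
  · simp [hz]
  · obtain ⟨i, hi⟩ := not_forall.1 hz
    have hprod : ∏ i, X.indicator (1 : ℝ → ℝ≥0∞) (z i) = 0 :=
      Finset.prod_eq_zero (Finset.mem_univ i) (indicator_of_notMem hi _)
    simp [hz, hprod]

lemma exists_lintegral_volume_graph_pow_le (n : ℕ) :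
    ∃ C : ℝ≥0∞, C ≠ ⊤ ∧ ∀ S : Set (ℝ × ℝ), MeasurableSet S → S ⊆ Icc 0 1 ×ˢ univ →
      ∫⁻ f : Fin n → ℝ, volume {x | (x, ∑ j, f j * x ^ (j : ℕ)) ∈ S} ^ (n + 1).choose 2 ≤
        C * volume S ^ n := by
  obtain ⟨C, hC, hdet⟩ := exists_volume_pow_choose_le_setLIntegral_det_vandermonde n
  refine ⟨C, hC, fun S hS hS1 => ?_⟩
  set ψ : ℝ → ℝ → ℝ≥0∞ := fun x t => S.indicator 1 (x, t)
  have hψ : Measurable (Function.uncurry ψ) := measurable_one.indicator hS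
  have hvolume : volume S = ∫⁻ x, ∫⁻ t, ψ x t := by
    rw [← lintegral_indicator_one hS, Measure.volume_eq_prod]
    exact lintegral_prod _ hψ.aemeasurable
  have hsection (f : Fin n → ℝ) : volume {x | (x, ∑ j, f j * x ^ (j : ℕ)) ∈ S} ≠ ⊤ := by
    have hsub : {x | (x, ∑ j, f j * x ^ (j : ℕ)) ∈ S} ⊆ Icc (0 : ℝ) 1 := fun x hx => (hS1 hx).1
    exact ((measure_mono hsub).trans_lt measure_Icc_lt_top).ne
  have hmeasSection : ∀ f : Fin n → ℝ, MeasurableSet {x | (x, ∑ j, f j * x ^ (j : ℕ)) ∈ S} :=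
    fun f => (by fun_prop : Measurable fun x : ℝ => (x, ∑ j, f j * x ^ (j : ℕ))) hS
  calc ∫⁻ f : Fin n → ℝ, volume {x | (x, ∑ j, f j * x ^ (j : ℕ)) ∈ S} ^ (n + 1).choose 2
      ≤ ∫⁻ f : Fin n → ℝ, C * ∫⁻ z : Fin n → ℝ,
          (∏ i, ψ (z i) (∑ j, f j * z i ^ (j : ℕ))) * ‖(Matrix.vandermonde z).det‖ₑ := by
        refine lintegral_mono fun f => (hdet _ (hsection f)).trans_eq ?_
        rw [setLIntegral_univ_pi_eq_lintegral_prod_indicator_mul (hmeasSection f)]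
        rfl
    _ ≤ C * volume S ^ n := by
        rw [lintegral_const_mul' _ _ hC, hvolume]
        gcongr
        exact lintegral_lintegral_prod_mul_det_vandermonde_le hψ

lemma exists_tsum_rpow_le {s ε : ℝ} (hs : 0 < s) (hε : 0 < ε) :
    ∃ C : ℝ≥0∞, C ≠ ⊤ ∧ ∀ a : ℕ → ℝ≥0∞,
      (∑' j, a j) ^ s ≤ C * ∑' j : ℕ, (2 : ℝ≥0∞) ^ (ε * j) * a j ^ s := by
  set q : ℝ≥0∞ := 2 ^ (-(ε / s)) with hq
  have hq1 : q < 1 := ENNReal.rpow_lt_one_of_one_lt_of_neg (by norm_num) (by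
    rw [neg_lt_zero]; positivity)
  refine ⟨((1 - q)⁻¹) ^ s, ENNReal.rpow_ne_top_of_nonneg hs.le
    (ENNReal.inv_ne_top.2 (tsub_pos_of_lt hq1).ne'), fun a => ?_⟩
  set T := ∑' j : ℕ, (2 : ℝ≥0∞) ^ (ε * j) * a j ^ s
  have hterm (j : ℕ) : a j ≤ q ^ j * T ^ s⁻¹ := by
    calc a j = q ^ j * ((2 : ℝ≥0∞) ^ (ε * j) * a j ^ s) ^ s⁻¹ := by
          rw [ENNReal.mul_rpow_of_nonneg _ _ (by positivity), ENNReal.rpow_rpow_inv hs.ne', hq,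
            ← ENNReal.rpow_natCast, ← ENNReal.rpow_mul, ← ENNReal.rpow_mul, ← mul_assoc,
            ← ENNReal.rpow_add _ _ (by norm_num) (by norm_num)]
          rw [show -(ε / s) * j + ε * j * s⁻¹ = 0 by ring, ENNReal.rpow_zero, one_mul]
      _ ≤ q ^ j * T ^ s⁻¹ := by
          gcongr
          exact ENNReal.le_tsum (f := fun j : ℕ => (2 : ℝ≥0∞) ^ (ε * j) * a j ^ s) j
  calc (∑' j, a j) ^ s ≤ (∑' j, q ^ j * T ^ s⁻¹) ^ s := by
        gcongr with j
        exact hterm j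
    _ = (1 - q)⁻¹ ^ s * T := by
        rw [ENNReal.tsum_mul_right, ENNReal.tsum_geometric, ENNReal.mul_rpow_of_nonneg _ _ hs.le,
          ENNReal.rpow_inv_rpow hs.ne']

lemma exists_lintegral_rpow_le_tsum {α : Type*} [MeasurableSpace α] (μ : Measure α) {s ε : ℝ}
    (hs : 0 < s) (hε : 0 < ε) :
    ∃ C : ℝ≥0∞, C ≠ ⊤ ∧ ∀ (F : α → ℝ≥0∞) (a : ℕ → α → ℝ≥0∞), (∀ j, Measurable (a j)) →
      (∀ x, F x ≤ ∑' j, a j x) →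
        ∫⁻ x, F x ^ s ∂μ ≤ C * ∑' j : ℕ, (2 : ℝ≥0∞) ^ (ε * j) * ∫⁻ x, a j x ^ s ∂μ := by
  obtain ⟨C, hC, hsum⟩ := exists_tsum_rpow_le hs hε
  refine ⟨C, hC, fun F a ha hF => ?_⟩
  calc ∫⁻ x, F x ^ s ∂μ ≤ ∫⁻ x, C * ∑' j : ℕ, (2 : ℝ≥0∞) ^ (ε * j) * a j x ^ s ∂μ :=
        lintegral_mono fun x => (ENNReal.rpow_le_rpow (hF x) hs.le).trans (hsum _)
    _ = C * ∑' j : ℕ, (2 : ℝ≥0∞) ^ (ε * j) * ∫⁻ x, a j x ^ s ∂μ := by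
        rw [lintegral_const_mul' _ _ hC,
          lintegral_tsum fun j => (((ha j).pow_const s).const_mul _).aemeasurable]
        congr 1
        exact tsum_congr fun j => lintegral_const_mul _ ((ha j).pow_const s)

lemma exists_lintegral_rpow_le_of_geometric {α : Type*} [MeasurableSpace α] (μ : Measure α)
    {s δ : ℝ} (hs : 0 < s) (hδ : δ < 0) :
    ∃ C : ℝ≥0∞, C ≠ ⊤ ∧ ∀ (F : α → ℝ≥0∞) (a : ℕ → α → ℝ≥0∞) (B : ℝ≥0∞),
      (∀ j, Measurable (a j)) → (∀ x, F x ≤ ∑' j, a j x) →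
      (∀ j : ℕ, ∫⁻ x, a j x ^ s ∂μ ≤ 2 ^ (δ * j) * B) → ∫⁻ x, F x ^ s ∂μ ≤ C * B := by
  have hδ2 : δ / 2 < 0 := by linarith
  obtain ⟨C, hC, hsum⟩ := exists_lintegral_rpow_le_tsum μ hs (neg_pos.2 hδ2)
  refine ⟨C * (1 - 2 ^ (δ / 2))⁻¹, ENNReal.mul_ne_top hC (ENNReal.inv_ne_top.2 (tsub_pos_of_lt
    (ENNReal.rpow_lt_one_of_one_lt_of_neg (by norm_num) hδ2)).ne'), fun F a B ha hF hB => ?_⟩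
  have hweight (j : ℕ) : (2 : ℝ≥0∞) ^ (-(δ / 2) * j) * 2 ^ (δ * j) = (2 ^ (δ / 2)) ^ j := by
    rw [← ENNReal.rpow_add _ _ two_ne_zero (by norm_num), ← ENNReal.rpow_natCast,
      ← ENNReal.rpow_mul]
    ring_nf
  calc ∫⁻ x, F x ^ s ∂μ ≤ C * ∑' j : ℕ, (2 : ℝ≥0∞) ^ (-(δ / 2) * j) * (2 ^ (δ * j) * B) := by
        refine (hsum F a ha hF).trans ?_
        gcongr with j
        exact hB j
    _ = C * (1 - 2 ^ (δ / 2))⁻¹ * B := by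
        simp_rw [← mul_assoc, hweight, ENNReal.tsum_mul_right, ENNReal.tsum_geometric, mul_assoc]

lemma lintegral_comp_smul {ι : Type*} [Fintype ι] {c : ℝ} (hc : c ≠ 0) {G : (ι → ℝ) → ℝ≥0∞}
    (hG : Measurable G) :
    ∫⁻ r, G (c • r) = (‖c‖ₑ ^ Fintype.card ι)⁻¹ * ∫⁻ r, G r := by
  have hdiag := lintegral_comp_diagonal (fun _ : ι => hc) hG
  rwa [Finset.prod_const, enorm_pow] at hdiag

lemma lintegral_tsum_comp_smul_lt_top {ι : Type*} [Fintype ι] {G : (ι → ℝ) → ℝ≥0∞}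
    (hG : Measurable G) (hG_lt : ∫⁻ r, G r < ⊤) {a c : ℝ} (hc : c ≠ 0)
    (ha : a + Fintype.card ι < 0) :
    ∫⁻ r, ∑' j : ℕ, (2 : ℝ≥0∞) ^ (a * j) * G ((c * 2⁻¹ ^ j) • r) < ⊤ := by
  have hmeas (j : ℕ) : Measurable fun r : ι → ℝ => G ((c * 2⁻¹ ^ j) • r) :=
    hG.comp (measurable_const_smul _)
  have hterm (j : ℕ) : ∫⁻ r, (2 : ℝ≥0∞) ^ (a * j) * G ((c * 2⁻¹ ^ j) • r) =
      (‖c‖ₑ ^ Fintype.card ι)⁻¹ * (∫⁻ r, G r) * (2 ^ (a + Fintype.card ι)) ^ j := by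
    have htwo : ‖(2⁻¹ : ℝ)‖ₑ = 2⁻¹ := by
      rw [enorm_inv two_ne_zero, ← Nat.cast_ofNat, enorm_natCast, Nat.cast_ofNat]
    rw [lintegral_const_mul _ (hmeas j), lintegral_comp_smul (by positivity) hG, enorm_mul,
      enorm_pow, htwo, mul_pow, ENNReal.mul_inv (by simp [hc]) (by simp), ← pow_mul,
      ENNReal.inv_pow (a := 2⁻¹), inv_inv, ← ENNReal.rpow_natCast _ (j * _),
      ← ENNReal.rpow_natCast _ j, ← ENNReal.rpow_mul, add_mul,
      ENNReal.rpow_add _ _ two_ne_zero (by norm_num)]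
    push_cast
    ring_nf
  rw [lintegral_tsum fun j => ((hmeas j).const_mul _).aemeasurable]
  simp_rw [hterm]
  rw [ENNReal.tsum_mul_left, ENNReal.tsum_geometric]
  refine ENNReal.mul_lt_top (ENNReal.mul_lt_top (by simp [pos_iff_ne_zero, hc]) hG_lt) ?_
  rw [ENNReal.inv_lt_top]
  exact tsub_pos_of_lt (ENNReal.rpow_lt_one_of_one_lt_of_neg (by norm_num) ha)

/-- The points at which `g` takes a value in the dyadic interval `(2^(-j-1), 2^(-j)]`. -/
def dyadicLevel {α : Type*} (g : α → ℝ≥0∞) (j : ℕ) : Set α :=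
  {x | 2⁻¹ ^ (j + 1) < g x ∧ g x ≤ 2⁻¹ ^ j}

lemma measurableSet_dyadicLevel {α : Type*} [MeasurableSpace α] {g : α → ℝ≥0∞}
    (hg : Measurable g) (j : ℕ) : MeasurableSet (dyadicLevel g j) :=
  (measurableSet_lt measurable_const hg).inter (measurableSet_le hg measurable_const)

lemma exists_mem_dyadicLevel {α : Type*} {g : α → ℝ≥0∞} {x : α} (h0 : g x ≠ 0) (h1 : g x ≤ 1) :
    ∃ j, x ∈ dyadicLevel g j := by
  have hex : ∃ n : ℕ, 2⁻¹ ^ (n + 1) < g x := by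
    obtain ⟨n, hn⟩ := ENNReal.exists_inv_two_pow_lt h0
    exact ⟨n, (pow_le_pow_right_of_le_one' (by norm_num) n.le_succ).trans_lt hn⟩
  classical
  refine ⟨Nat.find hex, Nat.find_spec hex, ?_⟩
  rcases hj : Nat.find hex with _ | j
  · simpa using h1
  · exact not_lt.1 (Nat.find_min hex (hj ▸ j.lt_succ_self))

lemma pairwise_disjoint_dyadicLevel {α : Type*} (g : α → ℝ≥0∞) :
    Pairwise (Function.onFun Disjoint (dyadicLevel g)) := by
  refine (pairwise_disjoint_on _).2 fun i j hij => disjoint_left.2 fun x hi hj => ?_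
  exact (hi.1.trans_le hj.2).not_ge (pow_le_pow_right_of_le_one' (by norm_num) hij)

lemma lintegral_le_tsum_dyadicLevel {α : Type*} [MeasurableSpace α] {μ : Measure α}
    {g : α → ℝ≥0∞} (hg : Measurable g) (hg1 : ∀ x, g x ≤ 1) :
    ∫⁻ x, g x ∂μ ≤ ∑' j : ℕ, 2⁻¹ ^ j * μ (dyadicLevel g j) := by
  have hmeas (j : ℕ) := measurableSet_dyadicLevel hg j
  calc ∫⁻ x, g x ∂μ ≤ ∫⁻ x, ∑' j : ℕ, (dyadicLevel g j).indicator (fun _ => 2⁻¹ ^ j) x ∂μ := by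
        refine lintegral_mono fun x => ?_
        rcases eq_or_ne (g x) 0 with h0 | h0
        · simp [h0]
        obtain ⟨j, hj⟩ := exists_mem_dyadicLevel h0 (hg1 x)
        refine le_trans ?_ (ENNReal.le_tsum j)
        rw [indicator_of_mem hj]
        exact hj.2
    _ = ∑' j : ℕ, 2⁻¹ ^ j * μ (dyadicLevel g j) := by
        rw [lintegral_tsum fun j => (measurable_const.indicator (hmeas j)).aemeasurable]
        exact tsum_congr fun j => lintegral_indicator_const (hmeas j) _

lemma measure_le_two_pow_mul_setLIntegral {α : Type*} [MeasurableSpace α] {μ : Measure α}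
    {X : Set α} (hX : MeasurableSet X) {F : α → ℝ≥0∞} {n : ℕ} (hF : ∀ x ∈ X, 2⁻¹ ^ n ≤ F x) :
    μ X ≤ 2 ^ n * ∫⁻ x in X, F x ∂μ :=
  calc μ X = 2 ^ n * (2⁻¹ ^ n * μ X) := by
        rw [← mul_assoc, ← mul_pow, ENNReal.mul_inv_cancel two_ne_zero (by norm_num), one_pow,
          one_mul]
    _ ≤ 2 ^ n * ∫⁻ x in X, F x ∂μ := by
        rw [← setLIntegral_const]
        exact mul_le_mul_right (setLIntegral_mono' hX hF) _

lemma inv_two_pow_succ_le_of_le_add {A : ℝ≥0∞} {n : ℕ} (h : 2⁻¹ ^ n ≤ A + 2⁻¹ ^ (n + 1)) :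
    2⁻¹ ^ (n + 1) ≤ A := by
  have hhalf : (2⁻¹ : ℝ≥0∞) ^ n = 2⁻¹ ^ (n + 1) + 2⁻¹ ^ (n + 1) := by
    rw [pow_succ, ← mul_add, ENNReal.inv_two_add_inv_two, mul_one]
  rw [hhalf] at h
  exact (ENNReal.add_le_add_iff_right (by finiteness)).1 h

lemma exists_lintegral_rpow_le_tsum_dyadic {α : Type*} [MeasurableSpace α] (μ : Measure α)
    {e N η : ℝ} (he : 0 ≤ e) (hN : 0 ≤ N) (hη : 0 < η) {B : ℝ≥0∞} (hB : B ≠ ⊤) :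
    ∃ C : ℝ≥0∞, C ≠ ⊤ ∧ ∀ (F : α → ℝ≥0∞) (a : ℕ → α → ℝ≥0∞) (W : ℕ → ℝ≥0∞),
      (∀ j, Measurable (a j)) → (∀ x, F x ≤ ∑' j, a j x) →
      (∀ j, ∫⁻ x, a j x ^ (e + N + 2 * η) ∂μ ≤
        B * ((2⁻¹ ^ j) ^ (e + N + 2 * η) * (2 ^ (j + 3) * W j) ^ e)) →
        ∫⁻ x, F x ^ (e + N + 2 * η) ∂μ ≤
          C * ∑' j : ℕ, (2 : ℝ≥0∞) ^ (-(N + η) * j) * W j ^ e := by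
  obtain ⟨C, hC, hsum⟩ :=
    exists_lintegral_rpow_le_tsum μ (s := e + N + 2 * η) (ε := η) (by positivity) hη
  refine ⟨C * (B * 8 ^ e), ENNReal.mul_ne_top hC
    (ENNReal.mul_ne_top hB (ENNReal.rpow_ne_top_of_nonneg he (by norm_num))),
    fun F a W ha hF hpiece => ?_⟩
  have hpow (j : ℕ) : (2 : ℝ≥0∞) ^ (η * j) * ((2⁻¹ ^ j) ^ (e + N + 2 * η) *
      (2 ^ (j + 3) * W j) ^ e) = 8 ^ e * (2 ^ (-(N + η) * j) * W j ^ e) := by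
    have height : ((2⁻¹ : ℝ≥0∞) ^ j) ^ (e + N + 2 * η) = 2 ^ (-(e + N + 2 * η) * j) := by
      rw [← ENNReal.inv_pow, ← ENNReal.rpow_natCast, ← ENNReal.rpow_neg, ← ENNReal.rpow_mul]
      ring_nf
    have hloss : ((2 : ℝ≥0∞) ^ (j + 3)) ^ e = 8 ^ e * 2 ^ (e * j) := by
      rw [pow_add, ENNReal.mul_rpow_of_nonneg _ _ he, ← ENNReal.rpow_natCast _ j,
        ← ENNReal.rpow_mul, mul_comm, mul_comm e]
      norm_num
    rw [ENNReal.mul_rpow_of_nonneg _ _ he, height, hloss]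
    calc (2 : ℝ≥0∞) ^ (η * j) * (2 ^ (-(e + N + 2 * η) * j) * (8 ^ e * 2 ^ (e * j) * W j ^ e))
        = 8 ^ e * ((2 ^ (η * j) * 2 ^ (-(e + N + 2 * η) * j) * 2 ^ (e * j)) * W j ^ e) := by ring
      _ = 8 ^ e * (2 ^ (-(N + η) * j) * W j ^ e) := by
          rw [← ENNReal.rpow_add _ _ two_ne_zero (by norm_num),
            ← ENNReal.rpow_add _ _ two_ne_zero (by norm_num)]
          ring_nf
  calc ∫⁻ x, F x ^ (e + N + 2 * η) ∂μ
      ≤ C * ∑' j : ℕ, (2 : ℝ≥0∞) ^ (η * j) *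
          (B * ((2⁻¹ ^ j) ^ (e + N + 2 * η) * (2 ^ (j + 3) * W j) ^ e)) := by
        refine (hsum F a ha hF).trans ?_
        gcongr with j
        exact hpiece j
    _ = C * (B * 8 ^ e) * ∑' j : ℕ, (2 : ℝ≥0∞) ^ (-(N + η) * j) * W j ^ e := by
        simp_rw [mul_left_comm _ B, hpow, ENNReal.tsum_mul_left]
        ring

lemma one_le_two_mul_cauchyWeight_add_abs (t : ℝ) : 1 ≤ 2 * cauchyWeight t + |t| := by
  have hpos := cauchyWeight_pos t
  rcases le_total 1 |t| with h1 | h1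
  · linarith
  · have hhalf : (1 / 2 : ℝ) ≤ cauchyWeight t := by
      rw [cauchyWeight, one_div]
      exact inv_anti₀ (by positivity) (by linarith [(sq_le_one_iff_abs_le_one t).2 h1])
    linarith [abs_nonneg t]

lemma setLIntegral_cauchyWeight_polynomial_le (q : Polynomial ℝ) (a b : ℝ) {h : ℝ} (hh : 0 < h) :
    ∫⁻ y in Icc a b, ENNReal.ofReal (cauchyWeight (q.eval y)) ≤
      2 * (∫⁻ y in Icc a b, ENNReal.ofReal (cauchyWeight (q.eval y)) *
        ENNReal.ofReal (cauchyWeight (h * q.derivative.eval y))) +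
      ENNReal.ofReal ((q.natDegree + 1) * π * h) := by
  have hweight (p : Polynomial ℝ) : Measurable fun y => ENNReal.ofReal (cauchyWeight (p.eval y)) :=
    measurable_ofReal_cauchyWeight p.continuous.measurable
  have hweight' : Measurable fun y => ENNReal.ofReal (cauchyWeight (h * q.derivative.eval y)) :=
    measurable_ofReal_cauchyWeight (by fun_prop)
  have hmul := (hweight q).fun_mul hweight'
  calc ∫⁻ y in Icc a b, ENNReal.ofReal (cauchyWeight (q.eval y))
      ≤ ∫⁻ y in Icc a b, (2 * (ENNReal.ofReal (cauchyWeight (q.eval y)) *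
          ENNReal.ofReal (cauchyWeight (h * q.derivative.eval y))) +
          ENNReal.ofReal h * (ENNReal.ofReal |q.derivative.eval y| *
            ENNReal.ofReal (cauchyWeight (q.eval y)))) := by
        refine lintegral_mono fun y => ?_
        have hw := (cauchyWeight_pos (q.eval y)).le
        have hw' := (cauchyWeight_pos (h * q.derivative.eval y)).le
        have hone := one_le_two_mul_cauchyWeight_add_abs (h * q.derivative.eval y)
        rw [abs_mul, abs_of_pos hh] at hone
        rw [← ENNReal.ofReal_mul hw, ← ENNReal.ofReal_mul (abs_nonneg _),
          ← ENNReal.ofReal_mul hh.le, ← ENNReal.ofReal_ofNat 2, ← ENNReal.ofReal_mul (by norm_num),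
          ← ENNReal.ofReal_add (by positivity) (by positivity)]
        exact ENNReal.ofReal_le_ofReal (by nlinarith)
    _ ≤ _ := by
        rw [lintegral_add_left (hmul.const_mul _), lintegral_const_mul _ hmul,
          lintegral_const_mul' _ _ ENNReal.ofReal_ne_top]
        gcongr
        refine (mul_le_mul_right
          (setLIntegral_abs_derivative_mul_cauchyWeight_le q a b) _).trans_eq ?_
        rw [← ENNReal.ofReal_natCast, ← ENNReal.ofReal_one,
          ← ENNReal.ofReal_add (by positivity) zero_le_one, ← ENNReal.ofReal_mul (by positivity),
          ← ENNReal.ofReal_mul hh.le, mul_comm h]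

/-- The scale `c_m`, chosen so that in both uses of the derivative as a new phase, at the dyadic
height `2^(-j)` the error term is at most half of the main term. -/
def derivScale (m : ℕ) : ℝ := (4 * (1 + (m + 2) * π))⁻¹

lemma derivScale_pos (m : ℕ) : 0 < derivScale m := by
  unfold derivScale
  positivity

lemma ofReal_mul_derivScale_le {m : ℕ} {d : ℝ} (hd : d ≤ 1 + (m + 2) * π) (j : ℕ) :
    ENNReal.ofReal (d * (derivScale m * 2⁻¹ ^ j)) ≤ 2⁻¹ ^ (j + 2) := by
  have hscale : d * (derivScale m * 2⁻¹ ^ j) ≤ 2⁻¹ ^ (j + 2) := by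
    have : 0 < 1 + (m + 2) * π := by positivity
    calc d * (derivScale m * 2⁻¹ ^ j)
        ≤ (1 + (m + 2) * π) * (derivScale m * 2⁻¹ ^ j) := by
          gcongr
          exact mul_nonneg (derivScale_pos m).le (by positivity)
      _ = 2⁻¹ ^ (j + 2) := by
          rw [derivScale, pow_add]
          field_simp
          norm_num
  refine (ENNReal.ofReal_le_ofReal hscale).trans_eq ?_
  rw [ENNReal.ofReal_pow (by positivity), ENNReal.ofReal_inv_of_pos two_pos, ENNReal.ofReal_ofNat]

/-- The mean of `cauchyWeight` along the polynomial `t + triPrim m r x`. -/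
def fiberMean (m : ℕ) (r : triangle m → ℝ) (x t : ℝ) : ℝ≥0∞ :=
  ∫⁻ y in Icc (0 : ℝ) 1, ENNReal.ofReal (cauchyWeight (t + (triPrim m r x).eval y))

lemma fiberMean_le_one (m : ℕ) (r : triangle m → ℝ) (x t : ℝ) : fiberMean m r x t ≤ 1 :=
  setLIntegral_Icc_le_one fun _ => by simpa using cauchyWeight_le_one _

lemma measurable_fiberMean (m : ℕ) (r : triangle m → ℝ) :
    Measurable fun q : ℝ × ℝ => fiberMean m r q.1 q.2 := by
  have hcont : Continuous fun q : (ℝ × ℝ) × ℝ => q.1.2 + (triPrim m r q.1.1).eval q.2 := by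
    fun_prop
  exact (measurable_ofReal_cauchyWeight hcont.measurable).lintegral_prod_right'

/-- The mean in `fiberMean` with a further weight that localises to where the derivative
`triPoly m r x` of the phase is at most `h⁻¹`. -/
def fiberMeanSmallDeriv (m : ℕ) (r : triangle m → ℝ) (h x t : ℝ) : ℝ≥0∞ :=
  ∫⁻ y in Icc (0 : ℝ) 1, ENNReal.ofReal (cauchyWeight (t + (triPrim m r x).eval y)) *
    ENNReal.ofReal (cauchyWeight ((triPoly m (h • r) x).eval y))

/-- The parameters `(x, t)`, with `x` in the unit interval, at which `fiberMean` has size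
`2^(-j)`. -/
def fiberLevel (m : ℕ) (r : triangle m → ℝ) (j : ℕ) : Set (ℝ × ℝ) :=
  (Icc 0 1 ×ˢ univ) ∩ dyadicLevel (fun q => fiberMean m r q.1 q.2) j

lemma measurableSet_fiberLevel (m : ℕ) (r : triangle m → ℝ) (j : ℕ) :
    MeasurableSet (fiberLevel m r j) :=
  (measurableSet_Icc.prod MeasurableSet.univ).inter
    (measurableSet_dyadicLevel (measurable_fiberMean m r) j)

lemma inv_two_pow_le_fiberMeanSmallDeriv {m : ℕ} {r : triangle m → ℝ} {j : ℕ} {x t : ℝ}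
    (hxt : (x, t) ∈ fiberLevel m r j) :
    2⁻¹ ^ (j + 3) ≤ fiberMeanSmallDeriv m r (derivScale m * 2⁻¹ ^ j) x t := by
  set h := derivScale m * 2⁻¹ ^ j
  have hh : 0 < h := mul_pos (derivScale_pos m) (by positivity)
  set q := Polynomial.C t + triPrim m r x with hq
  have hdeg : q.natDegree ≤ m + 1 :=
    (Polynomial.natDegree_add_le _ _).trans (max_le (by simp) (natDegree_triPrim_le m r x))
  have hdeg' : ((q.natDegree : ℝ) + 1) * π ≤ 1 + (m + 2) * π := by
    have : (q.natDegree : ℝ) ≤ m + 1 := mod_cast hdeg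
    nlinarith [pi_pos]
  have hsplit := setLIntegral_cauchyWeight_polynomial_le q 0 1 hh
  simp only [hq, Polynomial.eval_add, Polynomial.eval_C, Polynomial.derivative_add,
    Polynomial.derivative_C, zero_add, derivative_triPrim, ← eval_triPoly_smul] at hsplit
  have hmain : 2⁻¹ ^ (j + 2) ≤ 2 * fiberMeanSmallDeriv m r h x t :=
    inv_two_pow_succ_le_of_le_add (hxt.2.1.le.trans
      (hsplit.trans (add_le_add_right (ofReal_mul_derivScale_le hdeg' j) _)))
  calc (2⁻¹ : ℝ≥0∞) ^ (j + 3) = 2⁻¹ * 2⁻¹ ^ (j + 2) := pow_succ' _ _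
    _ ≤ 2⁻¹ * (2 * fiberMeanSmallDeriv m r h x t) := by gcongr
    _ = fiberMeanSmallDeriv m r h x t := by
        rw [← mul_assoc, ENNReal.inv_mul_cancel two_ne_zero (by norm_num), one_mul]

lemma lintegral_fiberMeanSmallDeriv (m : ℕ) (r : triangle m → ℝ) (h x : ℝ) :
    ∫⁻ t, fiberMeanSmallDeriv m r h x t = ENNReal.ofReal π *
      ∫⁻ y in Icc (0 : ℝ) 1, ENNReal.ofReal (cauchyWeight ((triPoly m (h • r) x).eval y)) := by
  have hcont : Continuous fun q : ℝ × ℝ => q.1 + (triPrim m r x).eval q.2 := by fun_prop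
  have hcont' : Continuous fun q : ℝ × ℝ => (triPoly m (h • r) x).eval q.2 := by fun_prop
  unfold fiberMeanSmallDeriv
  rw [lintegral_lintegral_swap
    ((measurable_ofReal_cauchyWeight hcont.measurable).fun_mul
      (measurable_ofReal_cauchyWeight hcont'.measurable)).aemeasurable,
    ← lintegral_const_mul' _ _ ENNReal.ofReal_ne_top]
  refine lintegral_congr fun y => ?_
  rw [lintegral_mul_const' _ _ ENNReal.ofReal_ne_top,
    lintegral_add_right_eq_self fun t => ENNReal.ofReal (cauchyWeight t), lintegral_cauchyWeight]

lemma fiberMeanSmallDeriv_le (m : ℕ) (r : triangle m → ℝ) (h x t : ℝ) :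
    fiberMeanSmallDeriv m r h x t ≤
      ∫⁻ y in Icc (0 : ℝ) 1, ENNReal.ofReal (cauchyWeight ((triPoly m (h • r) x).eval y)) :=
  lintegral_mono fun _ =>
    mul_le_of_le_one_left' (ENNReal.ofReal_le_one.2 (cauchyWeight_le_one _))

lemma measurable_fiberMeanSmallDeriv (m : ℕ) (r : triangle m → ℝ) (h : ℝ) :
    Measurable fun q : ℝ × ℝ => fiberMeanSmallDeriv m r h q.1 q.2 := by
  have hcont : Continuous fun q : (ℝ × ℝ) × ℝ => q.1.2 + (triPrim m r q.1.1).eval q.2 := by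
    fun_prop
  have hcont' : Continuous fun q : (ℝ × ℝ) × ℝ => (triPoly m (h • r) q.1.1).eval q.2 :=
    continuous_triPoly_eval m continuous_const (by fun_prop) continuous_snd
  exact ((measurable_ofReal_cauchyWeight hcont.measurable).fun_mul
    (measurable_ofReal_cauchyWeight hcont'.measurable)).lintegral_prod_right'

lemma volume_fiberLevel_le (m : ℕ) (r : triangle m → ℝ) (j : ℕ) :
    volume (fiberLevel m r j) ≤
      ENNReal.ofReal π * (2 ^ (j + 3) * weightMean m ((derivScale m * 2⁻¹ ^ j) • r)) := by
  set h := derivScale m * 2⁻¹ ^ j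
  calc volume (fiberLevel m r j)
      ≤ 2 ^ (j + 3) * ∫⁻ q in fiberLevel m r j, fiberMeanSmallDeriv m r h q.1 q.2 :=
        measure_le_two_pow_mul_setLIntegral (measurableSet_fiberLevel m r j)
          fun _ hq => inv_two_pow_le_fiberMeanSmallDeriv hq
    _ ≤ 2 ^ (j + 3) * ∫⁻ q in Icc 0 1 ×ˢ univ, fiberMeanSmallDeriv m r h q.1 q.2 := by
        gcongr
        exact inter_subset_left
    _ = 2 ^ (j + 3) * ∫⁻ x in Icc (0 : ℝ) 1, ∫⁻ t, fiberMeanSmallDeriv m r h x t := by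
        rw [Measure.volume_eq_prod, ← Measure.prod_restrict, Measure.restrict_univ,
          lintegral_prod _ (measurable_fiberMeanSmallDeriv m r h).aemeasurable]
    _ = ENNReal.ofReal π * (2 ^ (j + 3) * weightMean m (h • r)) := by
        simp_rw [lintegral_fiberMeanSmallDeriv]
        rw [lintegral_const_mul' _ _ ENNReal.ofReal_ne_top, mul_left_comm, weightMean]

lemma volume_section_fiberLevel_le (m : ℕ) (r : triangle m → ℝ) (j : ℕ) {g : ℝ → ℝ}
    (hg : Measurable g) :
    volume {x | (x, g x) ∈ fiberLevel m r j} ≤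
      2 ^ (j + 3) * weightMean m ((derivScale m * 2⁻¹ ^ j) • r) := by
  have hX : MeasurableSet {x | (x, g x) ∈ fiberLevel m r j} :=
    (measurable_id.prodMk hg) (measurableSet_fiberLevel m r j)
  refine (measure_le_two_pow_mul_setLIntegral hX fun x hx =>
    (inv_two_pow_le_fiberMeanSmallDeriv hx).trans (fiberMeanSmallDeriv_le _ _ _ _ _)).trans ?_
  rw [weightMean]
  gcongr
  exact fun x hx => hx.1.1

lemma exists_lintegral_volume_section_fiberLevel_le (m : ℕ) {s : ℝ}
    (hs : ((m + 3).choose 2 : ℝ) ≤ s) :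
    ∃ C : ℝ≥0∞, C ≠ ⊤ ∧ ∀ (r : triangle m → ℝ) (j : ℕ),
      ∫⁻ f : Fin (m + 2) → ℝ, volume {x | (x, ∑ i, f i * x ^ (i : ℕ)) ∈ fiberLevel m r j} ^ s ≤
        C * (2 ^ (j + 3) * weightMean m ((derivScale m * 2⁻¹ ^ j) • r)) ^
          (s - (m + 2).choose 2) := by
  obtain ⟨C, hC, hgraph⟩ := exists_lintegral_volume_graph_pow_le (m + 2)
  refine ⟨C * ENNReal.ofReal π ^ (m + 2), by finiteness, fun r j => ?_⟩
  set W := 2 ^ (j + 3) * weightMean m ((derivScale m * 2⁻¹ ^ j) • r)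
  have hW : W ≠ ⊤ := ENNReal.mul_ne_top (by finiteness)
    (ne_top_of_le_ne_top ENNReal.one_ne_top (weightMean_le_one _ _))
  have hs' : 0 ≤ s - (m + 3).choose 2 := sub_nonneg.2 hs
  have hchoose : ((m + 3).choose 2 : ℝ) = (m + 2).choose 2 + (m + 2) := by
    exact_mod_cast (by rw [Nat.choose_succ_succ' (m + 2) 1, Nat.choose_one_right, add_comm])
  let V (f : Fin (m + 2) → ℝ) := volume {x | (x, ∑ i, f i * x ^ (i : ℕ)) ∈ fiberLevel m r j}
  have hV (f : Fin (m + 2) → ℝ) : V f ≤ W :=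
    volume_section_fiberLevel_le m r j (by fun_prop)
  calc ∫⁻ f, V f ^ s
      ≤ ∫⁻ f, V f ^ (m + 3).choose 2 * W ^ (s - (m + 3).choose 2) := by
        refine lintegral_mono fun f => ?_
        rw [← ENNReal.rpow_natCast, ← add_sub_cancel ((m + 3).choose 2 : ℝ) s,
          ENNReal.rpow_add_of_nonneg _ _ (Nat.cast_nonneg _) hs', add_sub_cancel_left]
        gcongr
        exact hV f
    _ = (∫⁻ f, V f ^ (m + 3).choose 2) * W ^ (s - (m + 3).choose 2) :=
        lintegral_mul_const' _ _ (ENNReal.rpow_ne_top_of_nonneg hs' hW)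
    _ ≤ C * volume (fiberLevel m r j) ^ (m + 2) * W ^ (s - (m + 3).choose 2) := by
        gcongr
        exact hgraph _ (measurableSet_fiberLevel m r j) inter_subset_left
    _ ≤ C * (ENNReal.ofReal π * W) ^ (m + 2) * W ^ (s - (m + 3).choose 2) := by
        gcongr
        exact volume_fiberLevel_le m r j
    _ = C * ENNReal.ofReal π ^ (m + 2) * W ^ (s - (m + 2).choose 2) := by
        rw [mul_pow, ← mul_assoc, mul_assoc, ← ENNReal.rpow_natCast W,
          ← ENNReal.rpow_add_of_nonneg _ _ (by positivity) hs']
        congr 2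
        push_cast
        linarith

lemma weightMean_succ (m : ℕ) (f : Fin (m + 2) → ℝ) (r : triangle m → ℝ) :
    weightMean (m + 1) (fun p => Sum.elim f r (triangleEquiv m p)) =
      ∫⁻ x in Icc (0 : ℝ) 1, fiberMean m r x (∑ i, f i * x ^ (i : ℕ)) := by
  unfold weightMean fiberMean
  simp_rw [triPoly_succ, Polynomial.eval_add, Polynomial.eval_C]

lemma weightMean_succ_le_tsum (m : ℕ) (f : Fin (m + 2) → ℝ) (r : triangle m → ℝ) :
    weightMean (m + 1) (fun p => Sum.elim f r (triangleEquiv m p)) ≤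
      ∑' j : ℕ, 2⁻¹ ^ j * volume {x | (x, ∑ i, f i * x ^ (i : ℕ)) ∈ fiberLevel m r j} := by
  have hgraph : Measurable fun x : ℝ => (x, ∑ i, f i * x ^ (i : ℕ)) := by fun_prop
  have hmean := (measurable_fiberMean m r).comp hgraph
  rw [weightMean_succ]
  refine (lintegral_le_tsum_dyadicLevel hmean fun x => fiberMean_le_one m r _ _).trans_eq ?_
  refine tsum_congr fun j => ?_
  rw [Measure.restrict_apply (measurableSet_dyadicLevel hmean j)]
  congr 2
  ext x
  simp [fiberLevel, dyadicLevel, and_comm]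

lemma measurable_volume_section_fiberLevel (m : ℕ) (r : triangle m → ℝ) (j : ℕ) :
    Measurable fun f : Fin (m + 2) → ℝ =>
      volume {x | (x, ∑ i, f i * x ^ (i : ℕ)) ∈ fiberLevel m r j} := by
  have hgraph : Continuous fun q : (Fin (m + 2) → ℝ) × ℝ => (q.2, ∑ i, q.1 i * q.2 ^ (i : ℕ)) := by
    fun_prop
  exact measurable_measure_prodMk_left (hgraph.measurable (measurableSet_fiberLevel m r j))

/-- The critical exponent `m (m + 1) (m + 2) / 6 + 2`, as a natural number. -/
def critExponent (m : ℕ) : ℕ := (m + 2).choose 3 + 2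

lemma critExponent_succ (m : ℕ) : critExponent (m + 1) = critExponent m + (m + 2).choose 2 := by
  rw [critExponent, critExponent, Nat.choose_succ_succ' (m + 2) 2]
  ring

lemma cast_critExponent (m : ℕ) : (critExponent m : ℝ) = m * (m + 1) * (m + 2) / 6 + 2 := by
  induction m with
  | zero => simp [critExponent]
  | succ m ih =>
    rw [critExponent_succ, Nat.cast_add, ih, Nat.cast_choose_two]
    push_cast
    ring

lemma choose_two_le_critExponent_succ (m : ℕ) : (m + 3).choose 2 ≤ critExponent (m + 1) := by
  have hchoose : m ≤ (m + 2).choose 3 := by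
    induction m with
    | zero => exact Nat.zero_le _
    | succ m ih =>
      have hpos := Nat.choose_pos (show 2 ≤ m + 2 by omega)
      have hpascal : (m + 1 + 2).choose 3 = (m + 2).choose 2 + (m + 2).choose 3 := rfl
      omega
  have hpascal : (m + 3).choose 2 = (m + 2).choose 1 + (m + 2).choose 2 := rfl
  rw [Nat.choose_one_right] at hpascal
  rw [critExponent_succ, critExponent]
  omega

lemma exists_lintegral_weightMean_succ_rpow_le (m : ℕ) {e η : ℝ} (he : critExponent m ≤ e)
    (hη : 0 < η) :
    ∃ C : ℝ≥0∞, C ≠ ⊤ ∧ ∀ r : triangle m → ℝ,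
      ∫⁻ f, weightMean (m + 1) (fun p => Sum.elim f r (triangleEquiv m p)) ^
          (e + (m + 2).choose 2 + 2 * η) ≤
        C * ∑' j : ℕ, (2 : ℝ≥0∞) ^ (-((m + 2).choose 2 + η) * j) *
          weightMean m ((derivScale m * 2⁻¹ ^ j) • r) ^ e := by
  have he0 : 0 ≤ e := (Nat.cast_nonneg _).trans he
  have hs : ((m + 3).choose 2 : ℝ) ≤ e + (m + 2).choose 2 := by
    calc ((m + 3).choose 2 : ℝ) ≤ critExponent (m + 1) := mod_cast choose_two_le_critExponent_succ m
      _ ≤ e + (m + 2).choose 2 := by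
        rw [critExponent_succ]
        push_cast
        gcongr
  obtain ⟨B, hB, hsection⟩ := exists_lintegral_volume_section_fiberLevel_le m hs
  obtain ⟨C, hC, hdyadic⟩ := exists_lintegral_rpow_le_tsum_dyadic
    (volume : Measure (Fin (m + 2) → ℝ)) he0 (Nat.cast_nonneg ((m + 2).choose 2)) hη hB
  refine ⟨C, hC, fun r => hdyadic _
    (fun j f => 2⁻¹ ^ j * volume {x | (x, ∑ i, f i * x ^ (i : ℕ)) ∈ fiberLevel m r j})
    (fun j => weightMean m ((derivScale m * 2⁻¹ ^ j) • r))
    (fun j => (measurable_volume_section_fiberLevel m r j).const_mul _)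
    (fun f => weightMean_succ_le_tsum m f r) fun j => ?_⟩
  have hvol (f : Fin (m + 2) → ℝ) :
      volume {x | (x, ∑ i, f i * x ^ (i : ℕ)) ∈ fiberLevel m r j} ≤ 1 := by
    refine (measure_mono (fun x hx => hx.1.1 : _ ⊆ Icc (0 : ℝ) 1)).trans ?_
    simp
  simp_rw [ENNReal.mul_rpow_of_nonneg _ _ (show 0 ≤ e + (m + 2).choose 2 + 2 * η by positivity)]
  rw [lintegral_const_mul' _ _ (by finiteness), mul_left_comm]
  gcongr
  refine (lintegral_mono fun f =>
    ENNReal.rpow_le_rpow_of_exponent_ge (hvol f) ?_).trans ((hsection r j).trans_eq ?_)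
  · linarith
  · rw [add_sub_cancel_right]

lemma lintegral_weightMean_zero_lt_top {s : ℝ} (hs : 1 ≤ s) :
    ∫⁻ r, weightMean 0 r ^ s < ⊤ := by
  let origin : triangle 0 := ⟨(0, 0), mem_triangle.2 le_rfl⟩
  have hunique (p : triangle 0) : p = origin := by
    have := mem_triangle.1 p.2
    exact Subtype.ext (Prod.ext (by simp only [origin]; omega) (by simp only [origin]; omega))
  let _ : Unique (triangle 0) := ⟨⟨origin⟩, hunique⟩
  have heval (r : triangle 0 → ℝ) (x y : ℝ) : (triPoly 0 r x).eval y = r origin := by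
    rw [eval_triPoly, Fintype.sum_unique]
    change r origin * x ^ 0 / (Nat.factorial 0 : ℝ) * y ^ 0 = r origin
    simp
  calc ∫⁻ r, weightMean 0 r ^ s ≤ ∫⁻ r : triangle 0 → ℝ, ENNReal.ofReal (cauchyWeight (r origin)) :=
        lintegral_mono fun r => by
          refine (ENNReal.rpow_le_self_of_le_one (weightMean_le_one _ _) hs).trans_eq ?_
          simp [weightMean, heval]
    _ = ∫⁻ t, ENNReal.ofReal (cauchyWeight t) :=
        (volume_preserving_funUnique (triangle 0) ℝ).lintegral_comp
          (measurable_ofReal_cauchyWeight measurable_id)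
    _ < ⊤ := by
        rw [lintegral_cauchyWeight]
        exact ENNReal.ofReal_lt_top

lemma lintegral_tsum_weightMean_lt_top {m : ℕ} {e η : ℝ} (hη : 0 < η)
    (hfin : ∫⁻ r, weightMean m r ^ e < ⊤) :
    ∫⁻ r : triangle m → ℝ, ∑' j : ℕ, (2 : ℝ≥0∞) ^ (-((m + 2).choose 2 + η) * j) *
      weightMean m ((derivScale m * 2⁻¹ ^ j) • r) ^ e < ⊤ :=
  lintegral_tsum_comp_smul_lt_top ((measurable_weightMean m).pow_const e) hfin
    (derivScale_pos m).ne' (by rw [card_triangle]; linarith)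

lemma lintegral_weightMean_rpow_lt_top (m : ℕ) {s : ℝ} (hs : critExponent m < s) :
    ∫⁻ r, weightMean m r ^ s < ⊤ := by
  induction m generalizing s with
  | zero => exact lintegral_weightMean_zero_lt_top (le_trans (by simp [critExponent]) hs.le)
  | succ m ih =>
    obtain ⟨η, hη, rfl⟩ : ∃ η > 0, critExponent m + η + (m + 2).choose 2 + 2 * η = s := by
      refine ⟨(s - critExponent (m + 1)) / 3, div_pos (sub_pos.2 hs) three_pos, ?_⟩
      rw [critExponent_succ]
      push_cast
      ring
    obtain ⟨C, hC, hbound⟩ :=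
      exists_lintegral_weightMean_succ_rpow_le m (e := critExponent m + η) (by linarith) hη
    rw [lintegral_pi_split (triangleEquiv m) ((measurable_weightMean _).pow_const _)]
    refine (lintegral_mono hbound).trans_lt ?_
    rw [lintegral_const_mul' _ _ hC]
    exact ENNReal.mul_lt_top hC.lt_top
      (lintegral_tsum_weightMean_lt_top hη (ih (lt_add_of_pos_right _ hη)))

section Plancherel

variable {V : Type*} [NormedAddCommGroup V] [InnerProductSpace ℝ V] [FiniteDimensional ℝ V]
  [MeasurableSpace V] [BorelSpace V]

lemma fourier_toLp_ae_eq {f : V → ℂ} (hf : Integrable f) (hf₂ : MemLp f 2) :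
    (𝓕 (hf₂.toLp f) : Lp ℂ 2 (volume : Measure V)) =ᵐ[volume] 𝓕 f := by
  have hcont : Continuous (𝓕 f) :=
    VectorFourier.fourierIntegral_continuous continuous_fourierChar continuous_inner hf
  refine ae_eq_of_integral_contDiff_smul_eq
    ((Lp.memLp _).locallyIntegrable one_le_two) hcont.locallyIntegrable fun g hg hgc => ?_
  have hφc : HasCompactSupport fun x => (g x : ℂ) := hgc.comp_left Complex.ofReal_zero
  let φ : SchwartzMap V ℂ := hφc.toSchwartzMap (Complex.ofRealCLM.contDiff.comp hg)
  have hφ (h : V → ℂ) (x : V) : g x • h x = φ x • h x := (Complex.coe_smul (g x) (h x)).symm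
  have hflip : ∫ x, (𝓕 φ) x • f x = ∫ x, φ x • (𝓕 f) x := by
    simpa using! VectorFourier.integral_fourierIntegral_smul_eq_flip (L := innerₗ V)
      continuous_fourierChar continuous_inner φ.integrable hf
  calc ∫ x, g x • (𝓕 (hf₂.toLp f) : Lp ℂ 2 (volume : Measure V)) x
      = ∫ x, φ x • (𝓕 (hf₂.toLp f) : Lp ℂ 2 (volume : Measure V)) x := by simp_rw [hφ]
    _ = ∫ x, (𝓕 φ) x • hf₂.toLp f x := by
        rw [← Lp.toTemperedDistribution_apply, ← Lp.fourier_toTemperedDistribution_eq,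
          TemperedDistribution.fourier_apply, Lp.toTemperedDistribution_apply]
    _ = ∫ x, (𝓕 φ) x • f x :=
        integral_congr_ae (hf₂.coeFn_toLp.mono fun x hx => congrArg ((𝓕 φ) x • ·) hx)
    _ = _ := hflip.trans (integral_congr_ae (.of_forall fun x => (hφ _ x).symm))

lemma eLpNorm_fourier_eq {f : V → ℂ} (hf : Integrable f) (hf₂ : MemLp f 2) :
    eLpNorm (𝓕 f) 2 = eLpNorm f 2 := by
  rw [← eLpNorm_congr_ae (fourier_toLp_ae_eq hf hf₂), ← Lp.enorm_def, ← ofReal_norm,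
    Lp.norm_fourier_eq, ofReal_norm, Lp.enorm_def, eLpNorm_congr_ae hf₂.coeFn_toLp]

lemma lintegral_enorm_integral_mul_fourierChar_sq_le {ι : Type*} [Fintype ι] {F : (ι → ℝ) → ℂ}
    (hF : Integrable F) :
    ∫⁻ f : ι → ℝ, ‖∫ w, F w * 𝐞 (∑ i, f i * w i)‖ₑ ^ 2 ≤ ∫⁻ w, ‖F w‖ₑ ^ 2 := by
  rcases eq_or_ne (∫⁻ w, ‖F w‖ₑ ^ 2) ⊤ with htop | htop
  · exact le_of_le_of_eq le_top htop.symm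
  have hpres := EuclideanSpace.volume_preserving_symm_measurableEquiv_toLp ι
  have hF₂ : MemLp F 2 := ⟨hF.aestronglyMeasurable, by
    rw [eLpNorm_lt_top_iff_lintegral_rpow_enorm_lt_top two_ne_zero ENNReal.ofNat_ne_top]
    simpa using htop.lt_top⟩
  let F' : EuclideanSpace ℝ ι → ℂ := fun v => F v.ofLp
  have hF' : Integrable F' := hpres.integrable_comp_of_integrable hF
  have hF'₂ : MemLp F' 2 := hF₂.comp_measurePreserving hpres
  have hfourier (v : EuclideanSpace ℝ ι) :
      𝓕 F' (-v) = ∫ w, F w * 𝐞 (∑ i, v i * w i) := by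
    rw [← hpres.integral_comp', Real.fourier_eq]
    refine integral_congr_ae (.of_forall fun w => ?_)
    simp [F', Circle.smul_def, mul_comm, PiLp.inner_apply]
  have hsq (G : EuclideanSpace ℝ ι → ℂ) : ∫⁻ v, ‖G v‖ₑ ^ 2 = eLpNorm G 2 ^ 2 := by
    rw [eLpNorm_eq_lintegral_rpow_enorm_toReal two_ne_zero ENNReal.ofNat_ne_top]
    simp [← ENNReal.rpow_mul_natCast]
  calc ∫⁻ f : ι → ℝ, ‖∫ w, F w * 𝐞 (∑ i, f i * w i)‖ₑ ^ 2
      = ∫⁻ v : EuclideanSpace ℝ ι, ‖𝓕 F' (-v)‖ₑ ^ 2 := by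
        simp_rw [hfourier]
        exact (hpres.lintegral_comp_emb (MeasurableEquiv.measurableEmbedding _) _).symm
    _ = ∫⁻ v : EuclideanSpace ℝ ι, ‖F' v‖ₑ ^ 2 := by
        rw [lintegral_neg_eq_self (fun v => ‖𝓕 F' v‖ₑ ^ 2), hsq, hsq, eLpNorm_fourier_eq hF' hF'₂]
    _ ≤ ∫⁻ w, ‖F w‖ₑ ^ 2 :=
        (hpres.lintegral_comp_emb (MeasurableEquiv.measurableEmbedding _) fun w => ‖F w‖ₑ ^ 2).le

end Plancherel

lemma integrable_mul_fourierChar {α : Type*} {_ : MeasurableSpace α} {μ : Measure α} {G : α → ℂ}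
    (hG : Integrable G μ) {u : α → ℝ} (hu : Measurable u) :
    Integrable (fun x => G x * 𝐞 (u x)) μ :=
  have hcont : Continuous fun t : ℝ => (𝐞 t : ℂ) := by fun_prop
  hG.mul_bdd (c := 1) (hcont.measurable.comp hu).aestronglyMeasurable
    (.of_forall fun _ => (Circle.norm_coe _).le)

lemma continuous_integral_mul_fourierChar {α ι : Type*} [Fintype ι] {_ : MeasurableSpace α}
    {μ : Measure α} {G : α → ℂ} (hG : Integrable G μ) {Φ : α → ι → ℝ} (hΦ : Measurable Φ) :
    Continuous fun f : ι → ℝ => ∫ x, G x * 𝐞 (∑ i, f i * Φ x i) ∂μ := by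
  refine continuous_of_dominated (bound := fun x => ‖G x‖) (fun f => ?_) (fun f => ?_) hG.norm ?_
  · exact (integrable_mul_fourierChar hG (by fun_prop)).aestronglyMeasurable
  · exact .of_forall fun x => by rw [norm_mul, Circle.norm_coe, mul_one]
  · exact .of_forall fun x => by fun_prop

lemma setIntegral_mul_fourierChar_comp_eq_integral_indicator {ι : Type*} [Fintype ι]
    {φ : (ι → ℝ) → ι → ℝ} {φ' : (ι → ℝ) → (ι → ℝ) →L[ℝ] ι → ℝ} {S : Set (ι → ℝ)}
    (hS : MeasurableSet S) (hφ' : ∀ x ∈ S, HasFDerivWithinAt φ (φ' x) S x) (hφ : InjOn φ S)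
    {G h : (ι → ℝ) → ℂ} (hG : ∀ x ∈ S, |(φ' x).det| • h (φ x) = G x) (f : ι → ℝ) :
    ∫ x in S, G x * 𝐞 (∑ i, f i * φ x i) =
      ∫ w, (φ '' S).indicator h w * 𝐞 (∑ i, f i * w i) := by
  have hind (w : ι → ℝ) : (φ '' S).indicator h w * 𝐞 (∑ i, f i * w i) =
      (φ '' S).indicator (fun w => h w * 𝐞 (∑ i, f i * w i)) w := by
    by_cases hw : w ∈ φ '' S <;> simp only [hw, indicator_of_mem, indicator_of_notMem,
      not_false_eq_true, zero_mul]
  rw [funext hind, integral_indicator (measurable_image_of_fderivWithin hS hφ' hφ),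
    integral_image_eq_integral_abs_det_fderiv_smul volume hS hφ' hφ]
  exact setIntegral_congr_fun hS fun x hx => by simp only [← smul_mul_assoc, hG x hx]

lemma lintegral_enorm_setIntegral_mul_fourierChar_sq_le {ι : Type*} [Fintype ι]
    {φ : (ι → ℝ) → ι → ℝ} {φ' : (ι → ℝ) → (ι → ℝ) →L[ℝ] ι → ℝ} {S : Set (ι → ℝ)}
    (hS : MeasurableSet S) (hφ' : ∀ x ∈ S, HasFDerivWithinAt φ (φ' x) S x) (hφ : InjOn φ S)
    (hdet : ∀ x ∈ S, (φ' x).det ≠ 0) {G : (ι → ℝ) → ℂ} (hG : IntegrableOn G S) :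
    ∫⁻ f : ι → ℝ, ‖∫ x in S, G x * 𝐞 (∑ i, f i * φ x i)‖ₑ ^ 2 ≤
      ∫⁻ x in S, ‖G x‖ₑ ^ 2 * (ENNReal.ofReal |(φ' x).det|)⁻¹ := by
  let ψ := Function.invFunOn φ S
  have hψ : ∀ x ∈ S, ψ (φ x) = x := fun x hx => hφ.leftInvOn_invFunOn hx
  let h : (ι → ℝ) → ℂ := fun w => (|(φ' (ψ w)).det|⁻¹ : ℝ) • G (ψ w)
  have hsmul : ∀ x ∈ S, |(φ' x).det| • h (φ x) = G x := fun x hx => by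
    simp only [h, hψ x hx, smul_inv_smul₀ (abs_ne_zero.2 (hdet x hx))]
  have himage : MeasurableSet (φ '' S) := measurable_image_of_fderivWithin hS hφ' hφ
  have hh : IntegrableOn h (φ '' S) :=
    (integrableOn_image_iff_integrableOn_abs_det_fderiv_smul volume hS hφ' hφ h).2
      (hG.congr_fun (fun x hx => (hsmul x hx).symm) hS)
  simp_rw [setIntegral_mul_fourierChar_comp_eq_integral_indicator hS hφ' hφ hsmul]
  refine (lintegral_enorm_integral_mul_fourierChar_sq_le
    ((integrable_indicator_iff himage).2 hh)).trans (le_of_eq ?_)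
  have hind : (fun w => ‖(φ '' S).indicator h w‖ₑ ^ 2) =
      (φ '' S).indicator fun w => ‖h w‖ₑ ^ 2 := by
    ext w
    by_cases hw : w ∈ φ '' S <;> simp [hw]
  rw [hind, lintegral_indicator himage,
    lintegral_image_eq_lintegral_abs_det_fderiv_mul volume hS hφ' hφ]
  refine setLIntegral_congr_fun hS fun x hx => ?_
  have hGx : ‖G x‖ₑ = ‖(φ' x).det‖ₑ * ‖h (φ x)‖ₑ := by
    rw [← hsmul x hx, enorm_smul, ← Real.norm_eq_abs, enorm_norm]
  rw [← Real.enorm_eq_ofReal_abs, hGx]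
  have hJ : ‖(φ' x).det‖ₑ ≠ 0 := by simpa using hdet x hx
  calc ‖(φ' x).det‖ₑ * ‖h (φ x)‖ₑ ^ 2
      = ‖(φ' x).det‖ₑ * ‖h (φ x)‖ₑ ^ 2 * (‖(φ' x).det‖ₑ * ‖(φ' x).det‖ₑ⁻¹) := by
        rw [ENNReal.mul_inv_cancel hJ enorm_ne_top, mul_one]
    _ = (‖(φ' x).det‖ₑ * ‖h (φ x)‖ₑ) ^ 2 * ‖(φ' x).det‖ₑ⁻¹ := by ring

section PowerSum

variable {n : ℕ}

lemma aeval_esymm_eq_of_psum_eq {x y : Fin n → ℝ}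
    (h : ∀ j : Fin n, ∑ i, x i ^ (j + 1 : ℕ) = ∑ i, y i ^ (j + 1 : ℕ)) {j : ℕ} (hj : j ≤ n) :
    MvPolynomial.aeval x (MvPolynomial.esymm (Fin n) ℝ j) =
      MvPolynomial.aeval y (MvPolynomial.esymm (Fin n) ℝ j) := by
  induction j using Nat.strong_induction_on with
  | _ j ih =>
    rcases Nat.eq_zero_or_pos j with rfl | hpos
    · simp only [MvPolynomial.esymm_zero, map_one]
    have newton (z : Fin n → ℝ) :
        (j : ℝ) * MvPolynomial.aeval z (MvPolynomial.esymm (Fin n) ℝ j) =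
        (-1) ^ (j + 1) * ∑ a ∈ Finset.HasAntidiagonal.antidiagonal j with a.1 < j,
          (-1) ^ a.1 * MvPolynomial.aeval z (MvPolynomial.esymm (Fin n) ℝ a.1) *
            ∑ i, z i ^ a.2 := by
      simpa [MvPolynomial.psum] using
        congrArg (MvPolynomial.aeval z) (MvPolynomial.mul_esymm_eq_sum (Fin n) ℝ j)
    have hj0 : (j : ℝ) ≠ 0 := by positivity
    refine mul_left_cancel₀ hj0 ?_
    rw [newton x, newton y]
    congr 1
    refine Finset.sum_congr rfl fun a ha => ?_
    rw [Finset.mem_filter, Finset.HasAntidiagonal.mem_antidiagonal] at ha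
    have hpsum := h ⟨a.2 - 1, by omega⟩
    simp only [show a.2 - 1 + 1 = a.2 by omega] at hpsum
    rw [ih a.1 ha.2 (by omega), hpsum]

lemma map_univ_eq_of_psum_eq {x y : Fin n → ℝ}
    (h : ∀ j : Fin n, ∑ i, x i ^ (j + 1 : ℕ) = ∑ i, y i ^ (j + 1 : ℕ)) :
    Finset.univ.val.map x = Finset.univ.val.map y := by
  have hprod : ((Finset.univ.val.map x).map fun t => Polynomial.X - Polynomial.C t).prod =
      ((Finset.univ.val.map y).map fun t => Polynomial.X - Polynomial.C t).prod := by
    rw [Multiset.prod_X_sub_X_eq_sum_esymm, Multiset.prod_X_sub_X_eq_sum_esymm]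
    simp only [Multiset.card_map, Finset.card_val, Finset.card_univ, Fintype.card_fin]
    refine Finset.sum_congr rfl fun j hj => ?_
    rw [← MvPolynomial.aeval_esymm_eq_multiset_esymm (σ := Fin n) (R := ℝ),
      ← MvPolynomial.aeval_esymm_eq_multiset_esymm (σ := Fin n) (R := ℝ),
      aeval_esymm_eq_of_psum_eq h (Nat.lt_succ_iff.1 (Finset.mem_range.1 hj))]
  simpa only [Polynomial.roots_multiset_prod_X_sub_C] using congrArg Polynomial.roots hprod

/-- The power sum map `y ↦ (∑ᵢ yᵢ ^ (j + 1))ⱼ`: the `n`-fold sum map of the moment curve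
`x ↦ (x, x², …, xⁿ)`. -/
def psumMap (n : ℕ) (y : Fin n → ℝ) (j : Fin n) : ℝ := ∑ i, y i ^ (j + 1 : ℕ)

lemma continuous_psumMap (n : ℕ) : Continuous (psumMap n) := by
  unfold psumMap
  fun_prop

/-- The derivative of `psumMap n` at `y`. -/
def psumDeriv (n : ℕ) (y : Fin n → ℝ) : (Fin n → ℝ) →L[ℝ] Fin n → ℝ :=
  (Matrix.toLin' (Matrix.of fun j i : Fin n => (j + 1 : ℝ) * y i ^ (j : ℕ))).toContinuousLinearMap

lemma injOn_psumMap (τ : Equiv.Perm (Fin n)) : InjOn (psumMap n) {y | StrictMono (y ∘ τ)} := by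
  intro x hx y hy h
  have hmap := map_univ_eq_of_psum_eq fun j => congrFun h j
  have hrange : range (x ∘ τ) = range (y ∘ τ) := by
    rw [τ.surjective.range_comp, τ.surjective.range_comp]
    ext t
    simpa using congrArg (t ∈ ·) hmap
  have hcomp := (StrictMono.range_inj hx hy).1 hrange
  ext i
  simpa using congrFun hcomp (τ.symm i)

lemma hasFDerivAt_psumMap (y : Fin n → ℝ) : HasFDerivAt (psumMap n) (psumDeriv n y) y := by
  rw [hasFDerivAt_pi']
  intro j
  have hpow (i : Fin n) : HasFDerivAt (fun z : Fin n → ℝ => z i ^ (j + 1 : ℕ))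
      (((j + 1 : ℕ) * y i ^ (j : ℕ)) •
        ContinuousLinearMap.proj (R := ℝ) (φ := fun _ => ℝ) i) y := by
    simpa using (hasFDerivAt_apply (𝕜 := ℝ) (F' := fun _ : Fin n => ℝ) i y).pow (j + 1)
  refine (HasFDerivAt.fun_sum fun i _ => hpow i).congr_fderiv ?_
  ext v
  simp [psumDeriv, Matrix.mulVec, dotProduct]

lemma det_psumDeriv (y : Fin n → ℝ) :
    (psumDeriv n y).det = n.factorial * (Matrix.vandermonde y).det := by
  have hmul : (Matrix.of fun j i : Fin n => (j + 1 : ℝ) * y i ^ (j : ℕ)) =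
      Matrix.diagonal (fun j : Fin n => (j + 1 : ℝ)) * (Matrix.vandermonde y).transpose := by
    ext j i
    simp [Matrix.diagonal_mul, Matrix.vandermonde]
  rw [psumDeriv, ContinuousLinearMap.det, LinearMap.coe_toContinuousLinearMap,
    LinearMap.det_toLin', hmul, Matrix.det_mul, Matrix.det_diagonal, Matrix.det_transpose,
    Fin.prod_univ_eq_prod_range (fun i : ℕ => ((i : ℝ) + 1)) n,
    ← Finset.prod_range_add_one_eq_factorial]
  push_cast
  rfl

lemma measurableSet_strictMono_comp (τ : Equiv.Perm (Fin n)) :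
    MeasurableSet {y : Fin n → ℝ | StrictMono (y ∘ τ)} := by
  have : {y : Fin n → ℝ | StrictMono (y ∘ τ)} =
      ⋂ (i : Fin n) (j : Fin n) (_ : i < j), {y | y (τ i) < y (τ j)} := by
    ext y
    simp [StrictMono]
  rw [this]
  exact .iInter fun i => .iInter fun j => .iInter fun _ =>
    measurableSet_lt (measurable_pi_apply _) (measurable_pi_apply _)

lemma pairwise_disjoint_strictMono_comp :
    Pairwise (Function.onFun Disjoint fun τ : Equiv.Perm (Fin n) =>
      {y : Fin n → ℝ | StrictMono (y ∘ τ)}) := by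
  intro σ τ hne
  refine disjoint_left.2 fun y hσ hτ => hne ?_
  have hinj : Function.Injective y := by
    simpa using (Equiv.injective_comp σ y).1 hσ.injective
  have hcomp : y ∘ σ = y ∘ τ := (StrictMono.range_inj hσ hτ).1 (by
    rw [σ.surjective.range_comp, τ.surjective.range_comp])
  exact Equiv.ext fun i => hinj (congrFun hcomp i)

lemma ae_injective : ∀ᵐ y : Fin n → ℝ, Function.Injective y := by
  have hne (i j : Fin n) (hij : i ≠ j) : ∀ᵐ y : Fin n → ℝ, y i ≠ y j := by
    let s : Submodule ℝ (Fin n → ℝ) :=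
      LinearMap.ker (LinearMap.proj (R := ℝ) (φ := fun _ : Fin n => ℝ) i - LinearMap.proj j)
    have hs : s ≠ ⊤ := fun h => by
      have : Pi.single i 1 ∈ s := h ▸ Submodule.mem_top
      simp [s, hij.symm] at this
    refine measure_mono_null (fun y hy => ?_) (Measure.addHaar_submodule volume s hs)
    simpa [s, sub_eq_zero] using hy
  filter_upwards [ae_all_iff.2 fun i => ae_all_iff.2 fun j => ae_all_iff.2 fun hij => hne i j hij]
    with y hy i j
  exact not_imp_not.1 (hy i j)

lemma ae_mem_iUnion_strictMono_comp :
    ∀ᵐ y : Fin n → ℝ, y ∈ ⋃ τ : Equiv.Perm (Fin n), {y | StrictMono (y ∘ τ)} := by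
  filter_upwards [ae_injective] with y hy
  exact mem_iUnion.2 ⟨Tuple.sort y,
    (Tuple.monotone_sort y).strictMono_of_injective (hy.comp (Tuple.sort y).injective)⟩

lemma lintegral_enorm_setIntegral_psumMap_sq_le (τ : Equiv.Perm (Fin n)) {G : (Fin n → ℝ) → ℂ}
    (hG : Integrable G) :
    ∫⁻ f : Fin n → ℝ, ‖∫ y in {y | StrictMono (y ∘ τ)},
        G y * 𝐞 (∑ i, f i * psumMap n y i)‖ₑ ^ 2 ≤
      ∫⁻ y in {y | StrictMono (y ∘ τ)}, ‖G y‖ₑ ^ 2 * ‖(Matrix.vandermonde y).det‖ₑ⁻¹ := by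
  refine (lintegral_enorm_setIntegral_mul_fourierChar_sq_le (measurableSet_strictMono_comp τ)
    (fun y _ => (hasFDerivAt_psumMap y).hasFDerivWithinAt) (injOn_psumMap τ)
    (fun y hy => ?_) hG.integrableOn).trans ?_
  · have hinj : Function.Injective y := (Equiv.injective_comp τ y).1 hy.injective
    rw [det_psumDeriv]
    exact mul_ne_zero (mod_cast n.factorial_ne_zero) (Matrix.det_vandermonde_ne_zero_iff.2 hinj)
  · gcongr with y
    rw [det_psumDeriv, ← Real.norm_eq_abs, ofReal_norm, enorm_mul]
    refine le_mul_of_one_le_left zero_le ?_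
    rw [← ofReal_norm, Real.norm_natCast, ENNReal.ofReal_natCast]
    exact_mod_cast n.factorial_pos

lemma integral_eq_sum_setIntegral_strictMono_comp {G : (Fin n → ℝ) → ℂ} (hG : Integrable G) :
    ∫ y, G y = ∑ τ : Equiv.Perm (Fin n), ∫ y in {y | StrictMono (y ∘ τ)}, G y := by
  rw [← integral_iUnion_fintype measurableSet_strictMono_comp pairwise_disjoint_strictMono_comp
    fun τ => hG.integrableOn, Measure.restrict_eq_self_of_ae_mem ae_mem_iUnion_strictMono_comp]

lemma lintegral_eq_sum_setLIntegral_strictMono_comp (F : (Fin n → ℝ) → ℝ≥0∞) :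
    ∫⁻ y, F y = ∑ τ : Equiv.Perm (Fin n), ∫⁻ y in {y | StrictMono (y ∘ τ)}, F y := by
  rw [← tsum_fintype (L := .unconditional _),
    ← lintegral_iUnion measurableSet_strictMono_comp pairwise_disjoint_strictMono_comp,
    Measure.restrict_eq_self_of_ae_mem ae_mem_iUnion_strictMono_comp]

lemma sum_sq_le_factorial_mul_sum_sq (a : Equiv.Perm (Fin n) → ℝ≥0∞) :
    (∑ τ, a τ) ^ 2 ≤ n.factorial * ∑ τ, a τ ^ 2 := by
  have := ENNReal.rpow_sum_le_const_mul_sum_rpow Finset.univ a one_le_two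
  norm_num [Fintype.card_perm] at this
  exact this

/-- On each of the `n!` sectors of `ℝⁿ` on which the coordinates are ordered in a given way,
`psumMap` is injective, so Plancherel's theorem applies after a change of variables. -/
lemma lintegral_enorm_integral_psumMap_sq_le {G : (Fin n → ℝ) → ℂ} (hG : Integrable G) :
    ∫⁻ f : Fin n → ℝ, ‖∫ y, G y * 𝐞 (∑ i, f i * psumMap n y i)‖ₑ ^ 2 ≤
      n.factorial * ∫⁻ y, ‖G y‖ₑ ^ 2 * ‖(Matrix.vandermonde y).det‖ₑ⁻¹ := by
  have hΦ : Measurable (psumMap n) := (continuous_psumMap n).measurable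
  let S (τ : Equiv.Perm (Fin n)) : Set (Fin n → ℝ) := {y | StrictMono (y ∘ τ)}
  calc ∫⁻ f : Fin n → ℝ, ‖∫ y, G y * 𝐞 (∑ i, f i * psumMap n y i)‖ₑ ^ 2
      ≤ ∫⁻ f : Fin n → ℝ, n.factorial *
          ∑ τ, ‖∫ y in S τ, G y * 𝐞 (∑ i, f i * psumMap n y i)‖ₑ ^ 2 := by
        gcongr with f
        have hint : Integrable fun y => G y * 𝐞 (∑ i, f i * psumMap n y i) :=
          integrable_mul_fourierChar hG (by fun_prop)
        rw [integral_eq_sum_setIntegral_strictMono_comp hint]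
        refine le_trans ?_ (sum_sq_le_factorial_mul_sum_sq _)
        gcongr
        exact enorm_sum_le _ _
    _ = n.factorial * ∑ τ, ∫⁻ f : Fin n → ℝ,
          ‖∫ y in S τ, G y * 𝐞 (∑ i, f i * psumMap n y i)‖ₑ ^ 2 := by
        rw [lintegral_const_mul' _ _ (ENNReal.natCast_ne_top _), lintegral_finsetSum]
        have hcont (τ) := continuous_integral_mul_fourierChar (hG.restrict (s := S τ)) hΦ
        exact fun τ _ => (hcont τ).measurable.enorm.pow_const 2
    _ ≤ n.factorial * ∑ τ, ∫⁻ y in S τ, ‖G y‖ₑ ^ 2 * ‖(Matrix.vandermonde y).det‖ₑ⁻¹ :=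
        mul_le_mul' le_rfl (Finset.sum_le_sum fun τ _ =>
          lintegral_enorm_setIntegral_psumMap_sq_le τ hG)
    _ = n.factorial * ∫⁻ y, ‖G y‖ₑ ^ 2 * ‖(Matrix.vandermonde y).det‖ₑ⁻¹ := by
        rw [← lintegral_eq_sum_setLIntegral_strictMono_comp]

end PowerSum

lemma enorm_setIntegral_le_tsum_dyadicLevel {α : Type*} {_ : MeasurableSpace α} {μ : Measure α}
    {A : Set α} (hA : MeasurableSet A) {F : α → ℂ} (hF : IntegrableOn F A μ) {w : α → ℝ≥0∞}
    (hw : Measurable w) (hw_le : ∀ x ∈ A, w x ≤ 1)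
    (hw_ne : ∀ᵐ x ∂μ, x ∈ A → w x = 0 → F x = 0) :
    ‖∫ x in A, F x ∂μ‖ₑ ≤ ∑' j, ‖∫ x in A ∩ dyadicLevel w j, F x ∂μ‖ₑ := by
  have hmeas (j : ℕ) := hA.inter (measurableSet_dyadicLevel hw j)
  have hsub : ⋃ j, A ∩ dyadicLevel w j ⊆ A := iUnion_subset fun j => inter_subset_left
  have hunion : ∫ x in A, F x ∂μ = ∫ x in ⋃ j, A ∩ dyadicLevel w j, F x ∂μ := by
    refine setIntegral_eq_of_subset_of_ae_sdiff_eq_zero hA.nullMeasurableSet hsub ?_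
    filter_upwards [hw_ne] with x hx hxA
    refine hx hxA.1 (by_contra fun h0 => hxA.2 ?_)
    obtain ⟨j, hj⟩ := exists_mem_dyadicLevel h0 (hw_le x hxA.1)
    exact mem_iUnion.2 ⟨j, hxA.1, hj⟩
  have hdisj : Pairwise (Function.onFun Disjoint fun j => A ∩ dyadicLevel w j) :=
    fun i j hij => (pairwise_disjoint_dyadicLevel w hij).mono inter_subset_right inter_subset_right
  rw [hunion, ← (hasSum_integral_iUnion hmeas hdisj (hF.mono_set hsub)).tsum_eq]
  exact enorm_tsum_le_tsum_enorm

lemma measure_inter_dyadicLevel_le {α : Type*} {_ : MeasurableSpace α} {μ : Measure α}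
    {A : Set α} (hA : MeasurableSet A) {w : α → ℝ≥0∞} (hw : Measurable w) {a : ℝ} (ha : 0 ≤ a)
    (j : ℕ) :
    μ (A ∩ dyadicLevel w j) ≤ (2⁻¹ ^ j) ^ a * ∫⁻ x in A, w x ^ (-a) ∂μ :=
  calc μ (A ∩ dyadicLevel w j) = ∫⁻ _ in A ∩ dyadicLevel w j, 1 ∂μ := by simp
    _ ≤ ∫⁻ x in A ∩ dyadicLevel w j, (2⁻¹ ^ j) ^ a * w x ^ (-a) ∂μ := by
        refine setLIntegral_mono' (hA.inter (measurableSet_dyadicLevel hw j)) fun x hx => ?_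
        rw [ENNReal.rpow_neg, ← div_eq_mul_inv]
        have hx0 : w x ≠ 0 := (zero_le.trans_lt hx.2.1).ne'
        have hxt : w x ≠ ⊤ := ne_top_of_le_ne_top (by finiteness) hx.2.2
        rw [ENNReal.le_div_iff_mul_le (.inl (by simp [hx0, hxt])) (.inl (by finiteness)), one_mul]
        exact ENNReal.rpow_le_rpow hx.2.2 ha
    _ ≤ (2⁻¹ ^ j) ^ a * ∫⁻ x in A, w x ^ (-a) ∂μ := by
        rw [lintegral_const_mul' _ _ (by finiteness)]
        gcongr
        exact inter_subset_left

lemma enorm_setIntegral_mul_fourierChar_le {α : Type*} {_ : MeasurableSpace α} {μ : Measure α}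
    {S : Set α} (hS : MeasurableSet S) {G : α → ℂ} {M : ℝ≥0∞} (hM : ∀ x ∈ S, ‖G x‖ₑ ≤ M)
    (u : α → ℝ) : ‖∫ x in S, G x * 𝐞 (u x) ∂μ‖ₑ ≤ M * μ S := by
  refine (enorm_integral_le_lintegral_enorm _).trans ?_
  rw [← setLIntegral_const]
  refine setLIntegral_mono' hS fun x hx => ?_
  have hnorm : ‖(𝐞 (u x) : ℂ)‖ₑ = 1 := by rw [← ofReal_norm, Circle.norm_coe, ENNReal.ofReal_one]
  rw [enorm_mul, hnorm, mul_one]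
  exact hM x hx

lemma lintegral_enorm_setIntegral_psumMap_sq_le_of_le {n : ℕ} {S : Set (Fin n → ℝ)}
    (hS : MeasurableSet S) {G : (Fin n → ℝ) → ℂ} (hG : IntegrableOn G S) {M δ : ℝ≥0∞}
    (hM : ∀ z ∈ S, ‖G z‖ₑ ≤ M) (hδ : ∀ z ∈ S, δ ≤ ‖(Matrix.vandermonde z).det‖ₑ) :
    ∫⁻ f : Fin n → ℝ, ‖∫ z in S, G z * 𝐞 (∑ i, f i * psumMap n z i)‖ₑ ^ 2 ≤
      n.factorial * (M ^ 2 * δ⁻¹ * volume S) := by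
  have hind (f : Fin n → ℝ) : ∫ z in S, G z * 𝐞 (∑ i, f i * psumMap n z i) =
      ∫ z, S.indicator G z * 𝐞 (∑ i, f i * psumMap n z i) := by
    rw [← integral_indicator hS]
    refine integral_congr_ae (.of_forall fun z => ?_)
    by_cases hz : z ∈ S <;> simp [hz]
  simp_rw [hind]
  refine (lintegral_enorm_integral_psumMap_sq_le (hG.integrable_indicator hS)).trans ?_
  gcongr
  rw [← setLIntegral_const, ← lintegral_indicator hS]
  refine lintegral_mono fun z => ?_
  by_cases hz : z ∈ S
  · simp only [indicator_of_mem hz]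
    gcongr
    exacts [hM z hz, hδ z hz]
  · simp [hz]

/-- Interpolation between the trivial uniform bound and Plancherel's theorem. -/
lemma lintegral_enorm_setIntegral_psumMap_rpow_le {n : ℕ} {S : Set (Fin n → ℝ)}
    (hS : MeasurableSet S) {G : (Fin n → ℝ) → ℂ} (hG : IntegrableOn G S) {M δ : ℝ≥0∞}
    (hM : ∀ z ∈ S, ‖G z‖ₑ ≤ M) (hδ : ∀ z ∈ S, δ ≤ ‖(Matrix.vandermonde z).det‖ₑ) {s : ℝ}
    (hs : 2 ≤ s) :
    ∫⁻ f : Fin n → ℝ, ‖∫ z in S, G z * 𝐞 (∑ i, f i * psumMap n z i)‖ₑ ^ s ≤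
      n.factorial * δ⁻¹ * M ^ s * volume S ^ (s - 1) := by
  let F (f : Fin n → ℝ) : ℂ := ∫ z in S, G z * 𝐞 (∑ i, f i * psumMap n z i)
  have hF : Measurable F :=
    (continuous_integral_mul_fourierChar hG (continuous_psumMap n).measurable).measurable
  have hsub : 0 ≤ s - 2 := by linarith
  calc ∫⁻ f, ‖F f‖ₑ ^ s ≤ ∫⁻ f, (M * volume S) ^ (s - 2) * ‖F f‖ₑ ^ 2 := by
        refine lintegral_mono fun f => ?_
        nth_rw 1 [← sub_add_cancel s 2]
        rw [ENNReal.rpow_add_of_nonneg _ _ hsub zero_le_two, ENNReal.rpow_ofNat]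
        gcongr
        exact enorm_setIntegral_mul_fourierChar_le hS hM _
    _ = (M * volume S) ^ (s - 2) * ∫⁻ f, ‖F f‖ₑ ^ 2 :=
        lintegral_const_mul _ (hF.enorm.pow_const 2)
    _ ≤ (M * volume S) ^ (s - 2) * (n.factorial * (M ^ 2 * δ⁻¹ * volume S)) := by
        gcongr
        exact lintegral_enorm_setIntegral_psumMap_sq_le_of_le hS hG hM hδ
    _ = n.factorial * δ⁻¹ * M ^ s * volume S ^ (s - 1) := by
        rw [ENNReal.mul_rpow_of_nonneg _ _ hsub]
        rw [show s = s - 2 + 2 by ring, show s - 2 + 2 - 1 = s - 2 + 1 by ring,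
          ENNReal.rpow_add_of_nonneg _ _ hsub zero_le_two,
          ENNReal.rpow_add_of_nonneg _ _ hsub zero_le_one, add_sub_cancel_right, ENNReal.rpow_one,
          ENNReal.rpow_ofNat]
        ring

/-- The Fourier transform of the density `g` on `X`, carried to the moment curve
`x ↦ (x, x², …, xⁿ)`: the extension operator of that curve. -/
def extOp (n : ℕ) (X : Set ℝ) (g : ℝ → ℂ) (f : Fin n → ℝ) : ℂ :=
  ∫ x in X, g x * 𝐞 (∑ i, f i * x ^ (i + 1 : ℕ))

lemma continuous_extOp (n : ℕ) {X : Set ℝ} {g : ℝ → ℂ} (hg : IntegrableOn g X) :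
    Continuous (extOp n X g) :=
  continuous_integral_mul_fourierChar hg (Φ := fun x (i : Fin n) => x ^ (i + 1 : ℕ)) (by fun_prop)

lemma coe_fourierChar_sum {ι : Type*} (s : Finset ι) (u : ι → ℝ) :
    (𝐞 (∑ i ∈ s, u i) : ℂ) = ∏ i ∈ s, (𝐞 (u i) : ℂ) := by
  simp only [Real.fourierChar_apply, Finset.mul_sum, Complex.ofReal_sum, Finset.sum_mul,
    Complex.exp_sum]

lemma integrableOn_prod_eval {ι : Type*} [Fintype ι] {X : Set ℝ} {g : ℝ → ℂ}
    (hg : IntegrableOn g X) :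
    IntegrableOn (fun z : ι → ℝ => ∏ i, g (z i)) (univ.pi fun _ => X) := by
  rw [IntegrableOn, volume_pi, Measure.restrict_pi_pi]
  exact Integrable.fintype_prod fun _ => hg

lemma extOp_pow {n : ℕ} (X : Set ℝ) (g : ℝ → ℂ) (f : Fin n → ℝ) :
    extOp n X g f ^ n = ∫ z in univ.pi fun _ : Fin n => X,
      (∏ i, g (z i)) * 𝐞 (∑ j, f j * psumMap n z j) := by
  have hprod := integral_fintype_prod_eq_prod (μ := fun _ : Fin n => volume.restrict X)
    fun (_ : Fin n) (x : ℝ) => g x * 𝐞 (∑ i, f i * x ^ (i + 1 : ℕ))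
  rw [Finset.prod_const, Finset.card_univ, Fintype.card_fin] at hprod
  rw [extOp, ← hprod, volume_pi, Measure.restrict_pi_pi]
  refine integral_congr_ae (.of_forall fun z => ?_)
  have hphase : ∑ j, f j * psumMap n z j = ∑ i, ∑ j, f j * z i ^ (j + 1 : ℕ) := by
    simp only [psumMap, Finset.mul_sum]
    exact Finset.sum_comm
  have hterm : ∏ i, g (z i) * (𝐞 (∑ j, f j * z i ^ (j + 1 : ℕ)) : ℂ) =
      (∏ i, g (z i)) * 𝐞 (∑ j, f j * psumMap n z j) := by
    rw [hphase, coe_fourierChar_sum, Finset.prod_mul_distrib]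
  exact hterm

lemma enorm_det_vandermonde_le_one {n : ℕ} {z : Fin n → ℝ} (hz : ∀ i, z i ∈ Icc (0 : ℝ) 1) :
    ‖(Matrix.vandermonde z).det‖ₑ ≤ 1 := by
  rw [← ofReal_norm, Matrix.det_vandermonde, ENNReal.ofReal_le_one]
  simp only [norm_prod]
  refine Finset.prod_le_one (fun _ _ => by positivity) fun i _ =>
    Finset.prod_le_one (fun _ _ => norm_nonneg _) fun j _ => ?_
  rw [Real.norm_eq_abs, abs_le]
  constructor <;> linarith [(hz i).1, (hz i).2, (hz j).1, (hz j).2]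

/-- The part of `extOp n X g f ^ n`, written as an integral over `Xⁿ`, that comes from the tuples at
which the Vandermonde determinant is of size about `2^(-j)`. -/
def extOpPowPiece {n : ℕ} (X : Set ℝ) (g : ℝ → ℂ) (j : ℕ) (f : Fin n → ℝ) : ℂ :=
  ∫ z in (univ.pi fun _ => X) ∩
      dyadicLevel (fun z : Fin n → ℝ => ‖(Matrix.vandermonde z).det‖ₑ) j,
    (∏ i, g (z i)) * 𝐞 (∑ i, f i * psumMap n z i)

lemma measurable_extOpPowPiece {n : ℕ} {X : Set ℝ} {g : ℝ → ℂ} (hg : IntegrableOn g X) (j : ℕ) :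
    Measurable (extOpPowPiece X g j : (Fin n → ℝ) → ℂ) :=
  (continuous_integral_mul_fourierChar ((integrableOn_prod_eval hg).mono_set inter_subset_left)
    (continuous_psumMap n).measurable).measurable

lemma enorm_extOp_pow_le_tsum_extOpPowPiece {n : ℕ} {X : Set ℝ} (hX : MeasurableSet X)
    (hX01 : X ⊆ Icc 0 1) {g : ℝ → ℂ} (hg : IntegrableOn g X) (f : Fin n → ℝ) :
    ‖extOp n X g f ^ n‖ₑ ≤ ∑' j, ‖extOpPowPiece X g j f‖ₑ := by
  have hΦ : Measurable (psumMap n) := (continuous_psumMap n).measurable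
  rw [extOp_pow]
  refine enorm_setIntegral_le_tsum_dyadicLevel (.univ_pi fun _ => hX) ?_
    measurable_enorm_det_vandermonde
    (fun z hz => enorm_det_vandermonde_le_one fun i => hX01 (hz i trivial)) ?_
  · exact integrable_mul_fourierChar (integrableOn_prod_eval hg) (by fun_prop)
  · filter_upwards [ae_injective] with z hz _ h0
    exact absurd (enorm_eq_zero.1 h0) (Matrix.det_vandermonde_ne_zero_iff.2 hz)

/-- At `a = (s - 1)⁻¹` the last two inequalities are an equality and `n s - n (n + 1) / 2`,
so they are satisfied by any `a` slightly larger. -/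
lemma exists_vandermonde_exponent {n s e : ℝ} (hn : 1 ≤ n) (hs : n < s)
    (he : e < n * s - n * (n + 1) / 2) :
    ∃ a : ℝ, 0 ≤ a ∧ a * (n - 1) < 1 ∧ 1 < a * (s - 1) ∧
      e ≤ (n - a * (n * (n - 1) / 2)) * (s - 1) := by
  have hs1 : 0 < s - 1 := by linarith
  have hmoment : ∀ᶠ a in 𝓝[>] (s - 1)⁻¹, a * (n - 1) < 1 := by
    refine nhdsWithin_le_nhds (ContinuousAt.eventually_lt (by fun_prop) continuousAt_const ?_)
    rw [inv_mul_lt_one₀ hs1]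
    linarith
  have hpower : ∀ᶠ a in 𝓝[>] (s - 1)⁻¹, e < (n - a * (n * (n - 1) / 2)) * (s - 1) := by
    refine nhdsWithin_le_nhds (continuousAt_const.eventually_lt (by fun_prop) ?_)
    field_simp
    linarith
  obtain ⟨a, ha, hmom, hpow⟩ := (eventually_mem_nhdsWithin.and (hmoment.and hpower)).exists
  have ha0 : 0 < a := (inv_pos.2 hs1).trans ha
  exact ⟨a, ha0.le, hmom, (inv_lt_iff_one_lt_mul₀ hs1).1 ha, hpow.le⟩

lemma lintegral_enorm_extOpPowPiece_rpow_le {n : ℕ} {X : Set ℝ}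
    (hX : MeasurableSet X) {g : ℝ → ℂ} (hg : IntegrableOn g X) {σ : ℝ≥0∞}
    (hσ : ∀ x ∈ X, ‖g x‖ₑ ≤ σ) {a s : ℝ} (ha : 0 ≤ a) (hs : 2 ≤ s) (j : ℕ) :
    ∫⁻ f : Fin n → ℝ, ‖extOpPowPiece X g j f‖ₑ ^ s ≤
      2 ^ ((1 - a * (s - 1)) * j) * (2 * n.factorial * σ ^ (n * s) *
        (∫⁻ z in univ.pi fun _ : Fin n => X, ‖(Matrix.vandermonde z).det‖ₑ ^ (-a)) ^ (s - 1)) := by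
  have hXn : MeasurableSet (univ.pi fun _ : Fin n => X) := .univ_pi fun _ => hX
  have hw : Measurable fun z : Fin n → ℝ => ‖(Matrix.vandermonde z).det‖ₑ :=
    measurable_enorm_det_vandermonde
  have hs1 : 0 ≤ s - 1 := by linarith
  set K := ∫⁻ z in univ.pi fun _ : Fin n => X, ‖(Matrix.vandermonde z).det‖ₑ ^ (-a)
  have hweight : ((2⁻¹ : ℝ≥0∞) ^ (j + 1))⁻¹ * ((2⁻¹ ^ j) ^ a) ^ (s - 1) =
      2 * 2 ^ ((1 - a * (s - 1)) * j) := by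
    rw [← ENNReal.rpow_natCast _ j, ← ENNReal.rpow_mul, ← ENNReal.rpow_mul, ← ENNReal.inv_pow,
      inv_inv, pow_succ, ENNReal.inv_rpow, ← ENNReal.rpow_neg, ← ENNReal.rpow_natCast,
      mul_right_comm, ← ENNReal.rpow_add _ _ two_ne_zero ENNReal.ofNat_ne_top, mul_comm]
    ring_nf
  have hprod (z) (hz : z ∈ univ.pi fun _ : Fin n => X) : ‖∏ i, g (z i)‖ₑ ≤ σ ^ n := by
    rw [enorm_eq_nnnorm, nnnorm_prod, ENNReal.ofNNReal_finsetProd]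
    exact (Finset.prod_le_prod' fun i _ => hσ _ (hz i trivial)).trans_eq (by simp)
  calc _ ≤ n.factorial * (2⁻¹ ^ (j + 1))⁻¹ * (σ ^ n) ^ s * ((2⁻¹ ^ j) ^ a * K) ^ (s - 1) := by
        refine (lintegral_enorm_setIntegral_psumMap_rpow_le
          (hXn.inter (measurableSet_dyadicLevel hw j))
          ((integrableOn_prod_eval hg).mono_set inter_subset_left)
          (fun z hz => hprod z hz.1) (fun z hz => hz.2.1.le) hs).trans ?_
        gcongr
        exact measure_inter_dyadicLevel_le hXn hw ha j
    _ = n.factorial * (2 * 2 ^ ((1 - a * (s - 1)) * j)) * (σ ^ n) ^ s * K ^ (s - 1) := by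
        rw [← hweight, ENNReal.mul_rpow_of_nonneg _ _ hs1]
        ring
    _ = _ := by
        rw [ENNReal.rpow_natCast_mul]
        ring

/-- Restriction estimate for the moment curve, with a gain from the size of the support. -/
lemma exists_lintegral_extOp_rpow_le {n : ℕ} (hn : 2 ≤ n) {p e : ℝ} (hp : (n : ℝ) ^ 2 < p)
    (he : e < p - n * (n + 1) / 2) :
    ∃ C : ℝ≥0∞, C ≠ ⊤ ∧ ∀ X ⊆ Icc (0 : ℝ) 1, MeasurableSet X → ∀ g : ℝ → ℂ, IntegrableOn g X →
      ∀ σ : ℝ≥0∞, (∀ x ∈ X, ‖g x‖ₑ ≤ σ) →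
        ∫⁻ f, ‖extOp n X g f‖ₑ ^ p ≤ C * (σ ^ p * volume X ^ e) := by
  have hn2 : (2 : ℝ) ≤ n := mod_cast hn
  obtain ⟨s, rfl⟩ : ∃ s : ℝ, p = n * s := ⟨p / n, by field_simp⟩
  have hns : n < s := by nlinarith
  obtain ⟨a, ha, hmoment, hsum, hpower⟩ :=
    exists_vandermonde_exponent (by linarith) hns he
  obtain ⟨C₁, hC₁, hvdm⟩ := exists_setLIntegral_det_vandermonde_rpow_neg_le ha n hmoment
  have hs1 : 0 ≤ s - 1 := by linarith
  obtain ⟨C₂, hC₂, hdyadic⟩ := exists_lintegral_rpow_le_of_geometric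
    (volume : Measure (Fin n → ℝ)) (s := s) (δ := 1 - a * (s - 1)) (by linarith) (by linarith)
  refine ⟨C₂ * (2 * n.factorial * C₁ ^ (s - 1)), by finiteness, fun X hX01 hX g hg σ hσ => ?_⟩
  have hvol : volume X ≤ 1 := (measure_mono hX01).trans (by simp)
  calc ∫⁻ f, ‖extOp n X g f‖ₑ ^ (n * s) = ∫⁻ f, ‖extOp n X g f ^ n‖ₑ ^ s := by
        simp_rw [enorm_pow, ENNReal.rpow_natCast_mul]
    _ ≤ C₂ * (2 * n.factorial * σ ^ (n * s) * (∫⁻ z in univ.pi fun _ : Fin n => X,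
          ‖(Matrix.vandermonde z).det‖ₑ ^ (-a)) ^ (s - 1)) :=
        hdyadic _ _ _ (fun j => (measurable_extOpPowPiece hg j).enorm)
          (enorm_extOp_pow_le_tsum_extOpPowPiece hX hX01 hg)
          (lintegral_enorm_extOpPowPiece_rpow_le hX hg hσ ha (by linarith))
    _ ≤ C₂ * (2 * n.factorial * σ ^ (n * s) * (C₁ ^ (s - 1) * volume X ^ e)) := by
        gcongr
        refine (ENNReal.rpow_le_rpow (hvdm X) hs1).trans ?_
        rw [ENNReal.mul_rpow_of_nonneg _ _ hs1, ← ENNReal.rpow_mul]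
        exact mul_le_mul' le_rfl (ENNReal.rpow_le_rpow_of_exponent_ge hvol hpower)
    _ = C₂ * (2 * n.factorial * C₁ ^ (s - 1)) * (σ ^ (n * s) * volume X ^ e) := by ring

lemma setIntegral_Icc_fin_two {E : Type*} [NormedAddCommGroup E] [NormedSpace ℝ E]
    {F : (Fin 2 → ℝ) → E} (hF : Continuous F) :
    ∫ ξ in Icc (0 : Fin 2 → ℝ) 1, F ξ =
      ∫ s in Icc (0 : ℝ) 1, ∫ t in Icc (0 : ℝ) 1, F ![s, t] := by
  have hpre : (MeasurableEquiv.finTwoArrow (α := ℝ)).symm ⁻¹' Icc (0 : Fin 2 → ℝ) 1 =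
      Icc (0 : ℝ) 1 ×ˢ Icc (0 : ℝ) 1 := by
    ext ⟨s, t⟩
    simp only [mem_preimage, mem_Icc, Pi.le_def, Fin.forall_fin_two, mem_prod]
    simp [MeasurableEquiv.finTwoArrow]
    tauto
  rw [← (volume_preserving_finTwoArrow ℝ).symm.setIntegral_preimage_emb
    (MeasurableEquiv.measurableEmbedding _), hpre, Measure.volume_eq_prod, setIntegral_prod]
  · rfl
  · refine (hF.comp ?_).continuousOn.integrableOn_compact (isCompact_Icc.prod isCompact_Icc)
    refine continuous_pi fun i => ?_
    fin_cases i
    · exact continuous_fst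
    · exact continuous_snd

lemma continuous_Pphase (k : ℕ) : Continuous fun q : (Idx k → ℝ) × (Fin 2 → ℝ) =>
    Pphase k q.1 q.2 := by
  unfold Pphase
  fun_prop

lemma Eone_eq_setIntegral_fourierChar (k : ℕ) (x : Idx k → ℝ) :
    Eone k x = ∫ ξ in Icc (0 : Fin 2 → ℝ) 1, (𝐞 (Pphase k x ξ) : ℂ) := by
  simp only [Eone, Real.fourierChar_apply]
  push_cast
  simp only [mul_right_comm]

lemma Eone_eq_setIntegral_setIntegral (k : ℕ) (x : Idx k → ℝ) :
    Eone k x = ∫ s in Icc (0 : ℝ) 1, ∫ t in Icc (0 : ℝ) 1, (𝐞 (Pphase k x ![s, t]) : ℂ) := by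
  have hcont := (continuous_Pphase k).comp (Continuous.prodMk_right x)
  rw [Eone_eq_setIntegral_fourierChar]
  exact setIntegral_Icc_fin_two (F := fun ξ => (𝐞 (Pphase k x ξ) : ℂ)) (by fun_prop)

lemma measurable_Eone (k : ℕ) : Measurable (Eone k) := by
  have hcont : Continuous fun q : (Idx k → ℝ) × (Fin 2 → ℝ) => (𝐞 (Pphase k q.1 q.2) : ℂ) := by
    have := continuous_Pphase k
    fun_prop
  simp_rw [funext (Eone_eq_setIntegral_fourierChar k)]
  exact (hcont.stronglyMeasurable.integral_prod_right' (ν := volume.restrict (Icc 0 1))).measurable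

/-- Splitting the multi-indices `β` according to whether `β₂ = 0`. -/
def idxEquiv (m : ℕ) : Idx (m + 1) ≃ Fin (m + 1) ⊕ triangle m where
  toFun
    | ⟨(⟨a, _⟩, ⟨0, _⟩), h⟩ => Sum.inl ⟨a - 1, by simp only at h; omega⟩
    | ⟨(⟨a, _⟩, ⟨b + 1, _⟩), h⟩ => Sum.inr ⟨(a, b), mem_triangle.2 (by simp only at h ⊢; omega)⟩
  invFun
    | Sum.inl i => ⟨(i.succ, 0), by simp only [Fin.val_succ, Fin.val_zero]; omega⟩
    | Sum.inr ⟨(a, b), h⟩ =>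
      have := mem_triangle.1 h
      ⟨(⟨a, by omega⟩, ⟨b + 1, by omega⟩), by simp only; omega⟩
  left_inv := by
    rintro ⟨⟨⟨a, ha⟩, ⟨_ | b, hb⟩⟩, h⟩
    · exact Subtype.ext (Prod.ext (Fin.ext (Nat.sub_add_cancel h.1)) rfl)
    · rfl
  right_inv := by rintro (i | ⟨⟨a, b⟩, h⟩) <;> rfl

/-- The inner integral, in the second variable, of the terms of the phase that depend on it. -/
def innerInt (m : ℕ) (r : triangle m → ℝ) (x : ℝ) : ℂ :=
  ∫ y in Icc (0 : ℝ) 1, 𝐞 ((triPrim m r x).eval y)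

lemma measurable_innerInt (m : ℕ) (r : triangle m → ℝ) : Measurable (innerInt m r) := by
  have hcont : Continuous fun q : ℝ × ℝ => (𝐞 ((triPrim m r q.1).eval q.2) : ℂ) := by fun_prop
  exact (hcont.stronglyMeasurable.integral_prod_right' (ν := volume.restrict (Icc 0 1))).measurable

lemma enorm_innerInt_le_one (m : ℕ) (r : triangle m → ℝ) (x : ℝ) : ‖innerInt m r x‖ₑ ≤ 1 :=
  (enorm_integral_le_lintegral_enorm _).trans
    (setLIntegral_Icc_le_one fun y => by rw [← ofReal_norm, Circle.norm_coe, ENNReal.ofReal_one])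

lemma Pphase_idxEquiv (m : ℕ) (f : Fin (m + 1) → ℝ) (r : triangle m → ℝ) (s t : ℝ) :
    Pphase (m + 1) (fun β => Sum.elim f r (idxEquiv m β)) ![s, t] =
      ∑ i, f i * s ^ (i + 1 : ℕ) +
        (triPrim m (fun p => (p.1.2 + 1).factorial * r p) s).eval t := by
  rw [Pphase, ← (idxEquiv m).symm.sum_comp, Fintype.sum_sum_type, eval_triPrim]
  simp only [Equiv.apply_symm_apply, Sum.elim_inl, Sum.elim_inr]
  congr 1
  · refine Finset.sum_congr rfl fun i _ => ?_
    change f i * s ^ ((i : ℕ) + 1) * t ^ 0 = _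
    rw [pow_zero, mul_one]
  · refine Finset.sum_congr rfl fun p _ => ?_
    change r p * s ^ p.1.1 * t ^ (p.1.2 + 1) = _
    field_simp

lemma Eone_idxEquiv (m : ℕ) (f : Fin (m + 1) → ℝ) (r : triangle m → ℝ) :
    Eone (m + 1) (fun β => Sum.elim f r (idxEquiv m β)) =
      extOp (m + 1) (Icc 0 1) (innerInt m fun p => (p.1.2 + 1).factorial * r p) f := by
  rw [Eone_eq_setIntegral_setIntegral, extOp]
  simp_rw [Pphase_idxEquiv, AddChar.map_add_eq_mul, Circle.coe_mul, integral_const_mul]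
  exact integral_congr_ae (.of_forall fun s => mul_comm _ _)

lemma inv_two_pow_le_of_mem_dyadicLevel_innerInt {m : ℕ} {r : triangle m → ℝ} {j : ℕ} {x : ℝ}
    (hx : x ∈ dyadicLevel (‖innerInt m r ·‖ₑ) j) :
    2⁻¹ ^ (j + 2) ≤ ∫⁻ y in Icc (0 : ℝ) 1, ENNReal.ofReal
      (cauchyWeight ((triPoly m ((derivScale m * 2⁻¹ ^ j) • r) x).eval y)) := by
  set h := derivScale m * 2⁻¹ ^ j
  have hh : 0 < h := mul_pos (derivScale_pos m) (by positivity)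
  have hdeg : 1 + ((triPrim m r x).natDegree + 1) * π ≤ 1 + (m + 2) * π := by
    have : ((triPrim m r x).natDegree : ℝ) ≤ m + 1 := mod_cast natDegree_triPrim_le m r x
    nlinarith [pi_pos]
  have hosc := enorm_integral_fourierChar_polynomial_le (triPrim m r x) zero_le_one hh
  rw [intervalIntegral.integral_of_le zero_le_one, ← integral_Icc_eq_integral_Ioc] at hosc
  simp only [derivative_triPrim, ← eval_triPoly_smul] at hosc
  exact inv_two_pow_succ_le_of_le_add (hx.1.le.trans
    (hosc.trans (add_le_add_right (ofReal_mul_derivScale_le hdeg j) _)))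

lemma volume_dyadicLevel_innerInt_le (m : ℕ) (r : triangle m → ℝ) (j : ℕ) :
    volume (Icc 0 1 ∩ dyadicLevel (‖innerInt m r ·‖ₑ) j) ≤
      2 ^ (j + 3) * weightMean m ((derivScale m * 2⁻¹ ^ j) • r) := by
  have hX := measurableSet_Icc (a := (0 : ℝ)) (b := 1) |>.inter
    (measurableSet_dyadicLevel (measurable_innerInt m r).enorm j)
  refine (measure_le_two_pow_mul_setLIntegral hX fun x hx =>
    inv_two_pow_le_of_mem_dyadicLevel_innerInt hx.2).trans ?_
  rw [weightMean]
  gcongr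
  · exact one_le_two
  · exact Nat.le_succ _
  · exact inter_subset_left

lemma sq_lt_critExponent (n : ℕ) : (n : ℝ) ^ 2 < critExponent n := by
  rw [cast_critExponent]
  nlinarith [mul_nonneg (Nat.cast_nonneg (α := ℝ) n) (sq_nonneg ((n : ℝ) - 2))]

lemma integrableOn_innerInt (m : ℕ) (r : triangle m → ℝ) : IntegrableOn (innerInt m r) (Icc 0 1) :=
  Measure.integrableOn_of_bounded (M := 1) (by simp) (measurable_innerInt m r).aestronglyMeasurable
    (.of_forall fun x => ENNReal.ofReal_le_one.1 (by
      rw [ofReal_norm]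
      exact enorm_innerInt_le_one m r x))

lemma enorm_extOp_le_tsum_dyadicLevel (n : ℕ) {g : ℝ → ℂ} (hg : Measurable g) {X : Set ℝ}
    (hX : MeasurableSet X) (hgX : IntegrableOn g X) (hg1 : ∀ x ∈ X, ‖g x‖ₑ ≤ 1) (f : Fin n → ℝ) :
    ‖extOp n X g f‖ₑ ≤ ∑' j, ‖extOp n (X ∩ dyadicLevel (‖g ·‖ₑ) j) g f‖ₑ :=
  enorm_setIntegral_le_tsum_dyadicLevel hX (integrable_mul_fourierChar hgX (by fun_prop)) hg.enorm
    hg1 (.of_forall fun x _ hx => by rw [enorm_eq_zero.1 hx, zero_mul])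

lemma exists_lintegral_extOp_innerInt_rpow_le {m : ℕ} (hm : 1 ≤ m) {e η : ℝ}
    (he : critExponent m < e) (hη : 0 < η) :
    ∃ C : ℝ≥0∞, C ≠ ⊤ ∧ ∀ r : triangle m → ℝ,
      ∫⁻ f, ‖extOp (m + 1) (Icc 0 1) (innerInt m r) f‖ₑ ^ (e + (m + 2).choose 2 + 2 * η) ≤
        C * ∑' j : ℕ, (2 : ℝ≥0∞) ^ (-((m + 2).choose 2 + η) * j) *
          weightMean m ((derivScale m * 2⁻¹ ^ j) • r) ^ e := by
  have he0 : 0 ≤ e := (Nat.cast_nonneg _).trans he.le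
  have hcrit : ((m + 1 : ℕ) : ℝ) ^ 2 < e + (m + 2).choose 2 + 2 * η := by
    have := sq_lt_critExponent (m + 1)
    rw [critExponent_succ] at this
    push_cast at this ⊢
    linarith
  have hgain : e < e + (m + 2).choose 2 + 2 * η - (m + 1 : ℕ) * ((m + 1 : ℕ) + 1) / 2 := by
    rw [Nat.cast_choose_two]
    push_cast
    linarith
  obtain ⟨B, hB, hext⟩ := exists_lintegral_extOp_rpow_le (by omega) hcrit hgain
  obtain ⟨C, hC, hdyadic⟩ := exists_lintegral_rpow_le_tsum_dyadic
    (volume : Measure (Fin (m + 1) → ℝ)) he0 (Nat.cast_nonneg ((m + 2).choose 2)) hη hB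
  refine ⟨C, hC, fun r => ?_⟩
  have hg := integrableOn_innerInt m r
  have hX (j : ℕ) := (measurableSet_Icc (a := (0 : ℝ)) (b := 1)).inter
    (measurableSet_dyadicLevel (measurable_innerInt m r).enorm j)
  refine hdyadic _
    (fun j f => ‖extOp (m + 1) (Icc 0 1 ∩ dyadicLevel (‖innerInt m r ·‖ₑ) j) (innerInt m r) f‖ₑ)
    _ (fun j => (continuous_extOp _ (hg.mono_set inter_subset_left)).measurable.enorm)
    (enorm_extOp_le_tsum_dyadicLevel _ (measurable_innerInt m r) measurableSet_Icc hg
      fun x _ => enorm_innerInt_le_one m r x) fun j => ?_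
  refine (hext _ inter_subset_left (hX j) _ (hg.mono_set inter_subset_left) (2⁻¹ ^ j)
    fun x hx => hx.2.2).trans ?_
  gcongr
  exact volume_dyadicLevel_innerInt_le m r j

lemma lintegral_Eone_rpow_lt_top {m : ℕ} (hm : 1 ≤ m) {p : ℝ} (hp : critExponent (m + 1) < p) :
    ∫⁻ x, ‖Eone (m + 1) x‖ₑ ^ p < ⊤ := by
  obtain ⟨η, hη, rfl⟩ : ∃ η > 0, critExponent m + η + (m + 2).choose 2 + 2 * η = p := by
    refine ⟨(p - critExponent (m + 1)) / 3, div_pos (sub_pos.2 hp) three_pos, ?_⟩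
    rw [critExponent_succ]
    push_cast
    ring
  set e := critExponent m + η
  have he : critExponent m < e := lt_add_of_pos_right _ hη
  obtain ⟨C, hC, hbound⟩ := exists_lintegral_extOp_innerInt_rpow_le hm he hη
  have hmeas : Measurable fun r : triangle m → ℝ =>
      ∑' j : ℕ, (2 : ℝ≥0∞) ^ (-((m + 2).choose 2 + η) * j) *
        weightMean m ((derivScale m * 2⁻¹ ^ j) • r) ^ e :=
    .tsum fun j => (((measurable_weightMean m).comp
      (measurable_const_smul _)).pow_const e).const_mul _
  have hfactorial (p : triangle m) : ((p.1.2 + 1).factorial : ℝ) ≠ 0 := by positivity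
  rw [lintegral_pi_split (idxEquiv m) ((measurable_Eone _).enorm.pow_const _)]
  simp_rw [Eone_idxEquiv]
  refine (lintegral_mono fun r => hbound _).trans_lt ?_
  rw [lintegral_const_mul' _ _ hC, lintegral_comp_diagonal hfactorial hmeas]
  refine ENNReal.mul_lt_top hC.lt_top (ENNReal.mul_lt_top ?_
    (lintegral_tsum_weightMean_lt_top hη (lintegral_weightMean_rpow_lt_top m he)))
  rw [ENNReal.inv_lt_top, enorm_pos]
  exact Finset.prod_ne_zero_iff.2 fun p _ => hfactorial p

instance (k : ℕ) : DecidableEq (Idx k) := by unfold Idx; infer_instance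

/-- The multi-index `(i, j)`. -/
def Idx.mk {k : ℕ} (i j : ℕ) (h : 1 ≤ i + j ∧ i + j ≤ k) : Idx k :=
  ⟨(⟨i, by omega⟩, ⟨j, by omega⟩), h⟩

lemma Idx.eq_mk {k i j : ℕ} {β : Idx k} (h : 1 ≤ i + j ∧ i + j ≤ k) (h₁ : (β.1.1 : ℕ) = i)
    (h₂ : (β.1.2 : ℕ) = j) : β = Idx.mk i j h :=
  Subtype.ext (Prod.ext (Fin.ext h₁) (Fin.ext h₂))

open Polynomial in
/-- The coefficient of `s ^ i * w ^ j` in `s ^ β₁ * (w + (θ * s + b)) ^ β₂`. -/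
def shearCoef (θ b : ℝ) (β₁ β₂ i j : ℕ) : ℝ :=
  β₂.choose j * (X ^ β₁ * (C θ * X + C b) ^ (β₂ - j)).coeff i

section ShearCoef

variable {θ b : ℝ} {β₁ β₂ i j : ℕ}

lemma shearCoef_eq_zero_of_lt (h : β₂ < j) : shearCoef θ b β₁ β₂ i j = 0 := by
  rw [shearCoef, Nat.choose_eq_zero_of_lt h, Nat.cast_zero, zero_mul]

lemma shearCoef_self : shearCoef θ b β₁ β₂ i β₂ = if i = β₁ then 1 else 0 := by
  rw [shearCoef, Nat.choose_self, Nat.cast_one, one_mul, Nat.sub_self, pow_zero, mul_one,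
    Polynomial.coeff_X_pow]

open Polynomial in
lemma natDegree_X_pow_mul_linear_pow_le (n : ℕ) :
    (X ^ β₁ * (C θ * X + C b) ^ n).natDegree ≤ β₁ + n := by
  refine natDegree_mul_le_of_le (natDegree_X_pow_le _) ((natDegree_pow_le_of_le n
    natDegree_linear_le).trans_eq (mul_one n))

lemma shearCoef_eq_zero_of_add_lt (h : β₁ + β₂ < i + j) : shearCoef θ b β₁ β₂ i j = 0 := by
  rcases lt_or_ge β₂ j with hj | hj
  · exact shearCoef_eq_zero_of_lt hj
  · rw [shearCoef, Polynomial.coeff_eq_zero_of_natDegree_lt, mul_zero]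
    exact (natDegree_X_pow_mul_linear_pow_le _).trans_lt (by omega)

lemma pow_mul_add_pow_eq_sum_shearCoef {k : ℕ} (h : β₁ + β₂ ≤ k) (θ b s w : ℝ) :
    s ^ β₁ * (w + (θ * s + b)) ^ β₂ = ∑ i ∈ Finset.range (k + 1), ∑ j ∈ Finset.range (k + 1),
      shearCoef θ b β₁ β₂ i j * s ^ i * w ^ j := by
  have hterm (j : ℕ) :
      s ^ β₁ * (w ^ j * (θ * s + b) ^ (β₂ - j) * β₂.choose j) =
        ∑ i ∈ Finset.range (k + 1), shearCoef θ b β₁ β₂ i j * s ^ i * w ^ j := by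
    have heval := Polynomial.eval_eq_sum_range' (n := k + 1)
      (Nat.lt_succ_of_le ((natDegree_X_pow_mul_linear_pow_le (θ := θ) (b := b) (β₁ := β₁)
        (β₂ - j)).trans (by omega))) s
    simp only [Polynomial.eval_mul, Polynomial.eval_pow, Polynomial.eval_X, Polynomial.eval_add,
      Polynomial.eval_C] at heval
    rw [show s ^ β₁ * (w ^ j * (θ * s + b) ^ (β₂ - j) * β₂.choose j) =
      β₂.choose j * (s ^ β₁ * (θ * s + b) ^ (β₂ - j)) * w ^ j by ring, heval, Finset.mul_sum,
      Finset.sum_mul]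
    exact Finset.sum_congr rfl fun i _ => by rw [shearCoef]; ring
  rw [Finset.sum_comm, add_pow, Finset.mul_sum,
    Finset.sum_congr rfl fun j _ => hterm j]
  refine Finset.sum_subset (Finset.range_subset_range.2 (by omega)) fun j _ hj =>
    Finset.sum_eq_zero fun i _ => ?_
  rw [shearCoef_eq_zero_of_lt (by rw [Finset.mem_range] at hj; omega), zero_mul, zero_mul]

end ShearCoef

lemma sum_range_sum_range_eq_add_sum_Idx {A : Type*} [AddCommMonoid A] {k : ℕ} {g : ℕ → ℕ → A}
    (hg : ∀ i j, k < i + j → g i j = 0) :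
    ∑ i ∈ Finset.range (k + 1), ∑ j ∈ Finset.range (k + 1), g i j =
      g 0 0 + ∑ γ : Idx k, g γ.1.1 γ.1.2 := by
  simp only [Finset.sum_range]
  rw [← Fintype.sum_prod_type' (f := fun i j : Fin (k + 1) => g i j),
    ← Finset.sum_filter_not_add_sum_filter Finset.univ
      (fun q : Fin (k + 1) × Fin (k + 1) => 1 ≤ (q.1 : ℕ) + q.2 ∧ (q.1 : ℕ) + q.2 ≤ k)]
  congr 1
  · refine Finset.sum_eq_single_of_mem (0, 0) (by simp) fun q hq hne => hg _ _ ?_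
    have hpos : (q.1 : ℕ) ≠ 0 ∨ (q.2 : ℕ) ≠ 0 := by
      by_contra! h
      exact hne (Prod.ext (Fin.ext h.1) (Fin.ext h.2))
    have := (Finset.mem_filter.1 hq).2
    omega
  · exact Finset.sum_subtype _ (by simp) _

/-- The matrix that maps the non-constant coefficients of a polynomial `P` of degree at most `k`
to those of `P (s, w + (θ * s + b))`. -/
def shearMatrix (k : ℕ) (θ b : ℝ) : Matrix (Idx k) (Idx k) ℝ :=
  fun γ β => shearCoef θ b β.1.1 β.1.2 γ.1.1 γ.1.2

lemma det_shearMatrix (k : ℕ) (θ b : ℝ) : (shearMatrix k θ b).det = 1 := by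
  have htri : (shearMatrix k θ b).BlockTriangular fun γ => γ.1.2 := fun γ β hlt =>
    shearCoef_eq_zero_of_lt hlt
  have hblock (a : Fin (k + 1)) : (shearMatrix k θ b).toSquareBlock (fun γ => γ.1.2) a = 1 := by
    ext ⟨γ, hγ⟩ ⟨β, hβ⟩
    change shearCoef θ b β.1.1 β.1.2 γ.1.1 γ.1.2 = _
    rw [Matrix.one_apply, show γ.1.2 = β.1.2 from hγ.trans hβ.symm, shearCoef_self]
    refine if_congr ⟨fun h => ?_, fun h => ?_⟩ rfl rfl
    · exact Subtype.ext (Subtype.ext (Prod.ext (Fin.ext h) (hγ.trans hβ.symm)))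
    · exact congrArg (fun q => (q.1.1.1 : ℕ)) h
  rw [htri.det_fintype]
  exact Finset.prod_eq_one fun a _ => by rw [hblock, Matrix.det_one]

lemma exists_Pphase_eq_add_Pphase_shearMatrix (k : ℕ) (θ b : ℝ) (x : Idx k → ℝ) :
    ∃ c : ℝ, ∀ s y : ℝ, Pphase k x ![s, y] =
      c + Pphase k ((shearMatrix k θ b).mulVec x) ![s, y - (θ * s + b)] := by
  refine ⟨∑ β : Idx k, x β * shearCoef θ b β.1.1 β.1.2 0 0, fun s y => ?_⟩
  have hmono (β : Idx k) : x β * s ^ (β.1.1 : ℕ) * y ^ (β.1.2 : ℕ) =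
      x β * shearCoef θ b β.1.1 β.1.2 0 0 + ∑ γ : Idx k, shearMatrix k θ b γ β * x β *
        s ^ (γ.1.1 : ℕ) * (y - (θ * s + b)) ^ (γ.1.2 : ℕ) := by
    have hexp := pow_mul_add_pow_eq_sum_shearCoef β.2.2 θ b s (y - (θ * s + b))
    rw [sub_add_cancel, sum_range_sum_range_eq_add_sum_Idx fun i j hij => by
      rw [shearCoef_eq_zero_of_add_lt (β.2.2.trans_lt hij), zero_mul, zero_mul]] at hexp
    rw [mul_assoc, hexp, mul_add, Finset.mul_sum, pow_zero, pow_zero, mul_one, mul_one]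
    congr 1
    exact Finset.sum_congr rfl fun γ _ => by rw [shearMatrix]; ring
  simp only [Pphase, Matrix.cons_val_zero, Matrix.cons_val_one]
  rw [Finset.sum_congr rfl fun β _ => hmono β, Finset.sum_add_distrib, Finset.sum_comm]
  congr 1
  refine Finset.sum_congr rfl fun γ _ => ?_
  rw [Matrix.mulVec, dotProduct, Finset.sum_mul, Finset.sum_mul]

section TopCoefficients

variable {k : ℕ} (hk : 2 ≤ k) (θ b : ℝ) (x : Idx k → ℝ)

lemma shearMatrix_mulVec_top :
    (shearMatrix k θ b).mulVec x (Idx.mk 0 k (by omega)) = x (Idx.mk 0 k (by omega)) := by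
  rw [Matrix.mulVec, dotProduct, Fintype.sum_eq_single (Idx.mk 0 k (by omega))]
  · change shearCoef θ b 0 k 0 k * _ = _
    rw [shearCoef_self, if_pos rfl, one_mul]
  · intro β hβ
    have hlt : (β.1.2 : ℕ) < k := by
      by_contra hge
      have := β.2
      exact hβ (Idx.eq_mk _ (by omega) (by omega))
    change shearCoef θ b _ _ 0 k * _ = 0
    rw [shearCoef_eq_zero_of_lt hlt, zero_mul]

open Polynomial in
lemma shearMatrix_mulVec_subtop {i : ℕ} (hi : i ≤ 1) :
    (shearMatrix k θ b).mulVec x (Idx.mk i (k - 1) (by omega)) =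
      x (Idx.mk i (k - 1) (by omega)) +
        k * (C θ * X + C b).coeff i * x (Idx.mk 0 k (by omega)) := by
  rw [Matrix.mulVec, dotProduct, Fintype.sum_eq_add (Idx.mk i (k - 1) (by omega))
    (Idx.mk 0 k (by omega))]
  · change shearCoef θ b i (k - 1) i (k - 1) * _ + shearCoef θ b 0 k i (k - 1) * _ = _
    rw [shearCoef_self, if_pos rfl, one_mul, shearCoef, Nat.sub_sub_self (by omega), pow_zero,
      one_mul, pow_one, Nat.choose_symm_of_eq_add (show k = (k - 1) + 1 by omega),
      Nat.choose_one_right]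
  · intro h
    have : k - 1 = k := congrArg (fun β : Idx k => (β.1.2 : ℕ)) h
    omega
  · rintro β ⟨hne, hne_top⟩
    change shearCoef θ b _ _ i (k - 1) * _ = 0
    have hβ := β.2
    rcases lt_trichotomy (β.1.2 : ℕ) (k - 1) with hlt | heq | hgt
    · rw [shearCoef_eq_zero_of_lt hlt, zero_mul]
    · rw [heq, shearCoef_self, if_neg fun h => hne (Idx.eq_mk _ h.symm heq), zero_mul]
    · exact absurd (Idx.eq_mk _ (by omega) (by omega)) hne_top

end TopCoefficients

/-- The uniform probability measure on the unit square. -/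
def unitSquare : Measure (ℝ × ℝ) :=
  (volume.restrict (Icc 0 1)).prod (volume.restrict (Icc 0 1))

instance isProbabilityMeasure_restrict_Icc_zero_one :
    IsProbabilityMeasure (volume.restrict (Icc (0 : ℝ) 1)) := ⟨by simp⟩

instance isProbabilityMeasure_unitSquare : IsProbabilityMeasure unitSquare := by
  unfold unitSquare
  infer_instance

lemma ae_unitSquare : ∀ᵐ q ∂unitSquare, q.1 ∈ Icc (0 : ℝ) 1 ∧ q.2 ∈ Icc (0 : ℝ) 1 := by
  rw [unitSquare, Measure.prod_restrict]
  exact ae_restrict_mem (measurableSet_Icc.prod measurableSet_Icc)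

lemma integrable_fourierChar_mul {α : Type*} [MeasurableSpace α] {μ : Measure α}
    [IsFiniteMeasure μ] {φ w : α → ℝ} (hφ : Measurable φ) (hw : Measurable w)
    (hw_le : ∀ q, |w q| ≤ 1) : Integrable (fun q => (𝐞 (φ q) : ℂ) * (w q : ℂ)) μ := by
  have hcont : Continuous fun t : ℝ => (𝐞 t : ℂ) := by fun_prop
  refine .of_bound ((hcont.measurable.comp hφ).fun_mul
    (Complex.measurable_ofReal.comp hw)).aestronglyMeasurable 1 (.of_forall fun q => ?_)
  have hnorm : ‖(𝐞 (φ q) : ℂ) * (w q : ℂ)‖ = |w q| := by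
    rw [norm_mul, Circle.norm_coe, one_mul, Complex.norm_real, Real.norm_eq_abs]
  exact hnorm.trans_le (hw_le q)

/-- The Fejér kernel on the line, normalized so that it is the Fourier transform of the triangular
density on `[-1, 1]`. -/
def fejerKernel (t : ℝ) : ℝ := sinc (π * t) ^ 2

@[fun_prop]
lemma measurable_fejerKernel : Measurable fejerKernel := by
  unfold fejerKernel
  fun_prop

lemma fejerKernel_nonneg (t : ℝ) : 0 ≤ fejerKernel t := sq_nonneg _

lemma abs_fejerKernel_le_one (t : ℝ) : |fejerKernel t| ≤ 1 := by
  rw [fejerKernel, abs_pow]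
  exact pow_le_one₀ (abs_nonneg _) (abs_sinc_le_one _)

lemma setIntegral_Icc_fourierChar_mul_sub_half (t : ℝ) :
    ∫ u in Icc (0 : ℝ) 1, (𝐞 (t * (u - 1 / 2)) : ℂ) = sinc (π * t) := by
  rcases eq_or_ne t 0 with rfl | ht
  · simp
  have hchar (u : ℝ) : (𝐞 (t * (u - 1 / 2)) : ℂ) =
      Complex.exp (((2 * π * t) * u - π * t : ℝ) * Complex.I) := by
    rw [Real.fourierChar_apply]
    congr 3
    ring
  have hsub := intervalIntegral.smul_integral_comp_mul_sub (a := 0) (b := 1)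
    (fun v : ℝ => Complex.exp (v * Complex.I)) (2 * π * t) (π * t)
  rw [mul_zero, zero_sub, mul_one, show 2 * π * t - π * t = π * t by ring,
    integral_exp_mul_I_eq_sinc, intervalIntegral.integral_of_le zero_le_one,
    ← integral_Icc_eq_integral_Ioc, Complex.real_smul] at hsub
  refine mul_left_cancel₀ (a := ((2 * π * t : ℝ) : ℂ)) (mod_cast by positivity) ?_
  simp only [hchar]
  rw [hsub]
  push_cast
  ring

lemma integral_unitSquare_fourierChar_mul_eq_fejerKernel (t : ℝ) :
    ∫ u, (𝐞 (t * (u.1 + u.2 - 1)) : ℂ) ∂unitSquare = fejerKernel t := by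
  have hsplit (u : ℝ × ℝ) : (𝐞 (t * (u.1 + u.2 - 1)) : ℂ) =
      𝐞 (t * (u.1 - 1 / 2)) * 𝐞 (t * (u.2 - 1 / 2)) := by
    rw [← Circle.coe_mul, ← AddChar.map_add_eq_mul]
    congr 2
    ring
  simp only [hsplit]
  rw [unitSquare, integral_prod_mul (fun u : ℝ => (𝐞 (t * (u - 1 / 2)) : ℂ))
    (fun u : ℝ => (𝐞 (t * (u - 1 / 2)) : ℂ)), setIntegral_Icc_fourierChar_mul_sub_half,
    fejerKernel, Complex.ofReal_pow, sq]

lemma quarter_le_fejerKernel {t : ℝ} (ht : |t| ≤ 1 / 2) : 1 / 4 ≤ fejerKernel t := by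
  suffices 1 / 2 ≤ sinc (π * t) by rw [fejerKernel]; nlinarith
  wlog h0 : 0 ≤ t generalizing t
  · simpa using this (t := -t) (by rwa [abs_neg]) (by linarith)
  rcases h0.eq_or_lt with rfl | hpos
  · norm_num
  have hjordan := mul_le_sin (x := π * t) (by positivity) (by
    rw [abs_of_pos hpos] at ht
    nlinarith [pi_pos])
  rw [sinc_of_ne_zero (by positivity), le_div_iff₀ (by positivity)]
  refine le_trans ?_ hjordan
  refine mul_le_mul_of_nonneg_right ?_ (by positivity)
  rw [div_le_div_iff₀ two_pos pi_pos]
  linarith [pi_le_four]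

lemma fejerKernel_le_inv_sq {t : ℝ} (ht : t ≠ 0) : fejerKernel t ≤ (9 * t ^ 2)⁻¹ := by
  have hπt : π * t ≠ 0 := by positivity
  rw [fejerKernel, sinc_of_ne_zero hπt, div_pow, mul_pow, div_eq_mul_inv]
  have hsin : sin (π * t) ^ 2 ≤ 1 := sin_sq_le_one _
  have hπ : (9 : ℝ) ≤ π ^ 2 := by nlinarith [pi_gt_three]
  calc sin (π * t) ^ 2 * (π ^ 2 * t ^ 2)⁻¹ ≤ 1 * (9 * t ^ 2)⁻¹ := by gcongr
    _ = _ := one_mul _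

/-- A function of positive integral that lies below `u ↦ c (u) * fejerKernel (8 * u)` whenever
`c ≥ -1` everywhere and `c ≥ 1 / 2` on `[-1, 1]`. -/
def stripMinorant (u : ℝ) : ℝ :=
  (Icc (-(1 / 16)) (1 / 16)).indicator (fun _ => (1 / 8 : ℝ)) u - cauchyWeight u / 288

@[fun_prop]
lemma measurable_stripMinorant : Measurable stripMinorant :=
  (measurable_const.indicator measurableSet_Icc).sub
    (continuous_cauchyWeight.measurable.div_const _)

lemma abs_stripMinorant_le_one (u : ℝ) : |stripMinorant u| ≤ 1 := by
  have hpos := cauchyWeight_pos u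
  have hle := cauchyWeight_le_one u
  rw [abs_le, stripMinorant, indicator]
  split_ifs <;> constructor <;> linarith

lemma stripMinorant_le_mul_fejerKernel {u c : ℝ} (hc : -1 ≤ c) (hc' : |u| ≤ 1 → 1 / 2 ≤ c) :
    stripMinorant u ≤ c * fejerKernel (8 * u) := by
  have hweight := cauchyWeight_pos u
  have hK := fejerKernel_nonneg (8 * u)
  rw [stripMinorant]
  by_cases hu : u ∈ Icc (-(1 / 16) : ℝ) (1 / 16)
  · have habs : |u| ≤ 1 / 16 := abs_le.2 hu
    have hK' : 1 / 4 ≤ fejerKernel (8 * u) := quarter_le_fejerKernel (by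
      rw [abs_mul, abs_of_pos (by norm_num : (0 : ℝ) < 8)]; linarith)
    rw [indicator_of_mem hu]
    nlinarith [hc' (by linarith)]
  rw [indicator_of_notMem hu, zero_sub]
  rcases le_or_gt |u| 1 with h1 | h1
  · nlinarith [hc' h1]
  · have hu0 : u ≠ 0 := by
      rintro rfl
      norm_num at h1
    have hu2 : 1 ≤ u ^ 2 := one_le_sq_iff_one_le_abs _ |>.2 h1.le
    have htail : fejerKernel (8 * u) ≤ cauchyWeight u / 288 := by
      refine (fejerKernel_le_inv_sq (by positivity)).trans ?_
      rw [cauchyWeight, ← one_div, ← one_div, div_div,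
        div_le_div_iff₀ (by positivity) (by positivity)]
      nlinarith
    nlinarith

lemma le_intervalIntegral_stripMinorant {a b : ℝ} (ha : a ≤ -(1 / 16)) (hb : 1 / 16 ≤ b) :
    1 / 250 ≤ ∫ u in a..b, stripMinorant u := by
  have hweight : Integrable cauchyWeight := integrable_inv_one_add_sq
  have hind : Integrable ((Icc (-(1 / 16)) (1 / 16)).indicator (fun _ : ℝ => (1 / 8 : ℝ))) :=
    (integrable_indicator_iff measurableSet_Icc).2 (by simp)
  have hweight_le : ∫ u in Ioc a b, cauchyWeight u ≤ π :=
    (setIntegral_le_integral hweight (.of_forall fun u => (cauchyWeight_pos u).le)).trans_eq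
      integral_univ_inv_one_add_sq
  have hind_eq : ∫ u in Icc a b, (Icc (-(1 / 16)) (1 / 16)).indicator (fun _ : ℝ => (1 / 8 : ℝ)) u =
      1 / 64 := by
    rw [setIntegral_indicator measurableSet_Icc, inter_eq_right.2 (Icc_subset_Icc ha hb),
      setIntegral_const, Real.volume_real_Icc_of_le (by norm_num)]
    norm_num
  simp only [stripMinorant]
  rw [intervalIntegral.integral_of_le (by linarith), integral_sub hind.integrableOn
    (hweight.integrableOn.div_const _), integral_div, ← integral_Icc_eq_integral_Ioc, hind_eq]
  linarith [pi_lt_d2]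

lemma inv_div_le_setIntegral_stripMinorant {D y₀ : ℝ} (hD : 1 ≤ D)
    (hy₀ : y₀ ∈ Icc (1 / 4 : ℝ) (3 / 4)) :
    D⁻¹ / 250 ≤ ∫ y in Icc (0 : ℝ) 1, stripMinorant (D * (y - y₀)) := by
  have hD0 : 0 < D := by linarith
  have hscale := intervalIntegral.integral_comp_mul_sub (a := 0) (b := 1) stripMinorant hD0.ne'
    (D * y₀)
  simp only [← mul_sub] at hscale
  rw [integral_Icc_eq_integral_Ioc, ← intervalIntegral.integral_of_le zero_le_one, hscale,
    smul_eq_mul, div_eq_mul_one_div]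
  gcongr
  exact le_intervalIntegral_stripMinorant (by nlinarith [hy₀.1]) (by nlinarith [hy₀.2])

lemma re_fourierChar (t : ℝ) : (𝐞 t : ℂ).re = cos (2 * π * t) := by
  rw [Real.fourierChar_apply, Complex.exp_ofReal_mul_I_re]

lemma half_le_cos_two_pi_mul {t : ℝ} (ht : |t| ≤ 1 / 6) : 1 / 2 ≤ cos (2 * π * t) := by
  rw [← cos_abs, ← cos_pi_div_three]
  refine cos_le_cos_of_nonneg_of_le_pi (abs_nonneg _) (by linarith [pi_pos]) ?_
  rw [abs_mul, abs_of_pos (by positivity)]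
  nlinarith [pi_pos]

section Strip

variable {Φ : ℝ × ℝ → ℝ} {ℓ : ℝ → ℝ} {D : ℝ}

lemma inv_div_le_integral_unitSquare_stripMinorant (hℓ : Measurable ℓ)
    (hℓ_mem : ∀ s ∈ Icc (0 : ℝ) 1, ℓ s ∈ Icc (1 / 4 : ℝ) (3 / 4)) (hD : 1 ≤ D) :
    D⁻¹ / 250 ≤ ∫ q, stripMinorant (D * (q.2 - ℓ q.1)) ∂unitSquare := by
  have hint : Integrable (fun q : ℝ × ℝ => stripMinorant (D * (q.2 - ℓ q.1))) unitSquare :=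
    .of_bound (Measurable.aestronglyMeasurable (by fun_prop)) 1
      (.of_forall fun q => abs_stripMinorant_le_one _)
  calc D⁻¹ / 250 = ∫ s in Icc (0 : ℝ) 1, D⁻¹ / 250 := by simp
    _ ≤ ∫ s in Icc (0 : ℝ) 1, ∫ y in Icc (0 : ℝ) 1, stripMinorant (D * (y - ℓ s)) :=
      setIntegral_mono_on (integrable_const _) hint.integral_prod_left measurableSet_Icc
        fun s hs => inv_div_le_setIntegral_stripMinorant hD (hℓ_mem s hs)
    _ = _ := (integral_prod _ hint).symm

lemma inv_div_le_norm_integral_fourierChar_mul_fejerKernel (hΦ : Measurable Φ) (hℓ : Measurable ℓ)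
    (hℓ_mem : ∀ s ∈ Icc (0 : ℝ) 1, ℓ s ∈ Icc (1 / 4 : ℝ) (3 / 4)) (hD : 1 ≤ D)
    (hsmall : ∀ q : ℝ × ℝ, q.1 ∈ Icc (0 : ℝ) 1 → |D * (q.2 - ℓ q.1)| ≤ 1 → |Φ q| ≤ 1 / 6) :
    D⁻¹ / 250 ≤ ‖∫ q, (𝐞 (Φ q) : ℂ) * (fejerKernel (8 * (D * (q.2 - ℓ q.1))) : ℂ)
      ∂unitSquare‖ := by
  have hint := integrable_fourierChar_mul (μ := unitSquare) hΦ
    (w := fun q => fejerKernel (8 * (D * (q.2 - ℓ q.1)))) (by fun_prop)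
    fun q => abs_fejerKernel_le_one _
  refine (inv_div_le_integral_unitSquare_stripMinorant hℓ hℓ_mem hD).trans
    (le_trans ?_ (Complex.re_le_norm _))
  rw [← RCLike.re_eq_complex_re, ← integral_re hint]
  refine integral_mono_ae (.of_bound (Measurable.aestronglyMeasurable (by fun_prop)) 1
      (.of_forall fun q => abs_stripMinorant_le_one _)) hint.re ?_
  filter_upwards [ae_unitSquare] with q hq
  rw [RCLike.re_eq_complex_re, Complex.re_mul_ofReal, re_fourierChar]
  exact stripMinorant_le_mul_fejerKernel (neg_one_le_cos _) fun hstrip =>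
    half_le_cos_two_pi_mul (hsmall q hq.1 hstrip)

end Strip

section Shear

variable {k : ℕ} (θ b : ℝ) (z : Idx k → ℝ)

/-- The phase polynomial with coefficients `z`, sheared so as to expand about the line
`y = θ * s + b`. -/
def shearedPhase (q : ℝ × ℝ) : ℝ :=
  Pphase k z ![q.1, q.2 - (θ * q.1 + b)]

/-- The oscillatory integral over the unit square with phase `shearedPhase θ b z`. -/
def shearedIntegral : ℂ :=
  ∫ q, (𝐞 (shearedPhase θ b z q) : ℂ) ∂unitSquare

lemma continuous_uncurry_shearedPhase :
    Continuous fun w : (Idx k → ℝ) × (ℝ × ℝ) => shearedPhase θ b w.1 w.2 :=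
  (continuous_Pphase k).comp (by fun_prop :
    Continuous fun w : (Idx k → ℝ) × (ℝ × ℝ) => (w.1, ![w.2.1, w.2.2 - (θ * w.2.1 + b)]))

@[fun_prop]
lemma continuous_shearedPhase : Continuous (shearedPhase θ b z) :=
  (continuous_uncurry_shearedPhase θ b).comp (by fun_prop : Continuous fun q => (z, q))

lemma integrable_fourierChar_shearedPhase :
    Integrable (fun q => (𝐞 (shearedPhase θ b z q) : ℂ)) unitSquare :=
  .of_bound (Continuous.aestronglyMeasurable (by fun_prop)) 1
    (.of_forall fun q => (Circle.norm_coe _).le)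

@[fun_prop]
lemma measurable_shearedIntegral : Measurable (shearedIntegral (k := k) θ b) := by
  have hcont := continuous_uncurry_shearedPhase (k := k) θ b
  have hchar : Continuous fun w : (Idx k → ℝ) × (ℝ × ℝ) => (𝐞 (shearedPhase θ b w.1 w.2) : ℂ) := by
    fun_prop
  exact (hchar.stronglyMeasurable.integral_prod_right' (ν := unitSquare)).measurable

lemma norm_Eone_eq_norm_shearedIntegral (x : Idx k → ℝ) :
    ‖Eone k x‖ = ‖shearedIntegral θ b ((shearMatrix k θ b).mulVec x)‖ := by
  obtain ⟨c, hc⟩ := exists_Pphase_eq_add_Pphase_shearMatrix k θ b x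
  have hchar (s y : ℝ) : (𝐞 (Pphase k x ![s, y]) : ℂ) =
      𝐞 c * 𝐞 (shearedPhase θ b ((shearMatrix k θ b).mulVec x) (s, y)) := by
    rw [hc, AddChar.map_add_eq_mul, Circle.coe_mul, shearedPhase]
  rw [Eone_eq_setIntegral_setIntegral, shearedIntegral, unitSquare,
    integral_prod _ (integrable_fourierChar_shearedPhase θ b _)]
  simp only [hchar, integral_const_mul, norm_mul, Circle.norm_coe, one_mul]

lemma norm_Eone_le_one (x : Idx k → ℝ) : ‖Eone k x‖ ≤ 1 := by
  rw [norm_Eone_eq_norm_shearedIntegral 0 0 x, shearedIntegral]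
  exact (norm_integral_le_of_norm_le_const (C := 1)
    (.of_forall fun q => (Circle.norm_coe _).le)).trans (by simp)

end Shear

lemma measurable_pi_single {α ι : Type*} [MeasurableSpace α] [DecidableEq ι] (i : ι) {v : α → ℝ}
    (hv : Measurable v) : Measurable fun u => (Pi.single i (v u) : ι → ℝ) := by
  refine measurable_pi_lambda _ fun j => ?_
  rcases eq_or_ne j i with rfl | hj
  · simpa only [Pi.single_eq_same] using hv
  · simp only [Pi.single_eq_of_ne hj, measurable_const]

section LinearCoefficient

variable {k : ℕ} (hk : 2 ≤ k) (θ b : ℝ) (z : Idx k → ℝ)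

/-- The translations of the coefficient of `y` over which the oscillatory integral is averaged; they
average characters to the Fejér kernel. -/
def linearShift (D : ℝ) (u : ℝ × ℝ) : Idx k → ℝ :=
  Pi.single (Idx.mk 0 1 (by omega)) (8 * D * (u.1 + u.2 - 1))

lemma measurable_linearShift (D : ℝ) : Measurable (linearShift hk D) :=
  measurable_pi_single _ (by fun_prop)

lemma shearedPhase_add_linearShift (D : ℝ) (u q : ℝ × ℝ) :
    shearedPhase θ b (z + linearShift hk D u) q =
      shearedPhase θ b z q + 8 * (D * (q.2 - (θ * q.1 + b))) * (u.1 + u.2 - 1) := by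
  simp only [shearedPhase, Pphase, Pi.add_apply, add_mul, Finset.sum_add_distrib, linearShift]
  congr 1
  rw [Fintype.sum_eq_single (Idx.mk 0 1 (by omega)) fun γ hγ => by
    rw [Pi.single_eq_of_ne hγ, zero_mul, zero_mul], Pi.single_eq_same]
  simp only [Idx.mk, pow_zero, pow_one, Matrix.cons_val_zero, Matrix.cons_val_one]
  ring

lemma integral_shearedIntegral_add_linearShift (D : ℝ) :
    ∫ u, shearedIntegral θ b (z + linearShift hk D u) ∂unitSquare =
      ∫ q, (𝐞 (shearedPhase θ b z q) : ℂ) *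
        (fejerKernel (8 * (D * (q.2 - (θ * q.1 + b)))) : ℂ) ∂unitSquare := by
  have hchar (u q : ℝ × ℝ) : (𝐞 (shearedPhase θ b (z + linearShift hk D u) q) : ℂ) =
      𝐞 (shearedPhase θ b z q) *
        𝐞 (8 * (D * (q.2 - (θ * q.1 + b))) * (u.1 + u.2 - 1)) := by
    rw [shearedPhase_add_linearShift, AddChar.map_add_eq_mul, Circle.coe_mul]
  simp only [shearedIntegral, hchar]
  rw [integral_integral_swap]
  · simp only [integral_const_mul, integral_unitSquare_fourierChar_mul_eq_fejerKernel]
  · refine .of_bound (Continuous.aestronglyMeasurable ?_) 1 (.of_forall fun q => ?_)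
    · unfold Function.uncurry
      fun_prop
    · rw [Function.uncurry, norm_mul, Circle.norm_coe, Circle.norm_coe, one_mul]

end LinearCoefficient

/-- The side length of the coefficient box `smallBox k 1`, chosen so that the phase is at most `1/6`
on the unit square. -/
def boxScale (k : ℕ) : ℝ := (12 * ((Fintype.card (Idx k) : ℝ) + 1))⁻¹

lemma boxScale_pos (k : ℕ) : 0 < boxScale k := by unfold boxScale; positivity

lemma boxScale_le_one (k : ℕ) : boxScale k ≤ 1 := by
  refine inv_le_one_of_one_le₀ ?_
  have : (0 : ℝ) ≤ Fintype.card (Idx k) := Nat.cast_nonneg _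
  linarith

/-- A box of coefficients whose phases, sheared about a line, are small within distance `D⁻¹` of
that line. -/
def smallBox (k : ℕ) (D : ℝ) : Set (Idx k → ℝ) :=
  univ.pi fun γ => Icc (boxScale k * D ^ (γ.1.2 : ℕ)) (2 * (boxScale k * D ^ (γ.1.2 : ℕ)))

/-- An enlargement of `smallBox` that contains its translates by `linearShift`. The coefficient of
`y ^ k` is kept away from `0`, which separates the preimages under different shears. -/
def bigBox (k : ℕ) (D : ℝ) : Set (Idx k → ℝ) :=
  univ.pi fun γ => Icc
    (if (γ.1.2 : ℕ) = k then boxScale k * D ^ (γ.1.2 : ℕ) else -(10 * D ^ (γ.1.2 : ℕ)))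
    (10 * D ^ (γ.1.2 : ℕ))

lemma measurableSet_smallBox (k : ℕ) (D : ℝ) : MeasurableSet (smallBox k D) :=
  .univ_pi fun _ => measurableSet_Icc

lemma measurableSet_bigBox (k : ℕ) (D : ℝ) : MeasurableSet (bigBox k D) :=
  .univ_pi fun _ => measurableSet_Icc

lemma le_of_mem_bigBox {k : ℕ} {D : ℝ} {z : Idx k → ℝ} (hz : z ∈ bigBox k D) {γ : Idx k}
    (hγ : (γ.1.2 : ℕ) = k) : boxScale k * D ^ (γ.1.2 : ℕ) ≤ z γ := by
  have hzγ := (hz γ (mem_univ _)).1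
  rwa [if_pos hγ] at hzγ

lemma abs_le_of_mem_bigBox {k : ℕ} {D : ℝ} {z : Idx k → ℝ} (hz : z ∈ bigBox k D) {γ : Idx k}
    (hγ : (γ.1.2 : ℕ) ≠ k) : |z γ| ≤ 10 * D ^ (γ.1.2 : ℕ) := by
  have hzγ := hz γ (mem_univ _)
  simp only [if_neg hγ] at hzγ
  exact abs_le.2 hzγ

lemma sum_triangle_snd_add_one (m : ℕ) : ∑ p : triangle m, (p.1.2 + 1) = (m + 3).choose 3 := by
  induction m with
  | zero => rfl
  | succ m ih =>
    have hshift : ∑ p : triangle m, (p.1.2 + 1 + 1) = (m + 3).choose 3 + (m + 2).choose 2 := by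
      rw [Finset.sum_add_distrib, ih, Finset.sum_const, Finset.card_univ, card_triangle,
        smul_eq_mul, mul_one]
    rw [← (triangleEquiv m).symm.sum_comp, Fintype.sum_sum_type]
    have hbase : ∑ i : Fin (m + 2), (((triangleEquiv m).symm (Sum.inl i)).1.2 + 1) = m + 2 := by
      simp [triangleEquiv]
    change _ + ∑ p : triangle m, (p.1.2 + 1 + 1) = _
    rw [hbase, hshift, Nat.choose_succ_succ' (m + 3) 2, Nat.choose_succ_succ' (m + 2) 1,
      Nat.choose_one_right]
    ring

lemma sum_Idx_snd (k : ℕ) : ∑ γ : Idx k, (γ.1.2 : ℕ) = (k + 2).choose 3 := by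
  cases k with
  | zero =>
    have : IsEmpty (Idx 0) := ⟨fun γ => by have := γ.2; omega⟩
    exact Fintype.sum_empty _
  | succ m =>
    rw [← (idxEquiv m).symm.sum_comp, Fintype.sum_sum_type]
    change ∑ i : Fin (m + 1), 0 + ∑ p : triangle m, (p.1.2 + 1) = _
    rw [Finset.sum_const_zero, zero_add, sum_triangle_snd_add_one]

lemma volume_smallBox (k : ℕ) {D : ℝ} (hD : 0 < D) :
    volume (smallBox k D) =
      ENNReal.ofReal (boxScale k ^ Fintype.card (Idx k) * D ^ (k + 2).choose 3) := by
  have hc := boxScale_pos k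
  have hside (γ : Idx k) : volume (Icc (boxScale k * D ^ (γ.1.2 : ℕ))
      (2 * (boxScale k * D ^ (γ.1.2 : ℕ)))) = ENNReal.ofReal (boxScale k * D ^ (γ.1.2 : ℕ)) := by
    rw [Real.volume_Icc]
    congr 1
    ring
  rw [smallBox, volume_pi_pi, Finset.prod_congr rfl fun γ _ => hside γ,
    ← ENNReal.ofReal_prod_of_nonneg fun γ _ => by positivity, Finset.prod_mul_distrib,
    Finset.prod_const, Finset.card_univ, Finset.prod_pow_eq_pow_sum, sum_Idx_snd]

section SmallBox

variable {k : ℕ} {D : ℝ} (hD : 0 < D) {z : Idx k → ℝ} (hz : z ∈ smallBox k D)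

include hD hz

lemma abs_le_of_mem_smallBox (γ : Idx k) : |z γ| ≤ 2 * (boxScale k * D ^ (γ.1.2 : ℕ)) := by
  have hc := boxScale_pos k
  have hzγ := hz γ (mem_univ _)
  rw [abs_of_pos (lt_of_lt_of_le (by positivity) hzγ.1)]
  exact hzγ.2

lemma abs_shearedPhase_le {θ b : ℝ} {q : ℝ × ℝ} (hq : q.1 ∈ Icc (0 : ℝ) 1)
    (hstrip : |D * (q.2 - (θ * q.1 + b))| ≤ 1) : |shearedPhase θ b z q| ≤ 1 / 6 := by
  have hc := boxScale_pos k
  set w := q.2 - (θ * q.1 + b)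
  have hterm (γ : Idx k) : |z γ * q.1 ^ (γ.1.1 : ℕ) * w ^ (γ.1.2 : ℕ)| ≤ 2 * boxScale k := by
    have hs : q.1 ^ (γ.1.1 : ℕ) ≤ 1 := pow_le_one₀ hq.1 hq.2
    have hs0 : 0 ≤ q.1 ^ (γ.1.1 : ℕ) := pow_nonneg hq.1 _
    rw [abs_mul, abs_mul, abs_of_nonneg hs0, abs_pow]
    calc |z γ| * q.1 ^ (γ.1.1 : ℕ) * |w| ^ (γ.1.2 : ℕ)
        ≤ 2 * (boxScale k * D ^ (γ.1.2 : ℕ)) * 1 * |w| ^ (γ.1.2 : ℕ) := by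
          gcongr
          exact abs_le_of_mem_smallBox hD hz γ
      _ = 2 * boxScale k * |D * w| ^ (γ.1.2 : ℕ) := by
          rw [abs_mul, abs_of_pos hD, mul_pow]
          ring
      _ ≤ 2 * boxScale k :=
          mul_le_of_le_one_right (by positivity) (pow_le_one₀ (abs_nonneg _) hstrip)
  calc |shearedPhase θ b z q| ≤ ∑ γ : Idx k, |z γ * q.1 ^ (γ.1.1 : ℕ) * w ^ (γ.1.2 : ℕ)| :=
        Finset.abs_sum_le_sum_abs _ _
    _ ≤ ∑ _γ : Idx k, 2 * boxScale k := Finset.sum_le_sum fun γ _ => hterm γ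
    _ = 2 * Fintype.card (Idx k) / (12 * (Fintype.card (Idx k) + 1)) := by
        rw [Finset.sum_const, Finset.card_univ, nsmul_eq_mul, boxScale]
        ring
    _ ≤ 1 / 6 := by
        rw [div_le_div_iff₀ (by positivity) (by norm_num)]
        linarith

lemma add_linearShift_mem_bigBox (hk : 2 ≤ k) {u : ℝ × ℝ} (hu : |u.1 + u.2 - 1| ≤ 1) :
    z + linearShift hk D u ∈ bigBox k D := by
  intro γ _
  have hpow : 0 < D ^ (γ.1.2 : ℕ) := pow_pos hD _
  have hzγ := hz γ (mem_univ _)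
  have hz_le : |z γ| ≤ 2 * D ^ (γ.1.2 : ℕ) := by
    refine (abs_le_of_mem_smallBox hD hz γ).trans ?_
    gcongr
    exact mul_le_of_le_one_left hpow.le (boxScale_le_one k)
  rw [Pi.add_apply, linearShift]
  rcases eq_or_ne γ (Idx.mk 0 1 (by omega)) with rfl | hγ
  · have hshift : |8 * D * (u.1 + u.2 - 1)| ≤ 8 * D := by
      rw [abs_mul, abs_of_pos (by positivity)]
      exact mul_le_of_le_one_right (by positivity) hu
    rw [Pi.single_eq_same]
    simp only [Idx.mk, pow_one] at hz_le ⊢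
    rw [if_neg (by omega)]
    exact abs_le.1 ((abs_add_le _ _).trans (by linarith))
  · rw [Pi.single_eq_of_ne hγ, add_zero]
    have hz_abs := abs_le.1 hz_le
    refine ⟨?_, by linarith⟩
    split_ifs
    · exact hzγ.1
    · linarith

end SmallBox

lemma rpow_enorm_integral_le_lintegral_rpow {α : Type*} [MeasurableSpace α] {μ : Measure α}
    [IsProbabilityMeasure μ] {F : α → ℂ} (hF : AEStronglyMeasurable F μ) {p : ℝ} (hp : 1 ≤ p) :
    ‖∫ u, F u ∂μ‖ₑ ^ p ≤ ∫⁻ u, ‖F u‖ₑ ^ p ∂μ := by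
  have hp0 : 0 < p := by linarith
  have hjensen := eLpNorm'_le_eLpNorm'_of_exponent_le one_pos hp μ hF
  simp only [eLpNorm', ENNReal.rpow_one, div_one] at hjensen
  exact (ENNReal.le_rpow_inv_iff hp0).1
    (((enorm_integral_le_lintegral_enorm F).trans hjensen).trans_eq (by rw [one_div]))

lemma lintegral_lintegral_add_eq {α ι : Type*} [MeasurableSpace α] {μ : Measure α}
    [IsProbabilityMeasure μ] [Fintype ι] {G : (ι → ℝ) → ℝ≥0∞} (hG : Measurable G)
    {T : α → ι → ℝ} (hT : Measurable T) : ∫⁻ z, ∫⁻ u, G (z + T u) ∂μ = ∫⁻ z, G z := by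
  have hmeas : Measurable fun w : (ι → ℝ) × α => G (w.1 + T w.2) :=
    hG.comp (measurable_fst.add (hT.comp measurable_snd))
  rw [lintegral_lintegral_swap hmeas.aemeasurable]
  simp only [lintegral_add_right_eq_self, lintegral_const, measure_univ, mul_one]

section SingleBox

variable {k : ℕ} (hk : 2 ≤ k) {D θ b p : ℝ} (hD : 1 ≤ D)
  (hθb : ∀ s ∈ Icc (0 : ℝ) 1, θ * s + b ∈ Icc (1 / 4 : ℝ) (3 / 4)) (hp : 1 ≤ p)

include hk hD hθb hp

lemma rpow_le_lintegral_enorm_shearedIntegral_rpow {z : Idx k → ℝ} (hz : z ∈ smallBox k D) :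
    ENNReal.ofReal (D⁻¹ / 250) ^ p ≤
      ∫⁻ u, ‖shearedIntegral θ b (z + linearShift hk D u)‖ₑ ^ p ∂unitSquare := by
  have hmeas : Measurable fun u => shearedIntegral θ b (z + linearShift hk D u) :=
    (measurable_shearedIntegral θ b).comp (measurable_const.add (measurable_linearShift hk D))
  have haverage := inv_div_le_norm_integral_fourierChar_mul_fejerKernel
    (continuous_shearedPhase θ b z).measurable (by fun_prop) hθb hD
    fun q hq hstrip => abs_shearedPhase_le (by linarith) hz hq hstrip
  rw [← integral_shearedIntegral_add_linearShift hk] at haverage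
  refine le_trans ?_ (rpow_enorm_integral_le_lintegral_rpow hmeas.aestronglyMeasurable hp)
  rw [← ofReal_norm]
  gcongr

lemma rpow_mul_volume_smallBox_le_setLIntegral :
    ENNReal.ofReal (D⁻¹ / 250) ^ p * volume (smallBox k D) ≤
      ∫⁻ z in bigBox k D, ‖shearedIntegral θ b z‖ₑ ^ p := by
  set G : (Idx k → ℝ) → ℝ≥0∞ := (bigBox k D).indicator fun z => ‖shearedIntegral θ b z‖ₑ ^ p
  have hG : Measurable G :=
    ((measurable_shearedIntegral θ b).enorm.pow_const p).indicator (measurableSet_bigBox k D)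
  have hpoint : ∀ z ∈ smallBox k D, ENNReal.ofReal (D⁻¹ / 250) ^ p ≤
      ∫⁻ u, G (z + linearShift hk D u) ∂unitSquare := by
    intro z hz
    refine (rpow_le_lintegral_enorm_shearedIntegral_rpow hk hD hθb hp hz).trans
      (lintegral_mono_ae ?_)
    filter_upwards [ae_unitSquare] with u hu
    have hu_abs : |u.1 + u.2 - 1| ≤ 1 :=
      abs_le.2 ⟨by linarith [hu.1.1, hu.2.1], by linarith [hu.1.2, hu.2.2]⟩
    have hmem := add_linearShift_mem_bigBox (by linarith) hz hk hu_abs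
    exact (indicator_of_mem hmem fun z => ‖shearedIntegral θ b z‖ₑ ^ p).ge
  calc ENNReal.ofReal (D⁻¹ / 250) ^ p * volume (smallBox k D)
      = ∫⁻ _ in smallBox k D, ENNReal.ofReal (D⁻¹ / 250) ^ p := (setLIntegral_const _ _).symm
    _ ≤ ∫⁻ z in smallBox k D, ∫⁻ u, G (z + linearShift hk D u) ∂unitSquare :=
        setLIntegral_mono' (measurableSet_smallBox k D) hpoint
    _ ≤ ∫⁻ z, ∫⁻ u, G (z + linearShift hk D u) ∂unitSquare := setLIntegral_le_lintegral _ _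
    _ = ∫⁻ z, G z := lintegral_lintegral_add_eq hG (measurable_linearShift hk D)
    _ = _ := lintegral_indicator (measurableSet_bigBox k D) _

end SingleBox

/-- The coefficients `x` that the shear about `y = θ * s + b` moves into `bigBox k D`. -/
def shearedBox (k : ℕ) (D θ b : ℝ) : Set (Idx k → ℝ) :=
  (shearMatrix k θ b).mulVec ⁻¹' bigBox k D

lemma measurableSet_shearedBox (k : ℕ) (D θ b : ℝ) : MeasurableSet (shearedBox k D θ b) :=
  (LinearMap.continuous_of_finiteDimensional (Matrix.toLin' (shearMatrix k θ b))).measurable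
    (measurableSet_bigBox k D)

lemma setLIntegral_shearedBox_Eone (k : ℕ) (D θ b p : ℝ) :
    ∫⁻ x in shearedBox k D θ b, ‖Eone k x‖ₑ ^ p =
      ∫⁻ z in bigBox k D, ‖shearedIntegral θ b z‖ₑ ^ p := by
  have henorm (x : Idx k → ℝ) :
      ‖Eone k x‖ₑ = ‖shearedIntegral θ b ((shearMatrix k θ b).mulVec x)‖ₑ := by
    rw [← ofReal_norm, ← ofReal_norm, norm_Eone_eq_norm_shearedIntegral]
  have hcomp := lintegral_comp_mulVec (M := shearMatrix k θ b) (det_shearMatrix k θ b ▸ one_ne_zero)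
    (((measurable_shearedIntegral θ b).enorm.pow_const p).indicator (measurableSet_bigBox k D))
  rw [det_shearMatrix, enorm_one, inv_one, one_mul,
    lintegral_indicator (measurableSet_bigBox k D)] at hcomp
  simp only [henorm]
  rw [← hcomp, ← lintegral_indicator (measurableSet_shearedBox k D θ b)]
  rfl

section Disjointness

variable {k : ℕ} (hk : 2 ≤ k) {D : ℝ} (hD : 0 < D)

include hD

lemma abs_sub_mul_le_of_abs_add_mul_le {κ t c a a' B : ℝ} (hκ : 2 ≤ κ) (hDt : D ≤ t)
    (h : |c + κ * a * t| ≤ B) (h' : |c + κ * a' * t| ≤ B) : |a - a'| * D ≤ B := by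
  have hdiff : κ * |a - a'| * t ≤ B + B := by
    calc κ * |a - a'| * t = |(c + κ * a * t) - (c + κ * a' * t)| := by
          rw [show c + κ * a * t - (c + κ * a' * t) = κ * (a - a') * t by ring, abs_mul, abs_mul,
            abs_of_pos (show 0 < κ by linarith), abs_of_pos (show 0 < t by linarith)]
      _ ≤ B + B := (abs_sub _ _).trans (add_le_add h h')
  have hmono : 2 * |a - a'| * D ≤ κ * |a - a'| * t := by gcongr
  linarith

include hk

open Polynomial in
lemma abs_coeff_sub_mul_le_of_mem_shearedBox {θ b θ' b' : ℝ} {x : Idx k → ℝ}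
    (h : x ∈ shearedBox k D θ b) (h' : x ∈ shearedBox k D θ' b') {i : ℕ} (hi : i ≤ 1) :
    |(C θ * X + C b).coeff i - (C θ' * X + C b').coeff i| * (boxScale k * D) ≤ 10 := by
  have hc := boxScale_pos k
  have hpow : D ^ k = D ^ (k - 1) * D := (pow_sub_one_mul (by omega) D).symm
  have htop : boxScale k * D ^ k ≤ x (Idx.mk 0 k (by omega)) := by
    rw [← shearMatrix_mulVec_top hk θ b x]
    exact le_of_mem_bigBox (γ := Idx.mk 0 k (by omega)) h rfl
  have hsub {θ b : ℝ} (h : x ∈ shearedBox k D θ b) : |x (Idx.mk i (k - 1) (by omega)) +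
      k * (C θ * X + C b).coeff i * x (Idx.mk 0 k (by omega))| ≤ 10 * D ^ (k - 1) := by
    rw [← shearMatrix_mulVec_subtop hk θ b x hi]
    exact abs_le_of_mem_bigBox (γ := Idx.mk i (k - 1) (by omega)) h (by simp only [Idx.mk]; omega)
  have hbound := abs_sub_mul_le_of_abs_add_mul_le (by positivity) (by exact_mod_cast hk) htop
    (hsub h) (hsub h')
  rw [hpow] at hbound
  exact le_of_mul_le_mul_right (by linarith) (pow_pos hD (k - 1))

lemma abs_sub_mul_le_of_mem_shearedBox {θ b θ' b' : ℝ} {x : Idx k → ℝ}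
    (h : x ∈ shearedBox k D θ b) (h' : x ∈ shearedBox k D θ' b') :
    |θ - θ'| * (boxScale k * D) ≤ 10 ∧ |b - b'| * (boxScale k * D) ≤ 10 := by
  have hθ := abs_coeff_sub_mul_le_of_mem_shearedBox hk hD h h' le_rfl
  have hb := abs_coeff_sub_mul_le_of_mem_shearedBox hk hD h h' zero_le_one
  simp only [Polynomial.coeff_add, Polynomial.coeff_C_mul, Polynomial.coeff_X_one,
    Polynomial.coeff_X_zero, Polynomial.coeff_C_zero, Polynomial.coeff_C_of_ne_zero one_ne_zero,
    mul_one, mul_zero, add_zero, zero_add] at hθ hb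
  exact ⟨hθ, hb⟩

end Disjointness

lemma eq_of_abs_div_sub_div_mul_le {M m n : ℕ} (hM : 0 < M)
    (h : |(m : ℝ) / (4 * M) - n / (4 * M)| * (44 * M) ≤ 10) : m = n := by
  have hM0 : (0 : ℝ) < M := mod_cast hM
  by_contra hne
  have hgap : (1 : ℤ) ≤ |(m : ℤ) - n| := Int.one_le_abs (by omega)
  have hgap_real : (1 : ℝ) ≤ |(m : ℝ) - n| := mod_cast hgap
  rw [← sub_div, abs_div, abs_of_pos (by positivity : (0 : ℝ) < 4 * M), div_mul_eq_mul_div,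
    div_le_iff₀ (by positivity)] at h
  nlinarith

lemma natCast_div_four_mul_mem_Icc {M : ℕ} (i : Fin M) :
    (i : ℝ) / (4 * M) ∈ Icc (0 : ℝ) (1 / 4) := by
  have hi : (i : ℝ) < M := mod_cast i.2
  refine ⟨by positivity, ?_⟩
  rw [div_le_div_iff₀ (by linarith [Nat.cast_nonneg (α := ℝ) i]) (by norm_num)]
  linarith

section LowerBound

variable {k : ℕ} (hk : 2 ≤ k) {p : ℝ} (hp : 1 ≤ p)

include hk hp

lemma sq_mul_le_lintegral_enorm_Eone_rpow {M : ℕ} (hM : 0 < M) {D : ℝ}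
    (hD : boxScale k * D = 44 * M) (hD1 : 1 ≤ D) :
    (M : ℝ≥0∞) ^ 2 * (ENNReal.ofReal (D⁻¹ / 250) ^ p * volume (smallBox k D)) ≤
      ∫⁻ x : Idx k → ℝ, ‖Eone k x‖ₑ ^ p := by
  set Ω : Fin M × Fin M → Set (Idx k → ℝ) := fun l =>
    shearedBox k D (l.1 / (4 * M)) (l.2 / (4 * M) + 1 / 4)
  have hdisj : Pairwise (Function.onFun Disjoint Ω) := by
    refine fun l l' hne => Set.disjoint_left.2 fun x hx hx' => hne ?_
    have hclose := abs_sub_mul_le_of_mem_shearedBox hk (by linarith) hx hx'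
    rw [hD, add_sub_add_right_eq_sub] at hclose
    exact Prod.ext (Fin.ext (eq_of_abs_div_sub_div_mul_le hM hclose.1))
      (Fin.ext (eq_of_abs_div_sub_div_mul_le hM hclose.2))
  have hline (l : Fin M × Fin M) : ∀ s ∈ Icc (0 : ℝ) 1,
      (l.1 : ℝ) / (4 * M) * s + (l.2 / (4 * M) + 1 / 4) ∈ Icc (1 / 4 : ℝ) (3 / 4) := by
    intro s hs
    have hθ := natCast_div_four_mul_mem_Icc l.1
    have hb := natCast_div_four_mul_mem_Icc l.2
    have hθs := mul_nonneg hθ.1 hs.1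
    have hθs' := mul_le_of_le_one_right hθ.1 hs.2
    exact ⟨by linarith [hb.1], by linarith [hθ.2, hb.2]⟩
  calc (M : ℝ≥0∞) ^ 2 * (ENNReal.ofReal (D⁻¹ / 250) ^ p * volume (smallBox k D))
      = ∑ _l : Fin M × Fin M, ENNReal.ofReal (D⁻¹ / 250) ^ p * volume (smallBox k D) := by
        rw [Finset.sum_const, Finset.card_univ, Fintype.card_prod, Fintype.card_fin, nsmul_eq_mul,
          Nat.cast_mul, sq]
    _ ≤ ∑ l : Fin M × Fin M, ∫⁻ x in Ω l, ‖Eone k x‖ₑ ^ p := by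
        refine Finset.sum_le_sum fun l _ => ?_
        rw [setLIntegral_shearedBox_Eone]
        exact rpow_mul_volume_smallBox_le_setLIntegral hk hD1 (hline l) hp
    _ = ∫⁻ x in ⋃ l, Ω l, ‖Eone k x‖ₑ ^ p := by
        rw [lintegral_iUnion (fun l => measurableSet_shearedBox ..) hdisj, tsum_fintype]
    _ ≤ _ := setLIntegral_le_lintegral _ _

lemma exists_pos_ofReal_mul_rpow_le_lintegral_Eone : ∃ c > 0, ∀ M : ℕ, 0 < M →
    ENNReal.ofReal (c * (M : ℝ) ^ (critExponent k - p)) ≤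
      ∫⁻ x : Idx k → ℝ, ‖Eone k x‖ₑ ^ p := by
  have hc := boxScale_pos k
  set A : ℝ := 44 / boxScale k with hA
  have : 0 < A := by positivity
  refine ⟨(A⁻¹ / 250) ^ p * (boxScale k ^ Fintype.card (Idx k) * A ^ (k + 2).choose 3),
    by positivity, fun M hM => ?_⟩
  have hM0 : (0 : ℝ) < M := mod_cast hM
  have hM1 : (1 : ℝ) ≤ M := mod_cast hM
  have hA1 : 1 ≤ A := by
    rw [hA, le_div_iff₀ hc]
    linarith [boxScale_le_one k]
  have hpow : ((A * M)⁻¹ / 250) ^ p = (A⁻¹ / 250) ^ p * (M : ℝ) ^ (-p) := by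
    rw [Real.rpow_neg hM0.le, ← Real.inv_rpow hM0.le, ← Real.mul_rpow (by positivity)
      (by positivity), mul_inv, mul_div_right_comm]
  refine le_trans (le_of_eq ?_) (sq_mul_le_lintegral_enorm_Eone_rpow hk hp hM (D := A * M)
    (by rw [hA]; field_simp) (one_le_mul_of_one_le_of_one_le hA1 hM1))
  rw [volume_smallBox k (by positivity), ENNReal.ofReal_rpow_of_pos (by positivity),
    ← ENNReal.ofReal_natCast, ← ENNReal.ofReal_pow hM0.le, ← ENNReal.ofReal_mul (by positivity),
    ← ENNReal.ofReal_mul (by positivity), hpow, mul_pow, sub_eq_neg_add, Real.rpow_add hM0,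
    Real.rpow_natCast, critExponent, pow_add]
  congr 1
  ring

lemma lintegral_Eone_rpow_eq_top_of_one_le (hpk : p < critExponent k) :
    ∫⁻ x : Idx k → ℝ, ‖Eone k x‖ₑ ^ p = ⊤ := by
  obtain ⟨c, hc, hbound⟩ := exists_pos_ofReal_mul_rpow_le_lintegral_Eone hk hp
  have hlim : Filter.Tendsto (fun M : ℕ => ENNReal.ofReal (c * (M : ℝ) ^ (critExponent k - p)))
      Filter.atTop (𝓝 ⊤) :=
    ENNReal.tendsto_ofReal_atTop.comp (((tendsto_rpow_atTop (by linarith)).comp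
      tendsto_natCast_atTop_atTop).const_mul_atTop hc)
  exact top_le_iff.1 (le_of_tendsto hlim ((Filter.eventually_gt_atTop 0).mono hbound))

end LowerBound

lemma lintegral_Eone_rpow_eq_top {k : ℕ} (hk : 2 ≤ k) {p : ℝ} (hpk : p < critExponent k) :
    ∫⁻ x : Idx k → ℝ, ‖Eone k x‖ₑ ^ p = ⊤ := by
  have hcrit : (1 : ℝ) < critExponent k := by
    exact_mod_cast (show 1 < (k + 2).choose 3 + 2 by omega)
  rw [← top_le_iff, ← lintegral_Eone_rpow_eq_top_of_one_le hk (le_max_right p 1)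
    (max_lt hpk hcrit)]
  refine lintegral_mono fun x => ENNReal.rpow_le_rpow_of_exponent_ge ?_ (le_max_left p 1)
  rw [← ofReal_norm]
  exact ENNReal.ofReal_le_one.2 (norm_Eone_le_one x)

lemma lintegral_ofReal_norm_Eone_rpow (k : ℕ) {p : ℝ} (hp : 0 < p) :
    ∫⁻ x : Idx k → ℝ, ENNReal.ofReal (‖Eone k x‖ ^ p) = ∫⁻ x : Idx k → ℝ, ‖Eone k x‖ₑ ^ p :=
  lintegral_congr fun x => by
    rw [← ofReal_norm, ENNReal.ofReal_rpow_of_nonneg (norm_nonneg _) hp.le]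

/-- **Theorem 1.2** (sharp convergence exponent of Tarry's problem in dimension two):
for every `k ≥ 2`, `inf{p ∈ (0,∞) : ∫_{ℝ^N} |E_k1(x)|^p dx < ∞} = k(k+1)(k+2)/6 + 2`. -/
theorem tarry_convergence_exponent_dim_two (k : ℕ) (hk : 2 ≤ k) :
    sInf {p : ℝ | 0 < p ∧
        (∫⁻ x : Idx k → ℝ, ENNReal.ofReal (‖Eone k x‖ ^ p)) < ⊤} =
      (k : ℝ) * (k + 1) * (k + 2) / 6 + 2 := by
  rw [← cast_critExponent]
  have hfinite (p : ℝ) (hp : critExponent k < p) :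
      0 < p ∧ ∫⁻ x : Idx k → ℝ, ENNReal.ofReal (‖Eone k x‖ ^ p) < ⊤ := by
    have hp0 : 0 < p := (Nat.cast_nonneg _).trans_lt hp
    obtain ⟨m, rfl⟩ := Nat.exists_eq_add_one_of_ne_zero (by omega : k ≠ 0)
    rw [lintegral_ofReal_norm_Eone_rpow _ hp0]
    exact ⟨hp0, lintegral_Eone_rpow_lt_top (by omega) hp⟩
  refine csInf_eq_of_forall_ge_of_forall_gt_exists_lt ⟨_, hfinite _ (lt_add_one _)⟩ ?_ ?_
  · rintro p ⟨hp0, hp⟩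
    by_contra! hlt
    rw [lintegral_ofReal_norm_Eone_rpow k hp0, lintegral_Eone_rpow_eq_top hk hlt] at hp
    exact lt_irrefl _ hp
  · intro w hw
    obtain ⟨p, hp, hpw⟩ := exists_between hw
    exact ⟨p, hfinite p hp, hpw⟩

end
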